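/- Suppose m,n > 5 and the constructed token swapping instance admits a swap sequence of length at most K realizing the target placement in which no pair of tokens swaps with each other more than once. Then (1) at every point in time during the sequence, apart from the free item token, each slot gadget contains exactly one item token; and (2) the exchange sequence χ is a subsequence of the input swap sequence s_1,…,s_n of the Star STS instance. -/

import Mathlib

namespace UnweightedTS

/-- Vertices of the constructed tree: the root, ordering-gadget vertices `ord d`
(distance `d+1` from the root), slot-gadget path vertices `slot i d` (distance `d+1`
from the root in slot gadget `i`), and nooks.  (Coordinates range over all of `ℕ`;
the graph below only has edges between the vertices of the construction, so the
remaining vertices are isolated and carry no tokens.) -/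
inductive Vtx (m : ℕ) where
  | root : Vtx m
  | ord : ℕ → Vtx m
  | slot : Fin m → ℕ → Vtx m
  | nook : Fin m → Vtx m
deriving DecidableEq

/-- Adjacency generator for the tree: `len i` = length of the path of slot gadget `i`,
`lenOrd` = length of the ordering path, `nd` = distance from the root of the path
vertex to which the nook of each slot gadget is attached. -/
def rel {m : ℕ} (len : Fin m → ℕ) (lenOrd nd : ℕ) : Vtx m → Vtx m → Prop
  | .root, .ord d => d = 0 ∧ 0 < lenOrd
  | .ord d, .ord d' => d' = d + 1 ∧ d' < lenOrd
  | .root, .slot i d => d = 0 ∧ 0 < len i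
  | .slot i d, .slot i' d' => i = i' ∧ d' = d + 1 ∧ d' < len i
  | .slot i d, .nook i' => i = i' ∧ d + 1 = nd ∧ d < len i
  | _, _ => False

/-- The constructed tree, as a simple graph. -/
def Tree {m : ℕ} (len : Fin m → ℕ) (lenOrd nd : ℕ) : SimpleGraph (Vtx m) :=
  SimpleGraph.fromRel (rel len lenOrd nd)

/-- Swap the two values `e.1`, `e.2`. -/
def swapV {V : Type*} [DecidableEq V] (e : V × V) (v : V) : V :=
  if v = e.1 then e.2 else if v = e.2 then e.1 else v

/-- Apply a sequence of swaps to a token placement (token ↦ vertex). -/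
def applySwaps {T V : Type*} [DecidableEq V] (σ : List (V × V)) (f : T → V) : T → V :=
  σ.foldl (fun g e => fun t => swapV e (g t)) f

/-- Apply a sequence of star swaps (each given by a leaf) to a placement on the star
with center `none` and leaves `some l`. -/
def starApply {L : Type*} [DecidableEq L] (σ : List L) (f : Option L → Option L) :
    Option L → Option L :=
  σ.foldl (fun g l => fun t => swapV ((none : Option L), some l) (g t)) f

/-- The Star STS instance is a YES instance. -/
def StarSTSYes {L : Type*} [DecidableEq L] (π : Equiv.Perm (Option L)) (σ : List L) : Prop :=
  ∃ σ' : List L, σ'.Sublist σ ∧ starApply σ' id = ⇑π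

/-- `k = (mn)^25`, the length of a big segment. -/
def kk (m n : ℕ) : ℕ := (m * n) ^ 25

/-- `k' = k / n^8`, the length of a padding segment. -/
def kk' (m n : ℕ) : ℕ := kk m n / n ^ 8

variable {m n : ℕ}

/-- `nᵢ`: the number of occurrences of slot `i` in the swap sequence. -/
def cnt (s : Fin n → Fin m) (i : Fin m) : ℕ :=
  (Finset.univ.filter fun j : Fin n => s j = i).card

/-- Length of the ordering path: `nk + nmk'`. -/
def lenOrd (m n : ℕ) : ℕ := n * kk m n + n * m * kk' m n

/-- Length of the path of slot gadget `i`: `nᵢ k + n k'`. -/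
def lenSlot (s : Fin n → Fin m) (i : Fin m) : ℕ := cnt s i * kk m n + n * kk' m n

/-- The non-item tokens: big segments `xⱼ`, `yⱼ` of `k` tokens each, and padding
segments `p_{i,j}`, `q_{i,j}` of `k'` tokens each (in this order of the sum). -/
abbrev NonItem (m n : ℕ) :=
  (Fin n × Fin (kk m n)) ⊕ (Fin n × Fin (kk m n)) ⊕
    (Fin m × Fin n × Fin (kk' m n)) ⊕ (Fin m × Fin n × Fin (kk' m n))

/-- All tokens: item tokens (`Option (Fin m)`, `none` = item 0) and the non-item
tokens. -/
abbrev Tok (m n : ℕ) := Option (Fin m) ⊕ NonItem m n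

/-- The constructed tree: ordering path of length `nk + nmk'`, slot path `i` of
length `nᵢk + nk'`, nooks attached at distance `k` from the root. -/
def TheGraph (s : Fin n → Fin m) : SimpleGraph (Vtx m) :=
  Tree (lenSlot s) (lenOrd m n) (kk m n)

/-- The distance from the root, in slot gadget `i`, at which the block of segment
`q_{i,j}` (preceded by `yⱼ` when `s j = i`) starts in the initial configuration. -/
def offQ (s : Fin n → Fin m) (i : Fin m) (j : Fin n) : ℕ :=
  ∑ j' ∈ Finset.univ.filter (fun j' : Fin n => j'.val < j.val),
    (kk' m n + if s j' = i then kk m n else 0)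

/-- The slot occurring next after position `j` in the swap sequence, if any. -/
def nxt (s : Fin n → Fin m) (j : Fin n) : Option (Fin m) :=
  if h : j.val + 1 < n then some (s ⟨j.val + 1, h⟩) else none

/-- The rank (`0`-based position) of the padding segment `q_{i,j}` among the `m`
padding segments following `yⱼ` in the target configuration of the ordering gadget:
`q_{s_{j+1},j}` first, `q_{s_j,j}` last, and the others in increasing order of `i`. -/
def rho (s : Fin n → Fin m) (i : Fin m) (j : Fin n) : ℕ :=
  if some i = nxt s j then 0
  else if i = s j then m - 1
  else (if (nxt s j).isSome then 1 else 0) +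
    (Finset.univ.filter fun i' : Fin m =>
      i'.val < i.val ∧ i' ≠ s j ∧ some i' ≠ nxt s j).card

/-- The distance from the root, in slot gadget `i`, at which the block of segment
`p_{i,j}` (followed by `xⱼ` when `s j = i`) starts in the target configuration. -/
def tOffP (s : Fin n → Fin m) (i : Fin m) (j : Fin n) : ℕ :=
  ∑ j' ∈ Finset.univ.filter (fun j' : Fin n => j.val < j'.val),
    (kk' m n + if s j' = i then kk m n else 0)

/-- The initial placement of the tokens.  Item `0` is at the root and item `i` at the
nook of slot gadget `i`.  The ordering gadget contains, from the root outward, the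
blocks `x₁, p_{·,1}, x₂, p_{·,2}, …, xₙ, p_{·,n}` (the `m` padding blocks after `xⱼ`
ordered by `rho`); slot gadget `i` contains, from the root outward, the blocks
`q_{i,1},…,q_{i,n}` with `yⱼ` inserted immediately on the root side of `q_{i,j}`
whenever `s j = i`.  Within a segment the coordinate `a` increases away from the root
in slot gadgets and away from the root in the ordering gadget. -/
def initTok (s : Fin n → Fin m) : Tok m n → Vtx m
  | Sum.inl none => .root
  | Sum.inl (some i) => .nook i
  | Sum.inr (Sum.inl (j, a)) => .ord (j.val * (kk m n + m * kk' m n) + a.val)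
  | Sum.inr (Sum.inr (Sum.inl (j, a))) => .slot (s j) (offQ s (s j) j + a.val)
  | Sum.inr (Sum.inr (Sum.inr (Sum.inl (i, j, a)))) =>
      .ord (j.val * (kk m n + m * kk' m n) + kk m n + rho s i j * kk' m n + a.val)
  | Sum.inr (Sum.inr (Sum.inr (Sum.inr (i, j, a)))) =>
      .slot i (offQ s i j + (if s j = i then kk m n else 0) + a.val)

/-- The target placement of the tokens.  Item `o` goes to the position of item `π o`;
the ordering gadget contains, from its far end toward the root, the blocks
`y₁, q_{·,1}, y₂, q_{·,2}, …, yₙ, q_{·,n}` (the `m` padding blocks after `yⱼ` ordered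
by `rho`); slot gadget `i` contains, from the root outward, the blocks
`p_{i,n},…,p_{i,1}` with `xⱼ` inserted immediately after (away from the root)
`p_{i,j}` whenever `s j = i`.  The left-to-right order of the tokens within each
segment is the same as in the initial configuration. -/
def tgtTok (s : Fin n → Fin m) (π : Equiv.Perm (Option (Fin m))) : Tok m n → Vtx m
  | Sum.inl o => (match π o with | none => .root | some i => .nook i)
  | Sum.inr (Sum.inl (j, a)) =>
      .slot (s j) (tOffP s (s j) j + kk' m n + (kk m n - 1 - a.val))
  | Sum.inr (Sum.inr (Sum.inl (j, a))) =>
      .ord (lenOrd m n - 1 - (j.val * (kk m n + m * kk' m n) + a.val))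
  | Sum.inr (Sum.inr (Sum.inr (Sum.inl (i, j, a)))) =>
      .slot i (tOffP s i j + (kk' m n - 1 - a.val))
  | Sum.inr (Sum.inr (Sum.inr (Sum.inr (i, j, a)))) =>
      .ord (lenOrd m n - 1 -
        (j.val * (kk m n + m * kk' m n) + kk m n + rho s i j * kk' m n + a.val))

/-- `d_t`: the tree distance between token `t`'s initial and target vertices. -/
noncomputable def dd (s : Fin n → Fin m) (π : Equiv.Perm (Option (Fin m)))
    (t : Tok m n) : ℕ :=
  (TheGraph s).dist (initTok s t) (tgtTok s π t)

end UnweightedTS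

namespace UnweightedTS

variable {m n : ℕ}

/-- The placement after the first `τ` swaps of `σ` (time `τ`). -/
def placeAt (σ : List (Vtx m × Vtx m)) (f : Tok m n → Vtx m) (τ : ℕ) : Tok m n → Vtx m :=
  applySwaps (σ.take τ) f

/-- `isLeftMove u v` holds when a token moving across an edge from `u` to `v` makes a
*left* move: towards the root within a slot gadget (including out of a nook), or away
from the root within the ordering gadget. -/
def isLeftMove : Vtx m → Vtx m → Bool
  | .root, .ord _ => true
  | .ord _, .root => false
  | .ord d, .ord d' => decide (d < d')
  | .root, .slot _ _ => false
  | .slot _ _, .root => true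
  | .slot _ d, .slot _ d' => decide (d' < d)
  | .nook _, .slot _ _ => true
  | .slot _ _, .nook _ => false
  | _, _ => false

/-- A token of a `y` or `q` segment (initial vertex in a slot gadget). -/
def isSlotTok : Tok m n → Prop
  | Sum.inr (Sum.inr (Sum.inl _)) => True
  | Sum.inr (Sum.inr (Sum.inr (Sum.inr _))) => True
  | _ => False

/-- A token of an `x` or `p` segment (initial vertex in the ordering gadget). -/
def isNonSlotTok : Tok m n → Prop
  | Sum.inr (Sum.inl _) => True
  | Sum.inr (Sum.inr (Sum.inr (Sum.inl _))) => True
  | _ => False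

/-- `isContrary t u v` holds when a move of token `t` from `u` to `v` is a *contrary*
move: a right move of a slot token, a right move of an item token, or a left move of a
non-slot token. -/
def isContrary (t : Tok m n) (u v : Vtx m) : Bool :=
  match t with
  | Sum.inr (Sum.inl _) => isLeftMove u v
  | Sum.inr (Sum.inr (Sum.inr (Sum.inl _))) => isLeftMove u v
  | _ => !isLeftMove u v

/-- `c_t`: the number of contrary moves made by token `t` during the swap sequence
(starting from the placement `f`). -/
def cCount (t : Tok m n) : List (Vtx m × Vtx m) → (Tok m n → Vtx m) → ℕ
  | [], _ => 0
  | e :: rest, f =>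
      ((if f t = e.1 ∧ isContrary t e.1 e.2 = true then 1 else 0) +
        (if f t = e.2 ∧ isContrary t e.2 e.1 = true then 1 else 0)) +
        cCount t rest (fun t' => swapV e (f t'))

/-- Membership of a vertex in a gadget (`none` = the ordering gadget, `some i` = slot
gadget `i`, which includes its nook).  The root belongs to no gadget. -/
def memGadget : Vtx m → Option (Fin m) → Prop
  | .ord _, none => True
  | .slot i _, some i' => i = i'
  | .nook i, some i' => i = i'
  | _, _ => False

/-- The pair of tokens `t₁`, `t₂` is exchanged by the swap at step `idx` of `σ`. -/
def swapsPairAt (σ : List (Vtx m × Vtx m)) (f : Tok m n → Vtx m) (idx : ℕ)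
    (t₁ t₂ : Tok m n) : Prop :=
  ∃ h : idx < σ.length,
    (placeAt σ f idx t₁ = (σ.get ⟨idx, h⟩).1 ∧ placeAt σ f idx t₂ = (σ.get ⟨idx, h⟩).2) ∨
    (placeAt σ f idx t₁ = (σ.get ⟨idx, h⟩).2 ∧ placeAt σ f idx t₂ = (σ.get ⟨idx, h⟩).1)

/-- No pair of tokens swaps with each other more than once during `σ`. -/
def MinimalSeq (σ : List (Vtx m × Vtx m)) (f : Tok m n → Vtx m) : Prop :=
  ∀ (t₁ t₂ : Tok m n) (i₁ i₂ : ℕ), i₁ < i₂ →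
    swapsPairAt σ f i₁ t₁ t₂ → ¬ swapsPairAt σ f i₂ t₁ t₂

/-- The gadget containing a vertex, if any. -/
def gadgetOfV : Vtx m → Option (Fin m)
  | .slot i _ => some i
  | .nook i => some i
  | _ => none

/-- The free item token at time `τ`: the item token that was most recently at the
root (initially item `0`, i.e. `none`). -/
noncomputable def freeAt (σ : List (Vtx m × Vtx m)) (f : Tok m n → Vtx m) :
    ℕ → Option (Fin m)
  | 0 => none
  | τ + 1 =>
      if h : ∃ o : Option (Fin m), placeAt σ f (τ + 1) (Sum.inl o) = Vtx.root then
        h.choose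
      else freeAt σ f τ

/-- The exchange sequence `χ` built from the first `τ` steps: each time an item token
that was just in slot gadget `i` becomes the new free item token, `i` is appended. -/
noncomputable def chiList (σ : List (Vtx m × Vtx m)) (f : Tok m n → Vtx m) :
    ℕ → List (Fin m)
  | 0 => []
  | τ + 1 =>
      chiList σ f τ ++
        (if freeAt σ f (τ + 1) ≠ freeAt σ f τ then
          (match gadgetOfV (placeAt σ f τ (Sum.inl (freeAt σ f (τ + 1)))) with
            | some i => [i]
            | none => [])
        else [])

end UnweightedTS


namespace UnweightedTS

/-! ## Abstract token system -/

/-- Tokens of the abstract system: items, and the two kinds of ranked tokens. -/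
abbrev Tk (m N : ℕ) := Option (Fin m) ⊕ (Bool × Fin N)

/-- Signed height of a vertex. -/
def ht {m : ℕ} (k : ℕ) : Vtx m → ℤ
  | .root => 0
  | .ord d => -((d : ℤ) + 1)
  | .slot _ d => (d : ℤ) + 1
  | .nook _ => (k : ℤ) + 1

/-- Gadget of a vertex (`none` for the root). -/
def gd {m : ℕ} : Vtx m → Option (Option (Fin m))
  | .root => none
  | .ord _ => some none
  | .slot i _ => some (some i)
  | .nook i => some (some i)

/-- Right-going adjacency. -/
def adj1 {m : ℕ} (k : ℕ) : Vtx m → Vtx m → Prop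
  | .ord d, .root => d = 0
  | .ord d, .ord d' => d = d' + 1
  | .root, .slot _ d => d = 0
  | .slot i d, .slot i' d' => i = i' ∧ d' = d + 1
  | .slot i d, .nook i' => i = i' ∧ d + 1 = k
  | _, _ => False

/-- Adjacency. -/
def adj {m : ℕ} (k : ℕ) (u v : Vtx m) : Prop := adj1 k u v ∨ adj1 k v u

/-- Gadget of an edge. -/
def eg {m : ℕ} (u v : Vtx m) : Option (Option (Fin m)) :=
  if gd u = none then gd v else gd u

theorem adj_symm {m k : ℕ} {u v : Vtx m} (h : adj k u v) : adj k v u := Or.symm h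

theorem adj1_ht {m k : ℕ} {u v : Vtx m} (h : adj1 k u v) : ht k v = ht k u + 1 := by
  cases u <;> cases v <;> simp [adj1, ht] at h ⊢ <;> omega

theorem adj_ht {m k : ℕ} {u v : Vtx m} (h : adj k u v) :
    ht k v = ht k u + 1 ∨ ht k v = ht k u - 1 := by
  rcases h with h | h
  · left; exact adj1_ht h
  · right; have := adj1_ht h; omega

theorem ht_le_inj {m k : ℕ} {u v : Vtx m} (h : ht k u = ht k v) (h0 : ht k u ≤ 0) : u = v := by
  cases u <;> cases v <;> simp [ht] at h h0 ⊢ <;> omega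

theorem ht_zero {m k : ℕ} {u : Vtx m} : ht k u = 0 ↔ u = .root := by
  cases u <;> simp [ht] <;> omega

theorem gd_none {m : ℕ} {u : Vtx m} : gd u = none ↔ u = .root := by
  cases u <;> simp [gd]

theorem gd_ord {m k : ℕ} {u : Vtx m} : gd u = some none ↔ ht k u < 0 := by
  cases u <;> simp [gd, ht] <;> omega

theorem gd_slot_pos {m k : ℕ} {u : Vtx m} {i : Fin m} (h : gd u = some (some i)) :
    0 < ht k u := by
  cases u <;> simp [gd, ht] at h ⊢ <;> omega

/-- Vertices on the line of gadget `i`. -/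
def onsp {m : ℕ} (i : Fin m) (u : Vtx m) : Prop :=
  u = .root ∨ (∃ d, u = .ord d) ∨ ∃ d, u = .slot i d

theorem onsp_inj {m k : ℕ} {i : Fin m} {u v : Vtx m} (hu : onsp i u) (hv : onsp i v)
    (h : ht k u = ht k v) : u = v := by
  rcases hu with rfl | ⟨d, rfl⟩ | ⟨d, rfl⟩ <;> rcases hv with rfl | ⟨d', rfl⟩ | ⟨d', rfl⟩ <;>
    simp [ht] at h ⊢ <;> omega

/-- order tracking core -/
theorem ot_core {m k : ℕ} {u u' w w' : Vtx m} (h2 : u' ≠ w')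
    (h3 : u = u' ∨ w = w') (h4 : u = u' ∨ adj k u u') (h5 : w = w' ∨ adj k w w')
    (h7 : ht k u' ≤ 0) : ht k w < ht k u → ht k w' < ht k u' := by
  intro h
  have a1 : ht k u' ≠ ht k w' := fun hh => h2 (ht_le_inj hh h7)
  rcases h3 with rfl | rfl
  · rcases h5 with rfl | h5
    · exact h
    · have := adj_ht h5; omega
  · rcases h4 with rfl | h4
    · exact h
    · have := adj_ht h4; omega

/-- line order core -/
theorem line_core {m k : ℕ} {i : Fin m} {u u' w w' : Vtx m} (h2 : u' ≠ w')
    (h3 : u = u' ∨ w = w') (h4 : u = u' ∨ adj k u u') (h5 : w = w' ∨ adj k w w')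
    (h7 : onsp i u') (h9 : onsp i w') :
    ht k w < ht k u → ht k w' < ht k u' := by
  intro h
  have a1 : ht k u' ≠ ht k w' := fun hh => h2 (onsp_inj h7 h9 hh)
  rcases h3 with rfl | rfl
  · rcases h5 with rfl | h5
    · exact h
    · have := adj_ht h5; omega
  · rcases h4 with rfl | h4
    · exact h
    · have := adj_ht h4; omega

/-- `w` is in gadget `i`, further than `u`. -/
def rt {m : ℕ} (k : ℕ) (i : Fin m) (u w : Vtx m) : Prop :=
  gd w = some (some i) ∧ ht k u < ht k w

/-- Root or path of slot gadget `i`. -/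
def spr {m : ℕ} (i : Fin m) (u : Vtx m) : Prop := u = .root ∨ ∃ d, u = .slot i d

theorem gt_core {m k : ℕ} (hk : 0 < k) {i : Fin m} {u u' w w' : Vtx m}
    (h2 : u' ≠ w')
    (h3 : u = u' ∨ w = w') (h4 : u = u' ∨ adj k u u') (h5 : w = w' ∨ adj k w w')
    (h6 : spr i u) (h7 : spr i u') (h : rt k i u w) :
    rt k i u' w' ∨ (u = .slot i (k-1) ∧ u' = .slot i k ∧ w = .nook i ∧ w' = .nook i) := by
  obtain ⟨g1, g2⟩ := h
  rcases h3 with rfl | rfl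
  · left
    rcases h5 with rfl | h5
    · exact ⟨g1, g2⟩
    · rcases h6 with rfl | ⟨d, rfl⟩ <;> cases w <;> cases w' <;>
        simp [gd, rt, ht, adj, adj1] at * <;> grind
  · rcases h4 with rfl | h4
    · exact Or.inl ⟨g1, g2⟩
    · rcases h6 with rfl | ⟨d, rfl⟩ <;> rcases h7 with rfl | ⟨d', rfl⟩ <;> cases w <;>
        simp [gd, rt, ht, adj, adj1] at * <;> grind

/-! ### Systems -/

/-- `p` and `q` are exchanged between the placements `P` and `P'`. -/
def SW {m N : ℕ} (k : ℕ) (P P' : Tk m N → Vtx m) (p q : Tk m N) : Prop :=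
  p ≠ q ∧ adj k (P p) (P q) ∧ P' p = P q ∧ P' q = P p ∧ ∀ z, z ≠ p → z ≠ q → P' z = P z

theorem SW.symm {m N k : ℕ} {P P' : Tk m N → Vtx m} {p q : Tk m N} (h : SW k P P' p q) :
    SW k P P' q p := by
  obtain ⟨a, b, c, d, e⟩ := h
  exact ⟨a.symm, adj_symm b, d, c, fun z h1 h2 => e z h2 h1⟩

theorem SW.back {m N k : ℕ} {P P' : Tk m N → Vtx m} {p q : Tk m N} (h : SW k P P' p q) :
    SW k P' P p q := by
  obtain ⟨a, b, c, d, e⟩ := h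
  refine ⟨a, ?_, d.symm, c.symm, fun z h1 h2 => (e z h1 h2).symm⟩
  rw [c, d]; exact adj_symm b

/-- Time reversal on tokens. -/
def flip {m N : ℕ} : Tk m N → Tk m N
  | .inl o => .inl o
  | .inr (b, r) => .inr (!b, r.rev)

@[simp] theorem flip_flip {m N : ℕ} (z : Tk m N) : flip (flip z) = z := by
  rcases z with o | ⟨b, r⟩ <;> simp [flip]

@[simp] theorem flip_inr {m N : ℕ} (b : Bool) (r : Fin N) :
    flip (.inr (b, r) : Tk m N) = .inr (!b, r.rev) := rfl

@[simp] theorem flip_inl {m N : ℕ} (o : Option (Fin m)) :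
    flip (.inl o : Tk m N) = .inl o := rfl

theorem flip_inj {m N : ℕ} {z w : Tk m N} (h : flip z = flip w) : z = w := by
  rw [← flip_flip z, h, flip_flip]

theorem flip_eq_iff {m N : ℕ} {z w : Tk m N} : flip z = w ↔ z = flip w :=
  ⟨fun h => by rw [← h, flip_flip], fun h => by rw [h, flip_flip]⟩

/-- The equivalence given by `flip`. -/
def flipE {m N : ℕ} : Tk m N ≃ Tk m N := ⟨flip, flip, flip_flip, flip_flip⟩

/-- An abstract token swapping history. -/
structure Sys (m N : ℕ) where
  M : ℕ
  k : ℕ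
  hk : 0 < k
  sl : Fin N → Fin m
  pos : ℕ → Tk m N → Vtx m
  inj : ∀ τ ≤ M, Function.Injective (pos τ)
  step : ∀ τ < M, ∃ p q, SW k (pos τ) (pos (τ+1)) p q
  min : ∀ τ τ' p q, τ < M → τ' < M → SW k (pos τ) (pos (τ+1)) p q →
    SW k (pos τ') (pos (τ'+1)) p q → τ = τ'
  full : ∀ τ ≤ M, ∀ i : Fin m,
    N + (Finset.univ.filter fun r => sl r = i).card + 1 ≤
      (Finset.univ.filter fun z => gd (pos τ z) = some none ∨ gd (pos τ z) = some (some i)).card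
  item0 : ∀ o, pos 0 (.inl o) = .root ∨ ∃ i, pos 0 (.inl o) = .nook i
  itemM : ∀ o, pos M (.inl o) = .root ∨ ∃ i, pos M (.inl o) = .nook i
  S0 : ∀ r, ∃ d, pos 0 (.inr (true, r)) = .slot (sl r) d
  SM : ∀ r, pos M (.inr (true, r)) = .ord r.rev
  X0 : ∀ r, pos 0 (.inr (false, r)) = .ord r
  XM : ∀ r, ∃ d, pos M (.inr (false, r)) = .slot (sl r) d

namespace Sys
variable {m N : ℕ}

theorem card_flip (p q : Tk m N → Prop) [DecidablePred p] [DecidablePred q]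
    (h : ∀ z, p z ↔ q (flip z)) :
    (Finset.univ.filter p).card = (Finset.univ.filter q).card := by
  refine Finset.card_bij (fun z _ => flip z) ?_ ?_ ?_
  · intro z hz; simp at hz ⊢; exact (h z).1 hz
  · intro a _ b _ hab; exact flip_inj hab
  · intro b hb; simp at hb; exact ⟨flip b, by simp [h, hb], by simp⟩

theorem SW_flip {k : ℕ} {P P' : Tk m N → Vtx m} {p q : Tk m N} (h : SW k P P' p q) :
    SW k (fun z => P (flip z)) (fun z => P' (flip z)) (flip p) (flip q) := by
  obtain ⟨a, b, c, d, e⟩ := h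
  refine ⟨fun hh => a (flip_inj hh), by simpa using b, by simpa using c, by simpa using d, ?_⟩
  intro z h1 h2
  exact e _ (fun hh => h1 (by rw [← hh, flip_flip])) (fun hh => h2 (by rw [← hh, flip_flip]))

theorem SW_flip' {k : ℕ} {P P' : Tk m N → Vtx m} {p q : Tk m N}
    (h : SW k (fun z => P (flip z)) (fun z => P' (flip z)) p q) :
    SW k P P' (flip p) (flip q) := by
  have := SW_flip h
  simpa using this

/-- Time reversal. -/
def rev (S : Sys m N) : Sys m N where
  M := S.M
  k := S.k
  hk := S.hk
  sl := fun r => S.sl r.rev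
  pos := fun τ z => S.pos (S.M - τ) (flip z)
  inj := by
    intro τ hτ a b hab
    exact flip_inj (S.inj _ (by omega) hab)
  step := by
    intro τ hτ
    obtain ⟨p, q, h⟩ := S.step (S.M - (τ+1)) (by omega)
    have e : S.M - (τ+1) + 1 = S.M - τ := by omega
    rw [e] at h
    exact ⟨flip p, flip q, SW_flip h.back⟩
  min := by
    intro τ τ' p q h1 h2 h3 h4
    have e : S.M - τ = S.M - (τ+1) + 1 := by omega
    have e' : S.M - τ' = S.M - (τ'+1) + 1 := by omega
    have h3' := (SW_flip' h3).back
    have h4' := (SW_flip' h4).back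
    rw [e] at h3'; rw [e'] at h4'
    have := S.min _ _ _ _ (by omega) (by omega) h3' h4'
    omega
  full := by
    intro τ hτ i
    have := S.full (S.M - τ) (by omega) i
    rw [card_flip (fun z => gd (S.pos (S.M - τ) (flip z)) = some none ∨
      gd (S.pos (S.M - τ) (flip z)) = some (some i))
      (fun z => gd (S.pos (S.M - τ) z) = some none ∨
      gd (S.pos (S.M - τ) z) = some (some i)) (by intro z; rfl)]
    convert this using 3
    refine Finset.card_bij (fun z _ => z.rev) ?_ ?_ ?_
    · intro z hz; simpa using hz
    · intro a _ b _ hab; exact Fin.rev_injective hab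
    · intro b hb; exact ⟨b.rev, by simpa using hb, by simp⟩
  item0 := by intro o; simpa [flip] using S.itemM o
  itemM := by intro o; simpa [flip] using S.item0 o
  S0 := by intro r; simpa [flip] using S.XM r.rev
  SM := by intro r; simpa [flip] using S.X0 r.rev
  X0 := by intro r; simpa [flip] using S.SM r.rev
  XM := by intro r; simpa [flip] using S.S0 r.rev

variable (S : Sys m N)

/-- Height of a token at a time. -/
def H (τ : ℕ) (z : Tk m N) : ℤ := ht S.k (S.pos τ z)

/-- Gadget of a token at a time. -/
def G (τ : ℕ) (z : Tk m N) : Option (Option (Fin m)) := gd (S.pos τ z)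

/-- `p` and `q` swap at step `τ`. -/
def sw (τ : ℕ) (p q : Tk m N) : Prop := τ < S.M ∧ SW S.k (S.pos τ) (S.pos (τ+1)) p q

/-- `p` and `q` swap at some time. -/
def swd (p q : Tk m N) : Prop := ∃ τ, S.sw τ p q

/-- no contrary moves -/
def clean : Tk m N → Prop
  | .inl _ => False
  | .inr (true, r) => ∀ τ < S.M, S.H (τ+1) (.inr (true, r)) ≤ S.H τ (.inr (true, r))
  | .inr (false, r) => ∀ τ < S.M, S.H τ (.inr (false, r)) ≤ S.H (τ+1) (.inr (false, r))

/-- blanks relative to rank `r` -/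
def blank (r : Fin N) : Tk m N → Prop
  | .inl _ => True
  | .inr (true, r') => r < r' ∧ S.sl r' ≠ S.sl r
  | .inr (false, r') => r' < r ∧ S.sl r' ≠ S.sl r

def pres (τ : ℕ) (r : Fin N) (z : Tk m N) : Prop :=
  S.blank r z ∧ (S.G τ z = some none ∨ S.G τ z = some (some (S.sl r)))

@[simp] theorem rev_M : S.rev.M = S.M := rfl
@[simp] theorem rev_k : S.rev.k = S.k := rfl
@[simp] theorem rev_sl (r : Fin N) : S.rev.sl r = S.sl r.rev := rfl
@[simp] theorem rev_pos (τ : ℕ) (z : Tk m N) : S.rev.pos τ z = S.pos (S.M - τ) (flip z) := rfl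
@[simp] theorem rev_H (τ : ℕ) (z : Tk m N) : S.rev.H τ z = S.H (S.M - τ) (flip z) := rfl
@[simp] theorem rev_G (τ : ℕ) (z : Tk m N) : S.rev.G τ z = S.G (S.M - τ) (flip z) := rfl

variable {S}

theorem sw.symm {τ : ℕ} {p q : Tk m N} (h : S.sw τ p q) : S.sw τ q p := ⟨h.1, h.2.symm⟩

theorem sw.uniq {τ τ' : ℕ} {p q : Tk m N} (h : S.sw τ p q) (h' : S.sw τ' p q) : τ = τ' :=
  S.min _ _ _ _ h.1 h'.1 h.2 h'.2

theorem sw.rev {τ : ℕ} {p q : Tk m N} (h : S.sw τ p q) :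
    S.rev.sw (S.M - (τ+1)) (flip p) (flip q) := by
  obtain ⟨h1, h2⟩ := h
  refine ⟨by simp; omega, ?_⟩
  have e1 : S.M - (S.M - (τ+1)) = τ + 1 := by omega
  have e2 : S.M - (S.M - (τ+1) + 1) = τ := by omega
  have := SW_flip h2.back
  simp only [Sys.rev, e1, e2]
  exact this

theorem sw_of_rev {τ : ℕ} {p q : Tk m N} (h : S.rev.sw τ p q) :
    S.sw (S.M - (τ+1)) (flip p) (flip q) := by
  obtain ⟨h1, h2⟩ := h
  have h1' : τ < S.M := h1
  refine ⟨by omega, ?_⟩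
  have e1 : S.M - (τ+1) + 1 = S.M - τ := by omega
  rw [e1]
  exact (SW_flip' h2).back

theorem swd_rev {p q : Tk m N} : S.rev.swd p q ↔ S.swd (flip p) (flip q) := by
  constructor
  · rintro ⟨τ, h⟩; exact ⟨_, sw_of_rev h⟩
  · rintro ⟨τ, h⟩; exact ⟨_, by simpa using h.rev⟩

theorem swd.symm {p q : Tk m N} (h : S.swd p q) : S.swd q p := ⟨h.choose, h.choose_spec.symm⟩

theorem blank_rev {r : Fin N} {z : Tk m N} : S.rev.blank r z ↔ S.blank r.rev (flip z) := by
  rcases z with o | ⟨_ | _, r'⟩ <;> simp [blank, flip, Fin.rev_lt_rev]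

theorem pres_rev {τ : ℕ} {r : Fin N} {z : Tk m N} :
    S.rev.pres τ r z ↔ S.pres (S.M - τ) r.rev (flip z) := by
  simp [pres, blank_rev]

theorem clean_rev {z : Tk m N} : S.rev.clean z ↔ S.clean (flip z) := by
  rcases z with o | ⟨_ | _, r'⟩ <;> simp only [clean, flip, rev_H, rev_M, Bool.not_true, Bool.not_false]
  · constructor
    · intro h τ hτ
      have := h (S.M - (τ+1)) (by omega)
      have e1 : S.M - (S.M - (τ+1)) = τ + 1 := by omega
      have e2 : S.M - (S.M - (τ+1) + 1) = τ := by omega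
      rwa [e1, e2] at this
    · intro h τ hτ
      have := h (S.M - (τ+1)) (by omega)
      have e1 : (S.M - (τ+1)) + 1 = S.M - τ := by omega
      rwa [e1] at this
  · constructor
    · intro h τ hτ
      have := h (S.M - (τ+1)) (by omega)
      have e1 : S.M - (S.M - (τ+1)) = τ + 1 := by omega
      have e2 : S.M - (S.M - (τ+1) + 1) = τ := by omega
      rwa [e1, e2] at this
    · intro h τ hτ
      have := h (S.M - (τ+1)) (by omega)
      have e1 : (S.M - (τ+1)) + 1 = S.M - τ := by omega
      rwa [e1] at this

/-! ### one-step facts -/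

theorem pos_eq {τ : ℕ} (h : τ ≤ S.M) {p q : Tk m N} (e : S.pos τ p = S.pos τ q) : p = q :=
  S.inj τ h e

theorem sw.eq_of_sw {τ : ℕ} {p q q' : Tk m N} (h : S.sw τ p q) (h' : S.sw τ p q') : q = q' := by
  have a := h.2.2.2.1
  have b := h'.2.2.2.1
  exact pos_eq h.1.le (a.symm.trans b)

theorem sw.ht {τ : ℕ} {p q : Tk m N} (h : S.sw τ p q) :
    S.H (τ+1) p = S.H τ q ∧ S.H (τ+1) q = S.H τ p ∧
      (S.H τ q = S.H τ p + 1 ∨ S.H τ q = S.H τ p - 1) := by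
  refine ⟨?_, ?_, adj_ht h.2.2.1⟩
  · simp only [H]; rw [h.2.2.2.1]
  · simp only [H]; rw [h.2.2.2.2.1]

theorem move_sw {τ : ℕ} (hτ : τ < S.M) {z : Tk m N} (h : S.pos (τ+1) z ≠ S.pos τ z) :
    ∃ q, S.sw τ z q := by
  obtain ⟨p, q, hh⟩ := S.step τ hτ
  by_cases h1 : z = p
  · subst h1; exact ⟨q, hτ, hh⟩
  by_cases h2 : z = q
  · subst h2; exact ⟨p, hτ, hh.symm⟩
  exact absurd (hh.2.2.2.2 z h1 h2) h

theorem sw.adjp {τ : ℕ} {p q : Tk m N} (h : S.sw τ p q) : adj S.k (S.pos τ p) (S.pos (τ+1) p) := by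
  rw [h.2.2.2.1]; exact h.2.2.1

theorem sw.ne {τ : ℕ} {p q : Tk m N} (h : S.sw τ p q) : p ≠ q := h.2.1

theorem sw.moves {τ : ℕ} {p q : Tk m N} (h : S.sw τ p q) : S.pos (τ+1) p ≠ S.pos τ p := by
  rw [h.2.2.2.1]; intro e; exact h.ne (pos_eq h.1.le e).symm

theorem step_adj {τ : ℕ} (hτ : τ < S.M) (z : Tk m N) :
    S.pos τ z = S.pos (τ+1) z ∨ adj S.k (S.pos τ z) (S.pos (τ+1) z) := by
  by_cases h : S.pos (τ+1) z = S.pos τ z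
  · exact Or.inl h.symm
  · obtain ⟨q, hq⟩ := move_sw hτ h
    exact Or.inr hq.adjp

theorem step_H {τ : ℕ} (hτ : τ < S.M) (z : Tk m N) :
    S.H (τ+1) z = S.H τ z ∨ S.H (τ+1) z = S.H τ z + 1 ∨ S.H (τ+1) z = S.H τ z - 1 := by
  rcases step_adj hτ z with h | h
  · left; simp only [H, h]
  · right; exact adj_ht h

theorem step_one {τ : ℕ} (hτ : τ < S.M) {t z : Tk m N} (hne : t ≠ z) (h : ¬ S.sw τ t z) :
    S.pos τ t = S.pos (τ+1) t ∨ S.pos τ z = S.pos (τ+1) z := by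
  by_contra hc
  push Not at hc
  obtain ⟨q, hq⟩ := move_sw hτ (fun e => hc.1 e.symm)
  by_cases hz : z = q
  · subst hz; exact h hq
  · exact hc.2 (hq.2.2.2.2.2 z hne.symm hz).symm

theorem H_zero {τ : ℕ} {z : Tk m N} : S.H τ z = 0 ↔ S.pos τ z = .root := ht_zero
theorem G_none {τ : ℕ} {z : Tk m N} : S.G τ z = none ↔ S.pos τ z = .root := gd_none
theorem G_ord {τ : ℕ} {z : Tk m N} : S.G τ z = some none ↔ S.H τ z < 0 := gd_ord
theorem G_pos {τ : ℕ} {z : Tk m N} {i : Fin m} (h : S.G τ z = some (some i)) : 0 < S.H τ z :=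
  gd_slot_pos h

theorem OT {τ : ℕ} (hτ : τ < S.M) {t z : Tk m N} (hne : t ≠ z) (h : ¬ S.sw τ t z)
    (h1 : S.H τ t ≤ 0) (h2 : S.H (τ+1) t ≤ 0) :
    S.H τ z < S.H τ t ↔ S.H (τ+1) z < S.H (τ+1) t := by
  have n1 : S.pos τ t ≠ S.pos τ z := fun e => hne (pos_eq hτ.le e)
  have n2 : S.pos (τ+1) t ≠ S.pos (τ+1) z := fun e => hne (pos_eq hτ e)
  have a := step_one hτ hne h
  have b := step_adj hτ t
  have c := step_adj hτ z
  constructor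
  · exact ot_core n2 a b c h2
  · exact ot_core n1 (a.imp Eq.symm Eq.symm) (b.imp Eq.symm adj_symm) (c.imp Eq.symm adj_symm) h1

/-- relation `rt` for tokens -/
def RT (S : Sys m N) (i : Fin m) (τ : ℕ) (t z : Tk m N) : Prop :=
  rt S.k i (S.pos τ t) (S.pos τ z)

theorem GT {τ : ℕ} (hτ : τ < S.M) {i : Fin m} {t z : Tk m N} (hne : t ≠ z) (h : ¬ S.sw τ t z)
    (h1 : spr i (S.pos τ t)) (h2 : spr i (S.pos (τ+1) t)) (hr : S.RT i τ t z) :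
    S.RT i (τ+1) t z ∨ (S.pos τ t = .slot i (S.k-1) ∧ S.pos (τ+1) t = .slot i S.k ∧
      S.pos τ z = .nook i ∧ S.pos (τ+1) z = .nook i) :=
  gt_core S.hk (fun e => hne (pos_eq hτ e)) (step_one hτ hne h) (step_adj hτ t)
    (step_adj hτ z) h1 h2 hr

theorem GTb {τ : ℕ} (hτ : τ < S.M) {i : Fin m} {t z : Tk m N} (hne : t ≠ z) (h : ¬ S.sw τ t z)
    (h1 : spr i (S.pos τ t)) (h2 : spr i (S.pos (τ+1) t)) (hr : S.RT i (τ+1) t z) :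
    S.RT i τ t z ∨ (S.pos (τ+1) t = .slot i (S.k-1) ∧ S.pos τ t = .slot i S.k ∧
      S.pos (τ+1) z = .nook i ∧ S.pos τ z = .nook i) :=
  gt_core S.hk (fun e => hne (pos_eq hτ.le e)) ((step_one hτ hne h).imp Eq.symm Eq.symm)
    ((step_adj hτ t).imp Eq.symm adj_symm)
    ((step_adj hτ z).imp Eq.symm adj_symm) h2 h1 hr

end Sys
end UnweightedTS

namespace UnweightedTS
namespace Sys
variable {m N : ℕ} {S : Sys m N}

theorem onsp_down {k : ℕ} {i : Fin m} {u u' : Vtx m} (h : onsp i u)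
    (ha : u = u' ∨ adj k u u') (hh : ht k u' ≤ ht k u) : onsp i u' := by
  rcases ha with rfl | ha
  · exact h
  · rcases h with rfl | ⟨d, rfl⟩ | ⟨d, rfl⟩ <;> cases u' <;>
      simp [onsp, ht, adj, adj1] at * <;> grind

theorem mono_S {z : Fin N} (h : S.clean (.inr (true, z))) {τ τ' : ℕ} (h1 : τ ≤ τ') (h2 : τ' ≤ S.M) :
    S.H τ' (.inr (true, z)) ≤ S.H τ (.inr (true, z)) := by
  induction τ', h1 using Nat.le_induction with
  | base => exact le_rfl
  | succ n hn ih => exact (h n (by omega)).trans (ih (by omega))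

theorem mono_X {z : Fin N} (h : S.clean (.inr (false, z))) {τ τ' : ℕ} (h1 : τ ≤ τ') (h2 : τ' ≤ S.M) :
    S.H τ (.inr (false, z)) ≤ S.H τ' (.inr (false, z)) := by
  induction τ', h1 using Nat.le_induction with
  | base => exact le_rfl
  | succ n hn ih => exact (ih (by omega)).trans (h n (by omega))

theorem clean_onsp_S {r : Fin N} (h : S.clean (.inr (true, r))) {τ : ℕ} (h2 : τ ≤ S.M) :
    onsp (S.sl r) (S.pos τ (.inr (true, r))) := by
  induction τ with
  | zero => obtain ⟨d, hd⟩ := S.S0 r; rw [hd]; exact Or.inr (Or.inr ⟨d, rfl⟩)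
  | succ n ih =>
    exact onsp_down (ih (by omega)) (step_adj (by omega) _) (h n (by omega))

theorem clean_rev_S {r : Fin N} (h : S.clean (.inr (false, r))) :
    S.rev.clean (.inr (true, r.rev)) := by
  rw [clean_rev]; simpa using h

theorem clean_rev_X {r : Fin N} (h : S.clean (.inr (true, r))) :
    S.rev.clean (.inr (false, r.rev)) := by
  rw [clean_rev]; simpa using h

theorem clean_onsp {b : Bool} {r : Fin N} (h : S.clean (.inr (b, r))) {τ : ℕ} (h2 : τ ≤ S.M) :
    onsp (S.sl r) (S.pos τ (.inr (b, r))) := by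
  cases b
  · have := clean_onsp_S (clean_rev_S h) (τ := S.M - τ) (by simp)
    simpa [Nat.sub_sub_self h2] using this
  · exact clean_onsp_S h h2

theorem contig {v : Tk m N} (h : S.clean v) {τ1 τ τ2 : ℕ} (h1 : τ1 ≤ τ) (h2 : τ ≤ τ2)
    (h3 : τ2 ≤ S.M) (h4 : S.pos τ1 v = .root) (h5 : S.pos τ2 v = .root) : S.pos τ v = .root := by
  rw [← H_zero] at *
  rcases v with o | ⟨_ | _, r⟩
  · exact absurd h (by simp [clean])
  · have := mono_X h h1 (by omega)
    have := mono_X h h2 h3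
    omega
  · have := mono_S h h1 (by omega)
    have := mono_S h h2 h3
    omega

theorem ivt (f : ℕ → ℤ) (a b : ℕ) (hab : a ≤ b) (h : ∀ τ, a ≤ τ → τ < b → f (τ+1) ≤ f τ + 1)
    (ha : f a ≤ 0) (hb : 0 ≤ f b) : ∃ τ, a ≤ τ ∧ τ ≤ b ∧ f τ = 0 := by
  induction b, hab using Nat.le_induction with
  | base => exact ⟨a, le_rfl, le_rfl, by omega⟩
  | succ n hn ih =>
    by_cases h0 : 0 ≤ f n
    · obtain ⟨τ, h1, h2, h3⟩ := ih (fun τ h1 h2 => h τ h1 (by omega)) h0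
      exact ⟨τ, h1, by omega, h3⟩
    · have := h n hn (by omega)
      exact ⟨n+1, by omega, le_rfl, by omega⟩

theorem H0_X (r : Fin N) : S.H 0 (.inr (false, r)) = -((r : ℕ) + 1 : ℤ) := by
  simp [H, S.X0, ht]

theorem HM_S (r : Fin N) : S.H S.M (.inr (true, r)) = (r : ℕ) - (N : ℤ) := by
  simp [H, S.SM, ht, Fin.val_rev]; omega

theorem H0_S (r : Fin N) : 0 < S.H 0 (.inr (true, r)) := by
  obtain ⟨d, hd⟩ := S.S0 r; simp only [H, hd, ht]; omega

theorem HM_X (r : Fin N) : 0 < S.H S.M (.inr (false, r)) := by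
  obtain ⟨d, hd⟩ := S.XM r; simp only [H, hd, ht]; omega

theorem H0_item (o : Option (Fin m)) : 0 ≤ S.H 0 (.inl o) := by
  rcases S.item0 o with h | ⟨i, h⟩ <;> simp [H, h, ht] <;> omega

theorem HM_item (o : Option (Fin m)) : 0 ≤ S.H S.M (.inl o) := by
  rcases S.itemM o with h | ⟨i, h⟩ <;> simp [H, h, ht] <;> omega

theorem G0_S (r : Fin N) : S.G 0 (.inr (true, r)) = some (some (S.sl r)) := by
  obtain ⟨d, hd⟩ := S.S0 r; simp [G, hd, gd]

theorem GM_X (r : Fin N) : S.G S.M (.inr (false, r)) = some (some (S.sl r)) := by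
  obtain ⟨d, hd⟩ := S.XM r; simp [G, hd, gd]

theorem root_ex (b : Bool) (r : Fin N) : ∃ τ ≤ S.M, S.pos τ (.inr (b, r)) = .root := by
  cases b
  · obtain ⟨τ, _, h2, h3⟩ := ivt (fun τ => S.H τ (.inr (false, r))) 0 S.M (Nat.zero_le _)
      (fun τ _ h => by have := step_H h (.inr (false, r)); omega)
      (by rw [H0_X]; omega) (HM_X r).le
    exact ⟨τ, h2, H_zero.1 h3⟩
  · obtain ⟨τ, _, h2, h3⟩ := ivt (fun τ => -S.H τ (.inr (true, r))) 0 S.M (Nat.zero_le _)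
      (fun τ _ h => by have := step_H h (.inr (true, r)); omega)
      (by simpa using (H0_S r).le) (by rw [HM_S]; omega)
    exact ⟨τ, h2, H_zero.1 (by simpa using h3)⟩

theorem L4S {r r' : Fin N} (h : S.clean (.inr (true, r))) (hr : r' < r) {τ : ℕ} (hτ : τ ≤ S.M)
    (h0 : S.H τ (.inr (true, r)) ≤ 0) : S.H τ (.inr (true, r')) < S.H τ (.inr (true, r)) := by
  have key : ∀ d, ∀ τ, τ + d = S.M → S.H τ (.inr (true, r)) ≤ 0 →
      S.H τ (.inr (true, r')) < S.H τ (.inr (true, r)) := by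
    intro d
    induction d with
    | zero =>
      intro τ h1 _
      have : τ = S.M := by omega
      subst this
      rw [HM_S, HM_S]; have : (r' : ℕ) < r := hr; omega
    | succ d ih =>
      intro τ h1 h2
      have h3 := h τ (by omega)
      have h4 := ih (τ+1) (by omega) (by omega)
      by_cases hs : S.sw τ (.inr (true, r)) (.inr (true, r'))
      · have := hs.ht; omega
      · have hne : (Sum.inr (true, r) : Tk m N) ≠ .inr (true, r') := by
          intro e; simp at e; omega
        exact (OT (by omega) hne hs h2 (by omega)).2 h4
  exact key (S.M - τ) τ (by omega) h0

theorem L4X {r r' : Fin N} (h : S.clean (.inr (false, r))) (hr : r < r') {τ : ℕ} (hτ : τ ≤ S.M)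
    (h0 : S.H τ (.inr (false, r)) ≤ 0) : S.H τ (.inr (false, r')) < S.H τ (.inr (false, r)) := by
  have := L4S (S := S.rev) (r := r.rev) (r' := r'.rev) (clean_rev_S h) (Fin.rev_lt_rev.2 hr)
    (τ := S.M - τ) (by simp) (by simpa [Nat.sub_sub_self hτ] using h0)
  simpa [Nat.sub_sub_self hτ] using this

theorem blank_ne {b : Bool} {r : Fin N} {z : Tk m N} (h : S.blank r z) :
    (Sum.inr (b, r) : Tk m N) ≠ z := by
  rintro rfl
  cases b <;> simp [blank] at h

theorem L5S {r : Fin N} (h : S.clean (.inr (true, r))) {τ0 : ℕ} (hτ : τ0 ≤ S.M)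
    (h0 : S.pos τ0 (.inr (true, r)) = .root) {z : Tk m N} (hb : S.blank r z)
    (hz : S.G τ0 z = some none) : S.swd (.inr (true, r)) z := by
  by_contra hc
  have key : ∀ τ, τ0 ≤ τ → τ ≤ S.M → S.H τ z < S.H τ (.inr (true, r)) := by
    intro τ h1
    induction τ, h1 using Nat.le_induction with
    | base => intro _; rw [H_zero.2 h0]; exact G_ord.1 hz
    | succ n hn ih =>
      intro h2
      have h3 := ih (by omega)
      have m1 := mono_S h hn (by omega)
      have m2 := mono_S h (show τ0 ≤ n+1 by omega) (by omega)
      rw [H_zero.2 h0] at m1 m2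
      exact (OT (by omega) (blank_ne hb) (fun hs => hc ⟨n, hs⟩) m1 m2).1 h3
  have := key S.M hτ le_rfl
  rw [HM_S] at this
  rcases z with o | ⟨_ | _, r'⟩
  · have := HM_item (S := S) o; omega
  · have := HM_X (S := S) r'; omega
  · rw [HM_S] at this
    have : (r : ℕ) < r' := hb.1
    omega

theorem L5 {b : Bool} {r : Fin N} (h : S.clean (.inr (b, r))) {τ0 : ℕ} (hτ : τ0 ≤ S.M)
    (h0 : S.pos τ0 (.inr (b, r)) = .root) {z : Tk m N} (hb : S.blank r z)
    (hz : S.G τ0 z = some none) : S.swd (.inr (b, r)) z := by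
  cases b
  · have := L5S (S := S.rev) (r := r.rev) (clean_rev_S h) (τ0 := S.M - τ0) (by simp)
      (by simpa [Nat.sub_sub_self hτ] using h0) (z := flip z)
      (by simpa [blank_rev] using hb) (by simpa [Nat.sub_sub_self hτ] using hz)
    rw [swd_rev] at this
    simpa using this
  · exact L5S h hτ h0 hb hz

/-! ### Gadget tracking for clean `X` tokens -/

theorem spr_of_onsp {k : ℕ} {i : Fin m} {u : Vtx m} (h : onsp i u) (h0 : 0 ≤ ht k u) : spr i u := by
  rcases h with rfl | ⟨d, rfl⟩ | ⟨d, rfl⟩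
  · exact Or.inl rfl
  · simp [ht] at h0; omega
  · exact Or.inr ⟨d, rfl⟩

theorem spr_X {r : Fin N} (h : S.clean (.inr (false, r))) {τ0 τ : ℕ} (h0 : 0 ≤ S.H τ0 (.inr (false, r)))
    (h1 : τ0 ≤ τ) (h2 : τ ≤ S.M) : spr (S.sl r) (S.pos τ (.inr (false, r))) :=
  spr_of_onsp (clean_onsp h h2) (h0.trans (mono_X h h1 h2))

/-- crossing of the nook height by `u` at step `θ` while `z` sits in the nook -/
def Cr (S : Sys m N) (r : Fin N) (z : Tk m N) (θ : ℕ) : Prop :=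
  S.pos θ (.inr (false, r)) = .slot (S.sl r) (S.k-1) ∧
  S.pos (θ+1) (.inr (false, r)) = .slot (S.sl r) S.k ∧
  S.pos θ z = .nook (S.sl r) ∧ S.pos (θ+1) z = .nook (S.sl r)

theorem RTfwd {r : Fin N} (h : S.clean (.inr (false, r))) {τ0 τ1 : ℕ}
    (h0 : 0 ≤ S.H τ0 (.inr (false, r))) {z : Tk m N} (hne : (.inr (false, r)) ≠ z)
    (hr : S.RT (S.sl r) τ0 (.inr (false, r)) z) (h1 : τ0 ≤ τ1) (h2 : τ1 ≤ S.M)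
    (hns : ∀ τ, τ0 ≤ τ → τ < τ1 → ¬ S.sw τ (.inr (false, r)) z) :
    (∃ θ, τ0 ≤ θ ∧ θ < τ1 ∧ S.Cr r z θ ∧
      ∀ τ, τ0 ≤ τ → τ ≤ θ → S.RT (S.sl r) τ (.inr (false, r)) z) ∨
    ∀ τ, τ0 ≤ τ → τ ≤ τ1 → S.RT (S.sl r) τ (.inr (false, r)) z := by
  induction τ1, h1 using Nat.le_induction with
  | base => right; intro τ a b; have : τ = τ0 := by omega
            subst this; exact hr
  | succ n hn ih =>
    rcases ih (by omega) (fun τ a b => hns τ a (by omega)) with ⟨θ, a, b, c, d⟩ | hall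
    · exact Or.inl ⟨θ, a, by omega, c, d⟩
    · rcases GT (by omega) hne (hns n hn (by omega)) (spr_X h h0 hn (by omega))
        (spr_X h h0 (by omega) (by omega)) (hall n hn le_rfl) with g | g
      · right
        intro τ a b
        rcases Nat.lt_or_ge τ (n+1) with c | c
        · exact hall τ a (by omega)
        · have : τ = n+1 := by omega
          subst this; exact g
      · left
        exact ⟨n, hn, by omega, g, hall⟩

theorem RTbwd {r : Fin N} (h : S.clean (.inr (false, r))) {τ0 τ1 : ℕ}
    (h0 : 0 ≤ S.H τ0 (.inr (false, r))) {z : Tk m N} (hne : (.inr (false, r)) ≠ z)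
    (hr : S.RT (S.sl r) τ1 (.inr (false, r)) z) (h1 : τ0 ≤ τ1) (h2 : τ1 ≤ S.M)
    (hns : ∀ τ, τ0 ≤ τ → τ < τ1 → ¬ S.sw τ (.inr (false, r)) z) :
    S.RT (S.sl r) τ0 (.inr (false, r)) z := by
  induction τ1, h1 using Nat.le_induction with
  | base => exact hr
  | succ n hn ih =>
    refine ih ?_ (by omega) (fun τ a b => hns τ a (by omega))
    rcases GTb (by omega) hne (hns n hn (by omega)) (spr_X h h0 hn (by omega))
        (spr_X h h0 (by omega) (by omega)) hr with g | g
    · exact g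
    · exfalso
      have := h n (by omega)
      have hk := S.hk
      simp [H, g.1, g.2.1, ht] at this
      omega

theorem Cr_H {r : Fin N} {z : Tk m N} {θ : ℕ} (h : S.Cr r z θ) :
    S.H θ (.inr (false, r)) = S.k ∧ S.H (θ+1) (.inr (false, r)) = S.k + 1 := by
  have hk := S.hk
  simp [H, h.1, h.2.1, ht]; omega

theorem lineX {r r' : Fin N} (h : S.clean (.inr (false, r))) (h' : S.clean (.inr (false, r')))
    (hs : S.sl r = S.sl r') (hr : r < r') {τ : ℕ} (hτ : τ ≤ S.M) :
    S.H τ (.inr (false, r')) < S.H τ (.inr (false, r)) := by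
  induction τ with
  | zero => rw [H0_X, H0_X]; have : (r : ℕ) < r' := hr; omega
  | succ n ih =>
    have ih' := ih (by omega)
    have hne : (Sum.inr (false, r) : Tk m N) ≠ .inr (false, r') := by
      intro e; simp at e; omega
    by_cases hsw : S.sw n (.inr (false, r)) (.inr (false, r'))
    · have := hsw.ht
      have := h n (by omega)
      have := h' n (by omega)
      omega
    · exact line_core (fun e => hne (pos_eq hτ e)) (step_one (by omega) hne hsw)
        (step_adj (by omega) _) (step_adj (by omega) _) (clean_onsp h hτ)
        (by rw [hs]; exact clean_onsp h' hτ) ih'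

theorem RT_of_pres {r : Fin N} {τ : ℕ} {z : Tk m N}
    (h0 : S.pos τ (.inr (false, r)) = .root)
    (hg : S.G τ z = some (some (S.sl r))) : S.RT (S.sl r) τ (.inr (false, r)) z :=
  ⟨hg, by rw [h0]; exact G_pos hg⟩

/-- final behaviour of an unswapped neighbour -/
theorem unsw_X {r : Fin N} (h : S.clean (.inr (false, r))) {τ0 : ℕ} (hτ : τ0 ≤ S.M)
    (h0 : S.pos τ0 (.inr (false, r)) = .root) {z : Tk m N} (hp : S.pres τ0 r z)
    (hn : ¬ S.swd (.inr (false, r)) z) :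
    (∃ θ, τ0 ≤ θ ∧ θ < S.M ∧ S.Cr r z θ ∧
      ∀ τ, τ0 ≤ τ → τ ≤ θ → S.RT (S.sl r) τ (.inr (false, r)) z) ∨
    ∀ τ, τ0 ≤ τ → τ ≤ S.M → S.RT (S.sl r) τ (.inr (false, r)) z := by
  have hg : S.G τ0 z = some (some (S.sl r)) := by
    rcases hp.2 with g | g
    · exact absurd (L5 h hτ h0 hp.1 g) hn
    · exact g
  exact RTfwd h (H_zero.2 h0).ge (blank_ne hp.1) (RT_of_pres h0 hg) hτ le_rfl
    (fun τ _ _ hs => hn ⟨τ, hs⟩)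

theorem RTM_item {r : Fin N} {z : Tk m N} (hb : S.blank r z)
    (hr : S.RT (S.sl r) S.M (.inr (false, r)) z) :
    S.pos S.M z = .nook (S.sl r) ∧ S.H S.M (.inr (false, r)) < S.k + 1 ∧ ∃ o, z = .inl o := by
  obtain ⟨h1, h2⟩ := hr
  rcases z with o | ⟨_ | _, r'⟩
  · rcases S.itemM o with g | ⟨i, g⟩
    · simp [g, gd] at h1
    · rw [g] at h1 h2 ⊢
      simp [gd] at h1
      subst h1
      exact ⟨rfl, by simp only [H]; exact h2, o, rfl⟩
  · have := GM_X (S := S) r'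
    simp only [G] at this
    rw [this] at h1
    simp at h1
    exact absurd h1 hb.2
  · rw [S.SM] at h1; simp [gd] at h1

theorem exempt_X {r : Fin N} (h : S.clean (.inr (false, r))) {τ0 : ℕ} (hτ : τ0 ≤ S.M)
    (h0 : S.pos τ0 (.inr (false, r)) = .root) {z z' : Tk m N} (hp : S.pres τ0 r z)
    (hn : ¬ S.swd (.inr (false, r)) z) (hp' : S.pres τ0 r z')
    (hn' : ¬ S.swd (.inr (false, r)) z') : z = z' := by
  rcases unsw_X h hτ h0 hp hn with ⟨θ, a, b, c, _⟩ | a <;>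
  rcases unsw_X h hτ h0 hp' hn' with ⟨θ', a', b', c', _⟩ | a'
  · have e : θ = θ' := by
      have := Cr_H c
      have := Cr_H c'
      by_contra hne
      rcases Nat.lt_or_gt_of_ne hne with g | g
      · have := mono_X h (show θ + 1 ≤ θ' by omega) (by omega); omega
      · have := mono_X h (show θ' + 1 ≤ θ by omega) (by omega); omega
    subst e
    exact pos_eq b.le (c.2.2.1.trans c'.2.2.1.symm)
  · have := Cr_H c
    have := (RTM_item hp'.1 (a' S.M hτ le_rfl)).2.1
    have := mono_X h (show θ + 1 ≤ S.M by omega) le_rfl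
    omega
  · have := Cr_H c'
    have := (RTM_item hp.1 (a S.M hτ le_rfl)).2.1
    have := mono_X h (show θ' + 1 ≤ S.M by omega) le_rfl
    omega
  · exact pos_eq le_rfl ((RTM_item hp.1 (a S.M hτ le_rfl)).1.trans
      (RTM_item hp'.1 (a' S.M hτ le_rfl)).1.symm)

theorem exempt {b : Bool} {r : Fin N} (h : S.clean (.inr (b, r))) {τ0 : ℕ} (hτ : τ0 ≤ S.M)
    (h0 : S.pos τ0 (.inr (b, r)) = .root) {z z' : Tk m N} (hp : S.pres τ0 r z)
    (hn : ¬ S.swd (.inr (b, r)) z) (hp' : S.pres τ0 r z')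
    (hn' : ¬ S.swd (.inr (b, r)) z') : z = z' := by
  cases b
  · exact exempt_X h hτ h0 hp hn hp' hn'
  · have := exempt_X (S := S.rev) (r := r.rev) (clean_rev_X h) (τ0 := S.M - τ0) (by simp)
      (by simpa [Nat.sub_sub_self hτ] using h0) (z := flip z) (z' := flip z')
      (by rw [pres_rev]; simpa [Nat.sub_sub_self hτ] using hp)
      (by rw [swd_rev]; simpa using hn)
      (by rw [pres_rev]; simpa [Nat.sub_sub_self hτ] using hp')
      (by rw [swd_rev]; simpa using hn')
    exact flip_inj this

/-! ### Counting -/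

open Classical in
theorem card_nonblank (r : Fin N) :
    (Finset.univ.filter fun z => ¬ S.blank r z).card ≤
      N + (Finset.univ.filter fun r' => S.sl r' = S.sl r).card := by
  have e : (N : ℕ) = ∑ _r : Fin N, 1 := by simp
  rw [Finset.card_filter, Fintype.sum_sum_type, Fintype.sum_prod_type]
  conv_rhs => rw [Finset.card_filter]
  conv_rhs => enter [1]; rw [e]
  rw [← Finset.sum_add_distrib]
  simp only [blank, not_true, if_false, Finset.sum_const_zero, zero_add, Fintype.sum_bool]
  rw [← Finset.sum_add_distrib]
  refine Finset.sum_le_sum fun r' _ => ?_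
  by_cases h : S.sl r' = S.sl r
  · simp [h]
  · have : r' ≠ r := fun e => h (by rw [e])
    rcases lt_or_gt_of_ne this with g | g
    · simp [h, g, not_lt.2 g.le]
    · simp [h, g, not_lt.2 g.le]

open Classical in
theorem pres_count {b : Bool} {r : Fin N} {τ : ℕ} (hτ : τ ≤ S.M)
    (h0 : S.pos τ (.inr (b, r)) = .root) :
    2 ≤ (Finset.univ.filter fun z => S.pres τ r z).card ∧
    ((Finset.univ.filter fun z => S.pres τ r z).card ≤ 2 → ∀ z, ¬ S.blank r z →
      z ≠ .inr (b, r) → (S.G τ z = some none ∨ S.G τ z = some (some (S.sl r)))) := by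
  set A := Finset.univ.filter fun z => S.G τ z = some none ∨ S.G τ z = some (some (S.sl r)) with hA
  set Q := Finset.univ.filter fun z => ¬ S.blank r z with hQ
  set P := Finset.univ.filter fun z => S.pres τ r z with hP
  have h1 := S.full τ hτ (S.sl r)
  have h1' : N + (Finset.univ.filter fun r' => S.sl r' = S.sl r).card + 1 ≤ A.card := by
    convert h1 using 2
    ext z; rw [hA, Finset.mem_filter, Finset.mem_filter]; rfl
  have h2 := card_nonblank (S := S) r
  rw [← hQ] at h2
  have hv : (.inr (b, r) : Tk m N) ∈ Q := by
    simp only [hQ, Finset.mem_filter, Finset.mem_univ, true_and]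
    intro hb; exact blank_ne (b := b) hb rfl
  have hvA : (.inr (b, r) : Tk m N) ∉ A := by
    have : S.G τ (.inr (b, r)) = none := G_none.2 h0
    simp [hA, this]
  have hsub : A ⊆ P ∪ (Q.erase (.inr (b, r))) := by
    intro z hz
    by_cases hb : S.blank r z
    · apply Finset.mem_union_left
      simp only [hP, Finset.mem_filter, Finset.mem_univ, true_and]
      exact ⟨hb, by simpa [hA] using hz⟩
    · apply Finset.mem_union_right
      rw [Finset.mem_erase]
      exact ⟨fun e => hvA (e ▸ hz), by simpa [hQ] using hb⟩
  have hc := Finset.card_le_card hsub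
  have hu := Finset.card_union_le P (Q.erase (.inr (b, r)))
  have he := Finset.card_erase_of_mem hv
  have hQ1 : 1 ≤ Q.card := Finset.card_pos.2 ⟨_, hv⟩
  refine ⟨by omega, ?_⟩
  intro h3 z hz hne
  by_contra hnot
  have hzA : z ∉ A := by simpa [hA] using hnot
  have hzQ : z ∈ Q.erase (.inr (b, r)) := by
    rw [Finset.mem_erase]; exact ⟨hne, by simpa [hQ] using hz⟩
  have hsub2 : A ⊆ P ∪ ((Q.erase (.inr (b, r))).erase z) := by
    intro w hw
    rcases Finset.mem_union.1 (hsub hw) with g | g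
    · exact Finset.mem_union_left _ g
    · refine Finset.mem_union_right _ (Finset.mem_erase.2 ⟨fun e => hzA (e ▸ hw), g⟩)
  have hc := Finset.card_le_card hsub2
  have hu := Finset.card_union_le P ((Q.erase (.inr (b, r))).erase z)
  have he2 := Finset.card_erase_of_mem hzQ
  have : 1 ≤ (Q.erase (.inr (b, r))).card := Finset.card_pos.2 ⟨_, hzQ⟩
  omega

end Sys
end UnweightedTS

namespace UnweightedTS
namespace Sys
variable {m N : ℕ} {S : Sys m N}

/-- `τ` is a step at which `z` is moved by a clean token for which it is blank -/
def inc (S : Sys m N) (τ : ℕ) (z : Tk m N) : Prop :=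
  ∃ b r, S.clean (.inr (b, r)) ∧ S.blank r z ∧ S.sw τ (.inr (b, r)) z

/-- contrary move -/
def contra (S : Sys m N) (b : Bool) (r : Fin N) (τ : ℕ) : Prop :=
  if b then S.H τ (.inr (b, r)) < S.H (τ+1) (.inr (b, r))
  else S.H (τ+1) (.inr (b, r)) < S.H τ (.inr (b, r))

/-- `z` moves at step `τ` -/
def mv (S : Sys m N) (z : Tk m N) (τ : ℕ) : Prop := S.pos (τ+1) z ≠ S.pos τ z

/-- gadget of the edge used -/
def egt (S : Sys m N) (z : Tk m N) (τ : ℕ) : Option (Option (Fin m)) :=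
  eg (S.pos τ z) (S.pos (τ+1) z)

/-- extra moves -/
def xm (S : Sys m N) : Tk m N → ℕ → Prop
  | .inl o, τ => S.mv (.inl o) τ
  | .inr (b, r), τ => S.mv (.inr (b, r)) τ ∧
      ((∃ i, S.egt (.inr (b, r)) τ = some (some i) ∧ i ≠ S.sl r) ∨
       (S.egt (.inr (b, r)) τ = some none ∧ (S.contra b r τ ∨ S.inc τ (.inr (b, r)))))

open Classical in
/-- set of moves -/
noncomputable def mvs (S : Sys m N) (z : Tk m N) : Finset ℕ := (Finset.range S.M).filter (S.mv z)

open Classical in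
/-- set of extra moves -/
noncomputable def xms (S : Sys m N) (z : Tk m N) : Finset ℕ := (Finset.range S.M).filter (S.xm z)

/-- displacement -/
def D (S : Sys m N) (z : Tk m N) : ℤ := |S.H S.M z - S.H 0 z|

theorem tv (f : ℕ → ℤ) (P : ℕ → Prop) [DecidablePred P] {a b : ℕ} (hab : a ≤ b)
    (h : ∀ τ, a ≤ τ → τ < b → f (τ+1) - f τ ≤ if P τ then 1 else 0) :
    f b - f a ≤ ((Finset.Ico a b).filter P).card := by
  induction b, hab using Nat.le_induction with
  | base => simp
  | succ n hn ih =>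
    have h1 := ih (fun τ h1 h2 => h τ h1 (by omega))
    have h2 := h n hn (by omega)
    have e : ((Finset.Ico a (n+1)).filter P).card = ((Finset.Ico a n).filter P).card +
        if P n then 1 else 0 := by
      rw [Finset.card_filter, Finset.sum_Ico_succ_top hn, Finset.card_filter]
    rw [e]
    split_ifs at h2 ⊢ <;> push_cast <;> omega

theorem card_split (P : ℕ → Prop) [DecidablePred P] {a b c : ℕ} (hab : a ≤ b) (hbc : b ≤ c) :
    ((Finset.Ico a c).filter P).card = ((Finset.Ico a b).filter P).card +
      ((Finset.Ico b c).filter P).card := by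
  simp only [Finset.card_filter]
  exact (Finset.sum_Ico_consecutive _ hab hbc).symm

theorem card_rev (M : ℕ) (p q : ℕ → Prop) [DecidablePred p] [DecidablePred q]
    (h : ∀ τ < M, p τ ↔ q (M - (τ+1))) :
    ((Finset.range M).filter p).card = ((Finset.range M).filter q).card := by
  refine Finset.card_bij (fun τ _ => M - (τ+1)) ?_ ?_ ?_
  · intro τ hτ; simp at hτ ⊢; exact ⟨by omega, (h τ hτ.1).1 hτ.2⟩
  · intro a ha b hb hab; simp at ha hb; omega
  · intro b hb; simp at hb
    refine ⟨M - (b+1), ?_, by omega⟩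
    simp
    refine ⟨by omega, (h _ (by omega)).2 ?_⟩
    have : M - (M - (b+1) + 1) = b := by omega
    rw [this]; exact hb.2

theorem rev_times {τ : ℕ} (hτ : τ < S.M) : S.M - (S.M - (τ+1)) = τ + 1 ∧
    S.M - (S.M - (τ+1) + 1) = τ := by omega

theorem mv_rev {z : Tk m N} {τ : ℕ} (hτ : τ < S.M) : S.rev.mv z τ ↔ S.mv (flip z) (S.M - (τ+1)) := by
  have e : S.M - (τ+1) + 1 = S.M - τ := by omega
  simp only [mv, rev_pos, e]
  exact ne_comm

theorem eg_comm {k : ℕ} {u v : Vtx m} (h : u = v ∨ adj k u v) : eg u v = eg v u := by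
  rcases h with rfl | h
  · rfl
  · cases u <;> cases v <;> simp [eg, gd, adj, adj1] at * <;> grind

theorem egt_rev {z : Tk m N} {τ : ℕ} (hτ : τ < S.M) :
    S.rev.egt z τ = S.egt (flip z) (S.M - (τ+1)) := by
  have e : S.M - (τ+1) + 1 = S.M - τ := by omega
  simp only [egt, rev_pos, e]
  have := step_adj (S := S) (τ := S.M - (τ+1)) (by omega) (flip z)
  rw [e] at this
  exact (eg_comm this).symm

theorem inc_rev {z : Tk m N} {τ : ℕ} (hτ : τ < S.M) :
    S.rev.inc τ z ↔ S.inc (S.M - (τ+1)) (flip z) := by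
  constructor
  · rintro ⟨b, r, h1, h2, h3⟩
    refine ⟨!b, r.rev, by rw [clean_rev] at h1; simpa using h1, by rwa [blank_rev] at h2, ?_⟩
    simpa using sw_of_rev h3
  · rintro ⟨b, r, h1, h2, h3⟩
    refine ⟨!b, r.rev, by rw [clean_rev]; simpa using h1, by rw [blank_rev]; simpa using h2, ?_⟩
    have := h3.rev
    have e := (rev_times hτ).2
    have e2 : S.M - (S.M - (τ+1) + 1) = τ := e
    rw [e2] at this
    simpa using this

theorem xm_rev {z : Tk m N} {τ : ℕ} (hτ : τ < S.M) : S.rev.xm z τ ↔ S.xm (flip z) (S.M - (τ+1)) := by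
  rcases z with o | ⟨b, r⟩
  · exact mv_rev hτ
  · simp only [xm, flip_inr, mv_rev hτ, egt_rev hτ, inc_rev hτ, rev_sl]
    have e : S.M - (τ+1) + 1 = S.M - τ := by omega
    have : S.rev.contra b r τ ↔ S.contra (!b) r.rev (S.M - (τ+1)) := by
      cases b <;> simp [contra, e]
    rw [this]

theorem card_mvs_rev (z : Tk m N) : (S.rev.mvs z).card = (S.mvs (flip z)).card := by
  classical
  unfold mvs
  exact card_rev _ _ _ (fun τ hτ => mv_rev hτ)

theorem card_xms_rev (z : Tk m N) : (S.rev.xms z).card = (S.xms (flip z)).card := by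
  classical
  unfold xms
  exact card_rev _ _ _ (fun τ hτ => xm_rev hτ)

theorem D_rev (z : Tk m N) : S.rev.D z = S.D (flip z) := by
  simp [D, abs_sub_comm]

theorem mv_sw {z : Tk m N} {τ : ℕ} (hτ : τ < S.M) : S.mv z τ ↔ ∃ q, S.sw τ z q :=
  ⟨fun h => move_sw hτ h, fun ⟨_, h⟩ => h.moves⟩

theorem mv_H {z : Tk m N} {τ : ℕ} (hτ : τ < S.M) : S.mv z τ ↔ S.H (τ+1) z ≠ S.H τ z := by
  constructor
  · intro h
    obtain ⟨q, hq⟩ := move_sw hτ h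
    have := hq.ht; omega
  · intro h e; apply h; simp only [H]; rw [e]

theorem D_X (r : Fin N) : S.D (.inr (false, r)) = S.H S.M (.inr (false, r)) - S.H 0 (.inr (false, r)) := by
  have := H0_X (S := S) r; have := HM_X (S := S) r
  unfold D; rw [abs_of_nonneg]; omega

theorem mvs_Ico (z : Tk m N) [DecidablePred (S.mv z)] :
    S.mvs z = (Finset.Ico 0 S.M).filter (S.mv z) := by
  unfold mvs; ext; simp

theorem step_le {z : Tk m N} {τ : ℕ} (hτ : τ < S.M) [DecidablePred (S.mv z)] :
    S.H (τ+1) z - S.H τ z ≤ (if S.mv z τ then 1 else 0) ∧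
    (-S.H (τ+1) z) - (-S.H τ z) ≤ (if S.mv z τ then 1 else 0) := by
  have a := step_H hτ z
  have b := mv_H (z := z) hτ
  split_ifs with h
  · omega
  · have : ¬ S.H (τ+1) z ≠ S.H τ z := fun h' => h (b.2 h')
    omega

theorem unclean_X {r : Fin N} (h : ¬ S.clean (.inr (false, r))) :
    S.D (.inr (false, r)) + 2 ≤ (S.mvs (.inr (false, r))).card := by
  classical
  simp only [clean] at h
  push Not at h
  obtain ⟨τ, hτ, hc⟩ := h
  rw [mvs_Ico, card_split (S.mv _) (Nat.zero_le τ) hτ.le,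
    card_split (S.mv _) (Nat.le_succ τ) (show τ+1 ≤ S.M from hτ), D_X]
  have t1 := tv (fun t => S.H t (.inr (false, r))) (S.mv (.inr (false, r))) (Nat.zero_le τ)
    (fun t _ h2 => (step_le (by omega)).1)
  have t2 := tv (fun t => -S.H t (.inr (false, r))) (S.mv (.inr (false, r))) (Nat.le_succ τ)
    (fun t _ h2 => (step_le (by omega)).2)
  have t3 := tv (fun t => S.H t (.inr (false, r))) (S.mv (.inr (false, r)))
    (show τ+1 ≤ S.M from hτ) (fun t _ h2 => (step_le (by omega)).1)
  simp only [Nat.succ_eq_add_one] at *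
  push_cast
  omega

theorem clean_mv_X {r : Fin N} (h : S.clean (.inr (false, r))) :
    ((S.mvs (.inr (false, r))).card : ℤ) = S.D (.inr (false, r)) := by
  classical
  have key : ∀ τ ≤ S.M, (((Finset.Ico 0 τ).filter (S.mv (.inr (false, r)))).card : ℤ) =
      S.H τ (.inr (false, r)) - S.H 0 (.inr (false, r)) := by
    intro τ
    induction τ with
    | zero => simp
    | succ n ih =>
      intro hn
      rw [Finset.card_filter, Finset.sum_Ico_succ_top (Nat.zero_le n), ← Finset.card_filter]
      push_cast
      rw [ih (by omega)]
      have a := step_H (S := S) (τ := n) (by omega) (.inr (false, r))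
      have b := mv_H (S := S) (z := (.inr (false, r))) (τ := n) (by omega)
      have c := h n (by omega)
      split_ifs with g
      · have := b.1 g; omega
      · have : ¬ S.H (n+1) (.inr (false, r)) ≠ S.H n (.inr (false, r)) := fun h' => g (b.2 h')
        omega
  rw [mvs_Ico, key _ le_rfl, D_X]

theorem unclean_mv {b : Bool} {r : Fin N} (h : ¬ S.clean (.inr (b, r))) :
    S.D (.inr (b, r)) + 2 ≤ (S.mvs (.inr (b, r))).card := by
  cases b
  · exact unclean_X h
  · have := unclean_X (S := S.rev) (r := r.rev) (by rw [clean_rev]; simpa using h)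
    rw [D_rev, card_mvs_rev] at this
    simpa using this

theorem clean_mv {b : Bool} {r : Fin N} (h : S.clean (.inr (b, r))) :
    ((S.mvs (.inr (b, r))).card : ℤ) = S.D (.inr (b, r)) := by
  cases b
  · exact clean_mv_X h
  · have := clean_mv_X (S := S.rev) (r := r.rev) (by rw [clean_rev]; simpa using h)
    rw [D_rev, card_mvs_rev] at this
    simpa using this

/-- own-gadget potential -/
def phi (k : ℕ) (i : Fin m) (u : Vtx m) : ℤ := if gd u = some (some i) then ht k u else 0

theorem phi_step {k : ℕ} {i : Fin m} {u v : Vtx m} (h : adj k u v) :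
    (eg u v = some (some i) → (phi k i v - phi k i u ≤ 1 ∧ phi k i u - phi k i v ≤ 1)) ∧
    (eg u v ≠ some (some i) → phi k i v = phi k i u) := by
  cases u <;> cases v <;> simp [eg, gd, adj, adj1, phi, ht] at * <;> grind

theorem phi_nonneg {k : ℕ} {i : Fin m} {u : Vtx m} : 0 ≤ phi k i u := by
  unfold phi; split_ifs with h
  · exact (gd_slot_pos h).le
  · exact le_rfl

theorem phi_step_le {i : Fin m} {z : Tk m N} {τ : ℕ} (hτ : τ < S.M)
    [DecidablePred fun τ => S.mv z τ ∧ S.egt z τ = some (some i)] :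
    (phi S.k i (S.pos (τ+1) z) - phi S.k i (S.pos τ z) ≤
      if S.mv z τ ∧ S.egt z τ = some (some i) then 1 else 0) ∧
    (-phi S.k i (S.pos (τ+1) z) - -phi S.k i (S.pos τ z) ≤
      if S.mv z τ ∧ S.egt z τ = some (some i) then 1 else 0) := by
  by_cases h : S.mv z τ
  · obtain ⟨q, hq⟩ := move_sw hτ h
    have := phi_step (i := i) hq.adjp
    by_cases g : S.egt z τ = some (some i)
    · have g2 := this.1 g
      simp only [h, g]; simp; omega
    · have g2 := this.2 g
      simp [g]; omega
  · simp [h]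
    have : S.pos (τ+1) z = S.pos τ z := by simpa [mv] using h
    simp [this]

open Classical in
theorem own_bound (r : Fin N) :
    S.H S.M (.inr (false, r)) ≤ ((Finset.Ico 0 S.M).filter fun τ =>
      S.mv (.inr (false, r)) τ ∧ S.egt (.inr (false, r)) τ = some (some (S.sl r))).card := by
  have t := tv (fun t => phi S.k (S.sl r) (S.pos t (.inr (false, r)))) (fun τ =>
      S.mv (.inr (false, r)) τ ∧ S.egt (.inr (false, r)) τ = some (some (S.sl r)))
      (Nat.zero_le S.M) (fun t _ h2 => (phi_step_le h2).1)
  refine le_trans ?_ t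
  have := GM_X (S := S) r
  simp only [G] at this
  have e0 : phi S.k (S.sl r) (S.pos 0 (.inr (false, r))) = 0 := by simp [phi, S.X0, gd]
  rw [e0]
  simp only [phi, this, if_true, H]
  omega

open Classical in
theorem own_bound_exit (r : Fin N) {τ1 τ2 : ℕ} (h12 : τ1 ≤ τ2) (h2 : τ2 ≤ S.M)
    (g1 : S.G τ1 (.inr (false, r)) = some (some (S.sl r)))
    (g2 : S.G τ2 (.inr (false, r)) ≠ some (some (S.sl r))) :
    S.H S.M (.inr (false, r)) + 2 ≤ ((Finset.Ico 0 S.M).filter fun τ =>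
      S.mv (.inr (false, r)) τ ∧ S.egt (.inr (false, r)) τ = some (some (S.sl r))).card := by
  have ta := tv (fun t => phi S.k (S.sl r) (S.pos t (.inr (false, r)))) (fun τ =>
      S.mv (.inr (false, r)) τ ∧ S.egt (.inr (false, r)) τ = some (some (S.sl r)))
      (Nat.zero_le τ1) (fun t _ h2 => (phi_step_le (by omega)).1)
  have tb := tv (fun t => -phi S.k (S.sl r) (S.pos t (.inr (false, r)))) (fun τ =>
      S.mv (.inr (false, r)) τ ∧ S.egt (.inr (false, r)) τ = some (some (S.sl r)))
      h12 (fun t _ h2 => (phi_step_le (by omega)).2)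
  have tc := tv (fun t => phi S.k (S.sl r) (S.pos t (.inr (false, r)))) (fun τ =>
      S.mv (.inr (false, r)) τ ∧ S.egt (.inr (false, r)) τ = some (some (S.sl r)))
      h2 (fun t _ h2 => (phi_step_le h2).1)
  rw [card_split _ (Nat.zero_le τ1) (h12.trans h2), card_split _ h12 h2]
  have e0 : phi S.k (S.sl r) (S.pos 0 (.inr (false, r))) = 0 := by simp [phi, S.X0, gd]
  have e1 : 1 ≤ phi S.k (S.sl r) (S.pos τ1 (.inr (false, r))) := by
    have := G_pos g1
    simp only [G] at g1
    simp only [phi, g1, if_true]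
    simp only [H] at this; omega
  have e2 : phi S.k (S.sl r) (S.pos τ2 (.inr (false, r))) = 0 := by
    simp only [G] at g2
    simp [phi, g2]
  have e3 : phi S.k (S.sl r) (S.pos S.M (.inr (false, r))) = S.H S.M (.inr (false, r)) := by
    have := GM_X (S := S) r
    simp only [G] at this
    simp [phi, this, H]
  push_cast
  simp only [e0, e2, e3] at ta tb tc
  omega

theorem egt_ord {z : Tk m N} {τ : ℕ} (h : S.H τ z < 0) : S.egt z τ = some none := by
  have := G_ord.2 h
  simp only [G] at this
  simp [egt, eg, this]

open Classical in
theorem plain_bound (r : Fin N) :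
    (r : ℕ) + 1 ≤ ((Finset.Ico 0 S.M).filter fun τ =>
      S.mv (.inr (false, r)) τ ∧ S.egt (.inr (false, r)) τ = some none ∧
      ¬ (S.contra false r τ ∨ S.inc τ (.inr (false, r)))).card := by
  set z : Tk m N := .inr (false, r) with hz
  have hex : ∃ τ, τ ≤ S.M ∧ S.pos τ z = .root := root_ex (S := S) false r
  set φ := Nat.find hex with hφ
  have hφ1 : φ ≤ S.M ∧ S.pos φ z = .root := Nat.find_spec hex
  have hneg : ∀ τ < φ, S.H τ z < 0 := by
    intro τ hτ
    by_contra hc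
    obtain ⟨t, _, h2, h3⟩ := ivt (fun t => S.H t z) 0 τ (Nat.zero_le _)
      (fun t _ h => by have := step_H (S := S) (τ := t) (by omega) z; omega)
      (by rw [H0_X]; omega) (by omega)
    have := Nat.find_min' hex (m := t) ⟨by omega, H_zero.1 h3⟩
    omega
  -- right moves before `φ`
  by_cases hinc : ∃ τ, τ < φ ∧ S.H (τ+1) z = S.H τ z + 1 ∧ S.inc τ z
  · -- ranks of incident tokens
    have hex2 : ∃ ρ : ℕ, ∃ hρ : ρ < N, ∃ τ, τ < φ ∧ S.H (τ+1) z = S.H τ z + 1 ∧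
        S.clean (.inr (true, ⟨ρ, hρ⟩)) ∧ S.blank ⟨ρ, hρ⟩ z ∧ S.sw τ (.inr (true, ⟨ρ, hρ⟩)) z := by
      obtain ⟨τ, h1, h2, b, ρ, h3, h4, h5⟩ := hinc
      cases b
      · exfalso
        have := h3 τ h5.1
        have := h5.ht
        omega
      · exact ⟨ρ, ρ.2, τ, h1, h2, h3, h4, h5⟩
    obtain ⟨ρ, ⟨hρ, τ, h1, h2, h3, h4, h5⟩, hmin⟩ : ∃ ρ : ℕ, (∃ hρ : ρ < N, ∃ τ, τ < φ ∧
        S.H (τ+1) z = S.H τ z + 1 ∧ S.clean (.inr (true, ⟨ρ, hρ⟩)) ∧ S.blank ⟨ρ, hρ⟩ z ∧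
        S.sw τ (.inr (true, ⟨ρ, hρ⟩)) z) ∧ ∀ ρ' < ρ, ¬ (∃ hρ : ρ' < N, ∃ τ, τ < φ ∧
        S.H (τ+1) z = S.H τ z + 1 ∧ S.clean (.inr (true, ⟨ρ', hρ⟩)) ∧ S.blank ⟨ρ', hρ⟩ z ∧
        S.sw τ (.inr (true, ⟨ρ', hρ⟩)) z) :=
      ⟨Nat.find hex2, Nat.find_spec hex2, fun _ h => Nat.find_min hex2 h⟩
    have hrρ : (r : ℕ) < ρ := by
      have : r < (⟨ρ, hρ⟩ : Fin N) := h4.1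
      exact this
    have hsw : ∀ ρ' : ℕ, ∀ hlt : ρ' < ρ, ∃ τ', τ' < φ ∧ S.H (τ'+1) z = S.H τ' z + 1 ∧
        S.sw τ' z (.inr (true, ⟨ρ', hlt.trans hρ⟩)) := by
      intro ρ' hlt
      set w : Tk m N := .inr (true, ⟨ρ', hlt.trans hρ⟩) with hw
      have hzw : z ≠ w := by simp [hz, hw]
      have a1 : S.H τ w < S.H τ z := by
        have a2 := h5.ht
        have a3 : S.H τ w < S.H τ (.inr (true, ⟨ρ, hρ⟩)) :=
          L4S h3 (show (⟨ρ', hlt.trans hρ⟩ : Fin N) < ⟨ρ, hρ⟩ from hlt) h5.1.le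
            (by have := hneg τ h1; omega)
        have a4 : S.H τ w ≠ S.H τ z := fun e =>
          hzw (pos_eq h5.1.le (ht_le_inj e (by have := hneg τ h1; simp only [H] at *; omega)).symm)
        omega
      -- no-swap propagation
      have prop : ∀ t, t ≤ τ → (∀ t' < t, ¬ S.sw t' z w) → ¬ S.H t w < S.H t z := by
        intro t
        induction t with
        | zero =>
          intro _ _
          have : 0 < S.H 0 w := H0_S (S := S) ⟨ρ', hlt.trans hρ⟩
          have : S.H 0 z = _ := H0_X (S := S) r
          omega
        | succ t ih =>
          intro ht hns
          have b1 := ih (by omega) (fun t' h => hns t' (by omega))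
          have b2 := OT (S := S) (τ := t) (by omega) hzw (hns t (by omega))
            (hneg t (by omega)).le (hneg (t+1) (by omega)).le
          rwa [b2] at b1
      have hexs : ∃ t', t' < τ ∧ S.sw t' z w := by
        by_contra hc
        push Not at hc
        exact prop τ le_rfl hc a1
      obtain ⟨t', c1, c2⟩ := hexs
      refine ⟨t', by omega, ?_, c2⟩
      have c3 := prop t' c1.le (fun t'' h hs => by have := hs.uniq c2; omega)
      have c4 := c2.ht
      omega
    choose! g hg1 hg2 hg3 using hsw
    have hcard : ρ ≤ ((Finset.Ico 0 S.M).filter fun τ =>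
        S.mv z τ ∧ S.egt z τ = some none ∧ ¬ (S.contra false r τ ∨ S.inc τ z)).card := by
      have : (Finset.range ρ).card = ρ := Finset.card_range ρ
      rw [← this]
      refine Finset.card_le_card_of_injOn g ?_ ?_
      · intro ρ' hρ'
        have hlt : ρ' < ρ := by simpa using hρ'
        have c1 := hg1 ρ' hlt
        have c2 := hg2 ρ' hlt
        have c3 := hg3 ρ' hlt
        simp only [Finset.coe_filter, Finset.mem_Ico, Set.mem_setOf_eq]
        refine ⟨⟨Nat.zero_le _, c3.1⟩, c3.moves, egt_ord (hneg _ c1), ?_⟩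
        rintro (hc | ⟨b, r', e1, e2, e3⟩)
        · simp only [contra, Bool.false_eq_true, if_false, ← hz] at hc
          omega
        · have e4 := c3.eq_of_sw e3.symm
          have e5 : b = true ∧ r' = ⟨ρ', hlt.trans hρ⟩ := by
            have := e4.symm; simpa using this
          obtain ⟨rfl, rfl⟩ := e5
          exact hmin _ hlt ⟨hlt.trans hρ, g ρ', c1, c2, e1, e2, e3⟩
      · intro a ha b hb hab
        have ha' : a < ρ := by simpa using ha
        have hb' : b < ρ := by simpa using hb
        have c3 := hg3 a ha'
        have d3 := hg3 b hb'
        rw [← hab] at d3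
        have := c3.eq_of_sw d3
        simpa using this
    omega
  · push Not at hinc
    have t := tv (fun t => S.H t z) (fun τ =>
      S.mv z τ ∧ S.egt z τ = some none ∧ ¬ (S.contra false r τ ∨ S.inc τ z)) (Nat.zero_le φ)
      (fun t _ h => by
        have a := step_H (S := S) (τ := t) (by omega) z
        by_cases hR : S.H (t+1) z = S.H t z + 1
        · rw [if_pos]
          · omega
          · refine ⟨(mv_H (by omega)).2 (by omega), egt_ord (hneg t h), ?_⟩
            rintro (hc | hc)
            · simp only [contra, Bool.false_eq_true, if_false, ← hz] at hc
              omega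
            · exact hinc t h hR hc
        · split_ifs <;> omega)
    have t2 : ((Finset.Ico 0 φ).filter fun τ =>
      S.mv z τ ∧ S.egt z τ = some none ∧ ¬ (S.contra false r τ ∨ S.inc τ z)).card ≤
      ((Finset.Ico 0 S.M).filter fun τ =>
      S.mv z τ ∧ S.egt z τ = some none ∧ ¬ (S.contra false r τ ∨ S.inc τ z)).card :=
      Finset.card_le_card (Finset.filter_subset_filter _
        (Finset.Ico_subset_Ico le_rfl hφ1.1))
    have e1 := H0_X (S := S) r
    have e2 := H_zero.2 hφ1.2
    rw [← hz] at e1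
    simp only [e1, e2] at t
    omega

theorem LA_core (r : Fin N) (e : ℤ)
    (hown : ∀ (O : Finset ℕ), (∀ τ, τ ∈ O ↔ τ < S.M ∧
      S.mv (.inr (false, r)) τ ∧ S.egt (.inr (false, r)) τ = some (some (S.sl r))) →
      S.H S.M (.inr (false, r)) + e ≤ O.card) :
    S.D (.inr (false, r)) + (S.xms (.inr (false, r))).card + e ≤ (S.mvs (.inr (false, r))).card := by
  classical
  set z : Tk m N := .inr (false, r) with hz
  set O := (Finset.Ico 0 S.M).filter fun τ => S.mv z τ ∧ S.egt z τ = some (some (S.sl r)) with hO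
  set P := (Finset.Ico 0 S.M).filter fun τ =>
      S.mv z τ ∧ S.egt z τ = some none ∧ ¬ (S.contra false r τ ∨ S.inc τ z) with hP
  have h1 := hown O (by intro τ; simp [hO])
  have h2 : (r : ℕ) + 1 ≤ P.card := plain_bound r
  have d1 : Disjoint O P := by
    rw [Finset.disjoint_left]; intro τ ha hb
    simp only [hO, hP, Finset.mem_filter] at ha hb
    have := ha.2.2.symm.trans hb.2.2.1
    simp at this
  have d2 : Disjoint (O ∪ P) (S.xms z) := by
    rw [Finset.disjoint_left]; intro τ ha hb
    simp only [hO, hP, Finset.mem_union, Finset.mem_filter] at ha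
    simp only [xms, Finset.mem_filter, xm, hz] at hb
    rcases ha with ha | ha <;> rcases hb.2.2 with ⟨i, hb1, hb2⟩ | ⟨hb1, hb2⟩
    · have := ha.2.2.symm.trans hb1; simp at this; exact hb2 this.symm
    · have := ha.2.2.symm.trans hb1; simp at this
    · have := ha.2.2.1.symm.trans hb1; simp at this
    · exact ha.2.2.2 hb2
  have hsub : (O ∪ P) ∪ S.xms z ⊆ S.mvs z := by
    intro τ hτ
    simp only [mvs, Finset.mem_filter, Finset.mem_range]
    simp only [hO, hP, Finset.mem_union, Finset.mem_filter, Finset.mem_Ico, xms, Finset.mem_range] at hτ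
    rcases hτ with (h | h) | h
    · exact ⟨h.1.2, h.2.1⟩
    · exact ⟨h.1.2, h.2.1⟩
    · refine ⟨h.1, ?_⟩
      have := h.2
      simp only [xm, hz] at this
      exact this.1
  have hc := Finset.card_le_card hsub
  rw [Finset.card_union_of_disjoint d2, Finset.card_union_of_disjoint d1] at hc
  have := D_X (S := S) r
  have := H0_X (S := S) r
  rw [← hz] at *
  omega

theorem LA_exit (r : Fin N) {τ1 τ2 : ℕ} (h12 : τ1 ≤ τ2) (h2 : τ2 ≤ S.M)
    (g1 : S.G τ1 (.inr (false, r)) = some (some (S.sl r)))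
    (g2 : S.G τ2 (.inr (false, r)) ≠ some (some (S.sl r))) :
    S.D (.inr (false, r)) + (S.xms (.inr (false, r))).card + 2 ≤
      (S.mvs (.inr (false, r))).card := by
  classical
  refine LA_core r 2 (fun O hO => ?_)
  have := own_bound_exit r h12 h2 g1 g2
  convert this using 3
  ext τ; simp [hO]

theorem LA (b : Bool) (r : Fin N) :
    S.D (.inr (b, r)) + (S.xms (.inr (b, r))).card ≤ (S.mvs (.inr (b, r))).card := by
  classical
  have X : ∀ (S : Sys m N) (r : Fin N), S.D (.inr (false, r)) + (S.xms (.inr (false, r))).card ≤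
      (S.mvs (.inr (false, r))).card := by
    intro S r
    have := LA_core (S := S) r 0 (fun O hO => by
      have := own_bound (S := S) r
      rw [add_zero]
      convert this using 3
      ext τ; simp [hO])
    simpa using this
  cases b
  · exact X S r
  · have := X S.rev r.rev
    rw [D_rev, card_mvs_rev, card_xms_rev] at this
    simpa using this

/-- incident moves are extra moves -/
theorem inc_xm {τ : ℕ} {z : Tk m N} (h : S.inc τ z) : S.xm z τ := by
  obtain ⟨b, r, h1, h2, h3⟩ := h
  have hmv : S.mv z τ := h3.symm.moves
  rcases z with o | ⟨b', r'⟩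
  · exact hmv
  · refine ⟨hmv, ?_⟩
    have hsl : S.sl r' ≠ S.sl r := by
      cases b' <;> exact h2.2
    have s1 := clean_onsp h1 h3.1.le
    have s2 := clean_onsp (τ := τ+1) h1 h3.1
    have e1 : S.pos (τ+1) (.inr (b', r')) = S.pos τ (.inr (b, r)) := h3.2.2.2.2.1
    have e2 : S.pos (τ+1) (.inr (b, r)) = S.pos τ (.inr (b', r')) := h3.2.2.2.1
    have a := h3.2.2.1
    rw [e2] at s2
    have : S.egt (.inr (b', r')) τ = some none ∨ S.egt (.inr (b', r')) τ = some (some (S.sl r)) := by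
      simp only [egt, e1]
      rcases s1 with s1 | ⟨d, s1⟩ | ⟨d, s1⟩ <;> rcases s2 with s2 | ⟨d', s2⟩ | ⟨d', s2⟩ <;>
        rw [s1, s2] at a ⊢ <;> simp [eg, gd, adj, adj1] at a ⊢
    rcases this with g | g
    · exact Or.inr ⟨g, Or.inr ⟨b, r, h1, h2, h3⟩⟩
    · exact Or.inl ⟨_, g, hsl.symm⟩

/-- clean tokens make no extra moves -/
theorem clean_xms {b : Bool} {r : Fin N} (h : S.clean (.inr (b, r))) :
    (S.xms (.inr (b, r))).card = 0 := by
  have := clean_mv h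
  have := LA (S := S) b r
  omega

end Sys
end UnweightedTS

namespace UnweightedTS
namespace Sys
variable {m N : ℕ} {S : Sys m N}

/-- crediting data -/
structure Cred (S : Sys m N) where
  ev : Tk m N → ℕ
  c : Tk m N → Tk m N
  evM : ∀ b r, S.clean (.inr (b, r)) → ev (.inr (b, r)) ≤ S.M
  evr : ∀ b r, S.clean (.inr (b, r)) → S.pos (ev (.inr (b, r))) (.inr (b, r)) = .root
  pr : ∀ b r, S.clean (.inr (b, r)) → S.pres (ev (.inr (b, r))) r (c (.inr (b, r)))
  sd : ∀ b r, S.clean (.inr (b, r)) → S.swd (.inr (b, r)) (c (.inr (b, r)))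

theorem exists_cred (S : Sys m N) : Nonempty (Cred S) := by
  classical
  have key : ∀ v : Tk m N, ∃ (t : ℕ) (z : Tk m N), ∀ b r, v = .inr (b, r) → S.clean v →
      t ≤ S.M ∧ S.pos t v = .root ∧ S.pres t r z ∧ S.swd v z := by
    rintro (o | ⟨b, r⟩)
    · exact ⟨0, .inl o, by intro b r h; simp at h⟩
    · by_cases h : S.clean (.inr (b, r))
      · obtain ⟨t, h1, h2⟩ := root_ex (S := S) b r
        have h3 := (pres_count (S := S) h1 h2).1
        obtain ⟨z, hz, z', hz', hne⟩ := Finset.one_lt_card.1 (by omega :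
          1 < (Finset.univ.filter fun z => S.pres t r z).card)
        simp at hz hz'
        by_cases hs : S.swd (.inr (b, r)) z
        · refine ⟨t, z, ?_⟩
          rintro b' r' he _
          simp at he
          obtain ⟨rfl, rfl⟩ := he
          exact ⟨h1, h2, hz, hs⟩
        · refine ⟨t, z', ?_⟩
          rintro b' r' he _
          simp at he
          obtain ⟨rfl, rfl⟩ := he
          refine ⟨h1, h2, hz', ?_⟩
          by_contra hs'
          exact hne (exempt h h1 h2 hz hs hz' hs')
      · exact ⟨0, .inl none, by intro b' r' _ h'; exact absurd h' h⟩
  choose ev c hk using key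
  exact ⟨⟨ev, c, fun b r h => (hk _ b r rfl h).1, fun b r h => (hk _ b r rfl h).2.1,
    fun b r h => (hk _ b r rfl h).2.2.1, fun b r h => (hk _ b r rfl h).2.2.2⟩⟩

/-- reversed crediting -/
def Cred.rev (C : Cred S) : Cred S.rev where
  ev := fun v => S.M - C.ev (flip v)
  c := fun v => flip (C.c (flip v))
  evM := by intro b r h; simp
  evr := by
    intro b r h
    rw [clean_rev] at h
    have := C.evM _ _ h
    simp only [rev_pos, flip_inr] at *
    rw [Nat.sub_sub_self this]
    exact C.evr _ _ h
  pr := by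
    intro b r h
    rw [clean_rev] at h
    have := C.evM _ _ h
    have := C.pr _ _ h
    rw [pres_rev]
    simp only [flip_inr, flip_flip] at *
    rwa [Nat.sub_sub_self (by assumption)]
  sd := by
    intro b r h
    rw [clean_rev] at h
    rw [swd_rev]
    simp only [flip_inr, flip_flip] at *
    exact C.sd _ _ h

/-- credited step -/
def Cred.cst (C : Cred S) (z : Tk m N) (τ : ℕ) : Prop :=
  ∃ b r, S.clean (.inr (b, r)) ∧ C.c (.inr (b, r)) = z ∧ S.sw τ (.inr (b, r)) z

theorem Cred.cst_rev (C : Cred S) {z : Tk m N} {τ : ℕ} (hτ : τ < S.M) :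
    C.rev.cst z τ ↔ C.cst (flip z) (S.M - (τ+1)) := by
  constructor
  · rintro ⟨b, r, h1, h2, h3⟩
    refine ⟨!b, r.rev, by rw [clean_rev] at h1; simpa using h1, ?_, ?_⟩
    · simp only [Cred.rev, flip_inr] at h2
      rw [← h2, flip_flip]
    · simpa using sw_of_rev h3
  · rintro ⟨b, r, h1, h2, h3⟩
    refine ⟨!b, r.rev, by rw [clean_rev]; simpa using h1, ?_, ?_⟩
    · simp only [Cred.rev, flip_inr, Bool.not_not, Fin.rev_rev, h2, flip_flip]
    · have := h3.rev
      have e2 : S.M - (S.M - (τ+1) + 1) = τ := (rev_times hτ).2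
      rw [e2] at this
      simpa using this

theorem Cred.cst_inc (C : Cred S) {z : Tk m N} {τ : ℕ} (h : C.cst z τ) : S.inc τ z := by
  obtain ⟨b, r, h1, h2, h3⟩ := h
  refine ⟨b, r, h1, ?_, h3⟩
  have := (C.pr b r h1).1
  rwa [h2] at this

open Classical in
/-- credited steps -/
noncomputable def Cred.crs (C : Cred S) (z : Tk m N) : Finset ℕ :=
  (Finset.range S.M).filter (C.cst z)

theorem Cred.crs_sub (C : Cred S) (z : Tk m N) : C.crs z ⊆ S.xms z := by
  intro τ h
  simp only [Cred.crs, xms, Finset.mem_filter] at *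
  exact ⟨h.1, inc_xm (C.cst_inc h.2)⟩

theorem Cred.card_crs_rev (C : Cred S) (z : Tk m N) : (C.rev.crs z).card = (C.crs (flip z)).card := by
  classical
  unfold crs
  exact card_rev _ _ _ (fun τ hτ => C.cst_rev hτ)

/-- uncredited extra moves from blank swaps -/
theorem Cred.unc (C : Cred S) {b : Bool} {r : Fin N} {z : Tk m N} {t : ℕ}
    (hc : S.clean (.inr (b, r))) (hb : S.blank r z) (hne : C.c (.inr (b, r)) ≠ z)
    (h : S.sw t (.inr (b, r)) z) : S.xm z t ∧ ¬ C.cst z t := by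
  refine ⟨inc_xm ⟨b, r, hc, hb, h⟩, ?_⟩
  rintro ⟨b', r', h1, h2, h3⟩
  have := h.symm.eq_of_sw h3.symm
  rw [← this] at h2
  exact hne h2

theorem G_step {t : ℕ} (ht : t < S.M) {z : Tk m N} {x : Option (Fin m)} (h : S.G t z = some x) :
    S.G (t+1) z = some x ∨ S.pos (t+1) z = .root := by
  have := step_adj ht z
  simp only [G] at *
  rcases this with e | e
  · rw [← e]; exact Or.inl h
  · revert h e
    generalize S.pos t z = u
    generalize S.pos (t+1) z = v
    cases u <;> cases v <;> simp [gd, adj, adj1] <;> grind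

theorem entry {z : Tk m N} {i : Fin m} {t1 t2 : ℕ} (h12 : t1 ≤ t2) (h2 : t2 ≤ S.M)
    (g1 : S.G t1 z ≠ some (some i)) (g2 : S.G t2 z = some (some i)) :
    ∃ a, t1 ≤ a ∧ a < t2 ∧ S.pos a z = .root ∧ ∀ t, a < t → t ≤ t2 → S.G t z = some (some i) := by
  induction t2, h12 using Nat.le_induction with
  | base => exact absurd g2 g1
  | succ n hn ih =>
    by_cases h : S.G n z = some (some i)
    · obtain ⟨a, a1, a2, a3, a4⟩ := ih (by omega) h
      refine ⟨a, a1, by omega, a3, fun t ht ht' => ?_⟩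
      rcases Nat.lt_or_ge n t with h' | h'
      · obtain rfl : t = n+1 := by omega
        exact g2
      · exact a4 t ht h'
    · refine ⟨n, hn, by omega, ?_, fun t ht ht' => ?_⟩
      · rcases hx : S.G n z with _ | x
        · exact G_none.1 hx
        · exfalso
          rcases G_step (by omega) hx with h' | h'
          · rw [h'] at g2; rw [hx] at h; exact h g2
          · rw [G_none.2 h'] at g2; simp at g2
      · obtain rfl : t = n+1 := by omega
        exact g2

theorem root_uniq {t : ℕ} (ht : t ≤ S.M) {p q : Tk m N} (h : S.pos t p = .root)
    (h' : S.pos t q = .root) : p = q := by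
  have e := h.trans h'.symm
  exact pos_eq ht e

/-- token class to be bounded -/
structure Vz (C : Cred S) (r : Fin N) : Prop where
  uc : ¬ S.clean (.inr (false, r))
  u1 : ∀ t1 t2, t1 < S.M → t2 < S.M → S.xm (.inr (false, r)) t1 → ¬ C.cst (.inr (false, r)) t1 →
    S.xm (.inr (false, r)) t2 → ¬ C.cst (.inr (false, r)) t2 → t1 = t2
  ex : ∀ t1 t2, t1 ≤ t2 → t2 ≤ S.M → S.G t1 (.inr (false, r)) = some (some (S.sl r)) →
    S.G t2 (.inr (false, r)) = some (some (S.sl r))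
  cr : ∃ b r', S.clean (.inr (b, r')) ∧ C.c (.inr (b, r')) = .inr (false, r)

theorem Vz_of (C : Cred S) {r : Fin N} (huc : ¬ S.clean (.inr (false, r)))
    (h : ((S.mvs (.inr (false, r))).card : ℤ) ≤ S.D (.inr (false, r)) +
      (C.crs (.inr (false, r))).card + 1) : Vz C r := by
  classical
  have hsub := C.crs_sub (.inr (false, r))
  have hle := Finset.card_le_card hsub
  refine ⟨huc, ?_, ?_, ?_⟩
  · intro t1 t2 l1 l2 x1 c1 x2 c2
    by_contra hne
    have hla := LA (S := S) false r
    have : C.crs (.inr (false, r)) ∪ {t1, t2} ⊆ S.xms (.inr (false, r)) := by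
      intro t ht
      simp only [Finset.mem_union, Finset.mem_insert, Finset.mem_singleton] at ht
      rcases ht with ht | rfl | rfl
      · exact hsub ht
      · simp [xms, l1, x1]
      · simp [xms, l2, x2]
    have := Finset.card_le_card this
    rw [Finset.card_union_of_disjoint, Finset.card_pair hne] at this
    · omega
    · rw [Finset.disjoint_right]
      intro t ht
      simp only [Finset.mem_insert, Finset.mem_singleton] at ht
      rcases ht with rfl | rfl
      · simp [Cred.crs, c1]
      · simp [Cred.crs, c2]
  · intro t1 t2 h12 h2 g1
    by_contra g2
    have := LA_exit r h12 h2 g1 g2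
    omega
  · have := unclean_mv huc
    obtain ⟨t, ht⟩ := Finset.card_pos.1 (by omega : 0 < (C.crs (.inr (false, r))).card)
    simp only [Cred.crs, Finset.mem_filter] at ht
    obtain ⟨b, r', h1, h2, _⟩ := ht.2
    exact ⟨b, r', h1, h2⟩

theorem exit_unc {C : Cred S} {r : Fin N} {t : ℕ} {g : Fin m} (hg : g ≠ S.sl r) (ht : t < S.M)
    (h1 : S.G t (.inr (false, r)) = some (some g)) (h2 : S.pos (t+1) (.inr (false, r)) = .root)
    (hev : ∀ b r', S.clean (.inr (b, r')) → C.c (.inr (b, r')) = .inr (false, r) →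
      t + 1 ≤ C.ev (.inr (b, r'))) :
    S.xm (.inr (false, r)) t ∧ ¬ C.cst (.inr (false, r)) t := by
  constructor
  · refine ⟨?_, Or.inl ⟨g, ?_, hg⟩⟩
    · intro e
      rw [h2] at e
      rw [G_none.2 e.symm] at h1; simp at h1
    · simp only [G] at h1
      simp [egt, eg, h1]
  · rintro ⟨b, r', e1, e2, e3⟩
    have a := hev b r' e1 e2
    have b1 : S.pos t (.inr (b, r')) = .root := by rw [← e3.2.2.2.2.1, h2]
    have := contig e1 (Nat.le_succ t) a (C.evM _ _ e1) b1 (C.evr _ _ e1)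
    exact e3.ne (root_uniq ht this h2)

/-- entry step is uncredited -/
theorem entry_unc {C : Cred S} {r : Fin N} {a t : ℕ} {g : Fin m} (hg : g ≠ S.sl r)
    (hat : a + 1 ≤ t) (ht : t ≤ S.M)
    (h1 : S.pos a (.inr (false, r)) = .root) (h2 : S.G (a+1) (.inr (false, r)) = some (some g))
    {w : Tk m N} (hw : S.pos t w = .root) (hcw : C.c w ≠ .inr (false, r))
    (hev : ∀ b r', S.clean (.inr (b, r')) → C.c (.inr (b, r')) = .inr (false, r) →
      t ≤ C.ev (.inr (b, r'))) :
    S.xm (.inr (false, r)) a ∧ ¬ C.cst (.inr (false, r)) a := by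
  constructor
  · refine ⟨?_, Or.inl ⟨g, ?_, hg⟩⟩
    · intro e
      rw [h1] at e
      rw [G_none.2 e] at h2; simp at h2
    · simp only [G] at h2
      have e : gd (Vtx.root : Vtx m) = none := rfl
      simp only [egt, eg, h1, e, if_true]
      exact h2
  · rintro ⟨b, r', e1, e2, e3⟩
    have a1 := hev b r' e1 e2
    have b1 : S.pos (a+1) (.inr (b, r')) = .root := by rw [e3.2.2.2.1, h1]
    have := contig e1 hat a1 (C.evM _ _ e1) b1 (C.evr _ _ e1)
    have := root_uniq ht this hw
    rw [this] at e2
    exact hcw e2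

theorem V_seg (C : Cred S) (seg : Fin N → ℕ) (hmono : Monotone seg)
    (hsl : ∀ r r', seg r = seg r' → S.sl r = S.sl r') (l : ℕ) (A : Finset (Fin N))
    (hA : ∀ r ∈ A, seg r = l ∧ Vz C r) : A.card ≤ 2 * m + 2 := by
  classical
  by_contra hcard
  push Not at hcard
  -- first credited token
  have hmin : ∀ r, ∃ v : Bool × Fin N, r ∈ A → S.clean (.inr v) ∧ C.c (.inr v) = .inr (false, r) ∧
      ∀ b r', S.clean (.inr (b, r')) → C.c (.inr (b, r')) = .inr (false, r) →
        C.ev (.inr v) ≤ C.ev (.inr (b, r')) := by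
    intro r
    by_cases hr : r ∈ A
    · obtain ⟨b, r', h1, h2⟩ := (hA r hr).2.cr
      obtain ⟨v, hv, hv'⟩ := Finset.exists_min_image
        (Finset.univ.filter fun v : Bool × Fin N => S.clean (.inr v) ∧ C.c (.inr v) = .inr (false, r))
        (fun v => C.ev (.inr v)) ⟨(b, r'), by simp [h1, h2]⟩
      simp only [Finset.mem_filter, Finset.mem_univ, true_and] at hv hv'
      exact ⟨v, fun _ => ⟨hv.1, hv.2, fun b r' a1 a2 => hv' (b, r') ⟨a1, a2⟩⟩⟩
    · obtain ⟨b⟩ : Nonempty (Bool × Fin N) := ⟨(true, r)⟩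
      exact ⟨b, fun h => absurd h hr⟩
  choose v hv using hmin
  set f : Fin N → ℕ := fun r => C.ev (.inr (v r)) with hf
  have fM : ∀ r ∈ A, f r ≤ S.M := fun r hr => C.evM _ _ (hv r hr).1
  have froot : ∀ r ∈ A, S.pos (f r) (.inr (v r)) = .root := fun r hr => C.evr _ _ (hv r hr).1
  have fpres : ∀ r ∈ A, S.pres (f r) (v r).2 (.inr (false, r)) := fun r hr => by
    have := C.pr _ _ (hv r hr).1
    rwa [(hv r hr).2.1] at this
  have cne : ∀ r ∈ A, ∀ r' ∈ A, r ≠ r' → C.c (.inr (v r)) ≠ .inr (false, r') := by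
    intro r hr r' hr' hne
    rw [(hv r hr).2.1]; simpa using hne
  have vne : ∀ r ∈ A, ∀ r' ∈ A, r ≠ r' → v r ≠ v r' := by
    intro r hr r' hr' hne e
    have := cne r hr r' hr' hne
    rw [e] at this; exact this (hv r' hr').2.1
  have finj : ∀ r ∈ A, ∀ r' ∈ A, f r = f r' → r = r' := by
    intro r hr r' hr' e
    by_contra hne
    have a := froot r hr
    rw [e] at a
    have := root_uniq (fM r' hr') a (froot r' hr')
    exact vne r hr r' hr' hne (by simpa using this)
  have hblank : ∀ r ∈ A, ∀ r' ∈ A, S.blank (v r).2 (.inr (false, r')) := by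
    intro r hr r' hr'
    have hb := (fpres r hr).1
    simp only [blank] at hb ⊢
    have e : seg r' = seg r := by rw [(hA r hr).1, (hA r' hr').1]
    have e2 := hsl _ _ e
    refine ⟨?_, by rw [e2]; exact hb.2⟩
    by_contra hlt
    push Not at hlt
    have m1 := hmono hb.1.le
    have m2 := hmono hlt
    have : seg r = seg (v r).2 := by omega
    exact hb.2 (hsl _ _ this)
  -- never at the root at an event of another token, never in own gadget before
  have nroot : ∀ r ∈ A, ∀ r' ∈ A, S.pos (f r) (.inr (false, r')) ≠ .root := by
    intro r hr r' hr' e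
    have := root_uniq (fM r hr) (froot r hr) e
    have h1 := (hv r hr).1
    rw [this] at h1
    exact (hA r' hr').2.uc h1
  have nown : ∀ r ∈ A, ∀ t, t ≤ f r → S.G t (.inr (false, r)) ≠ some (some (S.sl r)) := by
    intro r hr t ht e
    have := (hA r hr).2.ex t (f r) ht (fM r hr) e
    have hp := fpres r hr
    have hb := hp.1.2
    rcases hp.2 with h' | h' <;> rw [this] at h'
    · simp at h'
    · simp at h'; exact hb h'
  have vsw : ∀ r ∈ A, ∀ r' ∈ A, r ≠ r' → ∀ t, S.sw t (.inr (v r)) (.inr (false, r')) →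
      S.xm (.inr (false, r')) t ∧ ¬ C.cst (.inr (false, r')) t := by
    intro r hr r' hr' hne t ht
    exact C.unc (hv r hr).1 (hblank r hr r' hr') (cne r hr r' hr' hne) ht
  have hneA : A.Nonempty := Finset.card_pos.1 (by omega)
  obtain ⟨r1, hr1, hr1m⟩ := Finset.exists_min_image A f hneA
  have hc1 : (A.erase r1).card = A.card - 1 := Finset.card_erase_of_mem hr1
  obtain ⟨r2, hr2', hr2m⟩ := Finset.exists_min_image (A.erase r1) f (Finset.card_pos.1 (by omega))
  have hr2 : r2 ∈ A := Finset.mem_of_mem_erase hr2'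
  have hc2 : ((A.erase r1).erase r2).card = A.card - 2 := by
    rw [Finset.card_erase_of_mem hr2', hc1]; omega
  have h21 : r2 ≠ r1 := Finset.ne_of_mem_erase hr2'
  have hf12 : f r1 ≤ f r2 := hr1m r2 hr2
  -- every other token is in a foreign gadget at the first event
  have main : ∀ r, ∃ g : Fin m, r ∈ (A.erase r1).erase r2 → g ≠ S.sl r ∧
      (∃ a, a < f r1 ∧ S.pos a (.inr (false, r)) = .root ∧
        S.G (a+1) (.inr (false, r)) = some (some g) ∧
        S.xm (.inr (false, r)) a ∧ ¬ C.cst (.inr (false, r)) a) ∧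
      ∀ t, f r1 ≤ t → t ≤ f r → S.G t (.inr (false, r)) = some (some g) := by
    intro r
    by_cases hr' : r ∈ (A.erase r1).erase r2
    swap
    · exact ⟨S.sl r, fun h => absurd h hr'⟩
    have hrne2 : r ≠ r2 := Finset.ne_of_mem_erase hr'
    have hr'' := Finset.mem_of_mem_erase hr'
    have hrne1 : r ≠ r1 := Finset.ne_of_mem_erase hr''
    have hr : r ∈ A := Finset.mem_of_mem_erase hr''
    have hf1 : f r1 ≤ f r := hr1m r hr
    have hf2 : f r2 ≤ f r := hr2m r hr''
    have hfr : ∀ b r', S.clean (.inr (b, r')) → C.c (.inr (b, r')) = .inr (false, r) →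
        f r ≤ C.ev (.inr (b, r')) := (hv r hr).2.2
    rcases hx : S.G (f r1) (.inr (false, r)) with _ | (_ | g)
    · exact absurd (G_none.1 hx) (nroot r1 hr1 r hr)
    · -- ordering gadget
      exfalso
      obtain ⟨t1, ht1⟩ := L5 (hv r1 hr1).1 (fM r1 hr1) (froot r1 hr1) (hblank r1 hr1 r hr) hx
      have u1 := vsw r1 hr1 r hr hrne1.symm t1 ht1
      rcases hy : S.G (f r2) (.inr (false, r)) with _ | (_ | g)
      · exact absurd (G_none.1 hy) (nroot r2 hr2 r hr)
      · obtain ⟨t2, ht2⟩ := L5 (hv r2 hr2).1 (fM r2 hr2) (froot r2 hr2) (hblank r2 hr2 r hr) hy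
        have u2 := vsw r2 hr2 r hr hrne2.symm t2 ht2
        have e := (hA r hr).2.u1 t1 t2 ht1.1 ht2.1 u1.1 u1.2 u2.1 u2.2
        subst e
        have := ht1.symm.eq_of_sw ht2.symm
        exact vne r1 hr1 r2 hr2 h21.symm (by simpa using this)
      · have hg : g ≠ S.sl r := by
          rintro rfl; exact nown r hr (f r2) hf2 hy
        obtain ⟨a, a1, a2, a3, a4⟩ := entry hf12 (fM r2 hr2) (by rw [hx]; simp) hy
        have u2 := entry_unc (C := C) hg (show a + 1 ≤ f r2 from a2) (fM r2 hr2) a3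
          (a4 (a+1) (by omega) a2) (froot r2 hr2) (cne r2 hr2 r hr hrne2.symm)
          (fun b r' e1 e2 => hf2.trans (hfr b r' e1 e2))
        have hM2 := fM r2 hr2
        have e := (hA r hr).2.u1 t1 a ht1.1 (by omega) u1.1 u1.2 u2.1 u2.2
        subst e
        have b1 : S.pos (t1+1) (.inr (v r1)) = .root := by rw [ht1.2.2.2.1, a3]
        have := contig (hv r1 hr1).1 a1 (Nat.le_succ t1) ht1.1 (froot r1 hr1) b1
        exact ht1.ne (root_uniq ht1.1.le this a3)
    · have hg : g ≠ S.sl r := by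
        rintro rfl; exact nown r hr (f r1) hf1 hx
      refine ⟨g, fun _ => ⟨hg, ?_⟩⟩
      have hM1 := fM r1 hr1
      have hM := fM r hr
      obtain ⟨a, a1, a2, a3, a4⟩ := entry (Nat.zero_le (f r1)) hM1 (by
        intro e
        have := G_pos e
        rw [H0_X] at this; omega) hx
      have u := entry_unc (C := C) hg (show a + 1 ≤ f r1 from a2) hM1 a3
          (a4 (a+1) (by omega) a2) (froot r1 hr1) (cne r1 hr1 r hr hrne1.symm)
          (fun b r' e1 e2 => hf1.trans (hfr b r' e1 e2))
      refine ⟨⟨a, a2, a3, a4 (a+1) (by omega) a2, u⟩, ?_⟩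
      intro t ht1
      induction t, ht1 using Nat.le_induction with
      | base => intro _; exact hx
      | succ t ht1 ih =>
        intro ht2
        rcases G_step (by omega) (ih (by omega)) with h' | h'
        · exact h'
        · exfalso
          have u' := exit_unc (C := C) hg (by omega) (ih (by omega)) h'
            (fun b r' e1 e2 => ht2.trans (hfr b r' e1 e2))
          have := (hA r hr).2.u1 a t (by omega) (by omega) u.1 u.2 u'.1 u'.2
          omega
  choose g hg using main
  obtain ⟨i, _, hi⟩ := Finset.exists_lt_card_fiber_of_mul_lt_card_of_maps_to
    (s := (A.erase r1).erase r2) (t := (Finset.univ : Finset (Fin m))) (f := g) (n := 2)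
    (fun a _ => Finset.mem_univ _) (by rw [hc2]; simp; omega)
  obtain ⟨ra, hra, hram⟩ := Finset.exists_min_image _ f (Finset.card_pos.1 (by omega :
    0 < (((A.erase r1).erase r2).filter fun x => g x = i).card))
  have hce : ((((A.erase r1).erase r2).filter fun x => g x = i).erase ra).card =
    (((A.erase r1).erase r2).filter fun x => g x = i).card - 1 := Finset.card_erase_of_mem hra
  obtain ⟨rb, hrb, rc, hrc, hbc⟩ := Finset.one_lt_card.1 (by omega :
    1 < ((((A.erase r1).erase r2).filter fun x => g x = i).erase ra).card)
  have hraB := (Finset.mem_filter.1 hra).1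
  have hraA : ra ∈ A := Finset.mem_of_mem_erase (Finset.mem_of_mem_erase hraB)
  have ha1 : ra ≠ r1 := Finset.ne_of_mem_erase (Finset.mem_of_mem_erase hraB)
  have hga := hg ra hraB
  rw [(Finset.mem_filter.1 hra).2] at hga
  have hfa : f r1 ≤ f ra := hr1m ra hraA
  have hsa : S.sl (v ra).2 = i := by
    have h1 := hga.2.2 (f ra) hfa le_rfl
    rcases (fpres ra hraA).2 with h' | h' <;> rw [h1] at h' <;> simp at h'
    exact h'.symm
  have both : ∀ r ∈ (((A.erase r1).erase r2).filter fun x => g x = i).erase ra,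
      S.pres (f ra) (v ra).2 (.inr (false, r)) ∧ ¬ S.swd (.inr (v ra)) (.inr (false, r)) := by
    intro r hr
    have hra' : r ≠ ra := Finset.ne_of_mem_erase hr
    have hr' := Finset.mem_of_mem_erase hr
    have hrB := (Finset.mem_filter.1 hr').1
    have hrA : r ∈ A := Finset.mem_of_mem_erase (Finset.mem_of_mem_erase hrB)
    have hgr := hg r hrB
    rw [(Finset.mem_filter.1 hr').2] at hgr
    refine ⟨⟨hblank ra hraA r hrA, Or.inr ?_⟩, ?_⟩
    · rw [hsa]; exact hgr.2.2 (f ra) hfa (hram r hr')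
    · rintro ⟨t, ht⟩
      have u := vsw ra hraA r hrA hra'.symm t ht
      obtain ⟨a, a1, a2, a3, a4, a5⟩ := hgr.2.1
      have hM := fM r1 hr1
      have e := (hA r hrA).2.u1 t a ht.1 (by omega) u.1 u.2 a4 a5
      subst e
      have b1 : S.pos (t+1) (.inr (v ra)) = .root := by rw [ht.2.2.2.1, a2]
      have := contig (hv ra hraA).1 (show t+1 ≤ f r1 from a1) hfa (fM ra hraA) b1 (froot ra hraA)
      have := root_uniq hM this (froot r1 hr1)
      exact vne ra hraA r1 hr1 ha1 (by simpa using this)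
  have pb := both rb hrb
  have pc := both rc hrc
  have := exempt (hv ra hraA).1 (fM ra hraA) (froot ra hraA) pb.1 pb.2 pc.1 pc.2
  exact hbc (by simpa using this)

open Classical in
theorem V_X (C : Cred S) (seg : Fin N → ℕ) (hmono : Monotone seg) (L : ℕ)
    (hL : ∀ r, seg r < L)
    (hsl : ∀ r r', seg r = seg r' → S.sl r = S.sl r') :
    (Finset.univ.filter fun r : Fin N => ¬ S.clean (.inr (false, r)) ∧
      ((S.mvs (.inr (false, r))).card : ℤ) ≤ S.D (.inr (false, r)) +
      (C.crs (.inr (false, r))).card + 1).card ≤ L * (2 * m + 2) := by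
  have h := Finset.card_le_mul_card_image_of_maps_to
    (s := Finset.univ.filter fun r : Fin N => ¬ S.clean (.inr (false, r)) ∧
      ((S.mvs (.inr (false, r))).card : ℤ) ≤ S.D (.inr (false, r)) +
      (C.crs (.inr (false, r))).card + 1) (t := Finset.range L) (f := seg)
    (fun r _ => Finset.mem_range.2 (hL r)) (2 * m + 2) (by
      intro l _
      refine V_seg C seg hmono hsl l _ ?_
      intro r hr
      simp only [Finset.mem_filter, Finset.mem_univ, true_and] at hr
      exact ⟨hr.2, Vz_of C hr.1.1 hr.1.2⟩)
  rw [Finset.card_range] at h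
  rw [mul_comm]; exact h

open Classical in
/-- the deficient tokens -/
noncomputable def Vset (C : Cred S) : Finset (Bool × Fin N) :=
  Finset.univ.filter fun z => ¬ S.clean (.inr z) ∧
      ((S.mvs (.inr z)).card : ℤ) ≤ S.D (.inr z) + (C.crs (.inr z)).card + 1

theorem V_card (C : Cred S) (seg : Fin N → ℕ) (hmono : Monotone seg) (L : ℕ)
    (hL : ∀ r, seg r < L)
    (hsl : ∀ r r', seg r = seg r' → S.sl r = S.sl r') :
    (Vset C).card ≤ 2 * (L * (2 * m + 2)) := by
  classical
  have h1 := V_X C seg hmono L hL hsl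
  have h2 := V_X C.rev (fun r => L - 1 - seg r.rev) (by
      intro a b hab
      have := hmono (Fin.rev_le_rev.2 hab)
      show L - 1 - seg a.rev ≤ L - 1 - seg b.rev
      omega) L
    (by intro r; have := hL r.rev; show L - 1 - seg r.rev < L; omega)
    (by
      intro r r' h
      have a := hL r.rev; have b := hL r'.rev
      simp only [rev_sl]
      refine hsl _ _ ?_
      have h : L - 1 - seg r.rev = L - 1 - seg r'.rev := h
      omega)
  have : Vset C ⊆ ((Finset.univ.filter fun r : Fin N => ¬ S.clean (.inr (false, r)) ∧
      ((S.mvs (.inr (false, r))).card : ℤ) ≤ S.D (.inr (false, r)) +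
      (C.crs (.inr (false, r))).card + 1).image fun r => (false, r)) ∪
      ((Finset.univ.filter fun r : Fin N => ¬ S.rev.clean (.inr (false, r)) ∧
      ((S.rev.mvs (.inr (false, r))).card : ℤ) ≤ S.rev.D (.inr (false, r)) +
      (C.rev.crs (.inr (false, r))).card + 1).image fun r => (true, r.rev)) := by
    rintro ⟨b, r⟩ hz
    simp only [Vset, Finset.mem_filter, Finset.mem_univ, true_and] at hz
    simp only [Finset.mem_union, Finset.mem_image, Finset.mem_filter, Finset.mem_univ, true_and]
    cases b
    · exact Or.inl ⟨r, hz, rfl⟩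
    · refine Or.inr ⟨r.rev, ?_, by simp⟩
      rw [clean_rev, card_mvs_rev, D_rev, Cred.card_crs_rev]
      simpa using hz
  have h3 := Finset.card_le_card this
  have h4 := Finset.card_union_le ((Finset.univ.filter fun r : Fin N => ¬ S.clean (.inr (false, r)) ∧
      ((S.mvs (.inr (false, r))).card : ℤ) ≤ S.D (.inr (false, r)) +
      (C.crs (.inr (false, r))).card + 1).image fun r => (false, r))
      ((Finset.univ.filter fun r : Fin N => ¬ S.rev.clean (.inr (false, r)) ∧
      ((S.rev.mvs (.inr (false, r))).card : ℤ) ≤ S.rev.D (.inr (false, r)) +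
      (C.rev.crs (.inr (false, r))).card + 1).image fun r => (true, r.rev))
  have h5 := Finset.card_image_le (s := Finset.univ.filter fun r : Fin N => ¬ S.clean (.inr (false, r)) ∧
      ((S.mvs (.inr (false, r))).card : ℤ) ≤ S.D (.inr (false, r)) +
      (C.crs (.inr (false, r))).card + 1) (f := fun r => (false, r))
  have h6 := Finset.card_image_le (s := Finset.univ.filter fun r : Fin N => ¬ S.rev.clean (.inr (false, r)) ∧
      ((S.rev.mvs (.inr (false, r))).card : ℤ) ≤ S.rev.D (.inr (false, r)) +
      (C.rev.crs (.inr (false, r))).card + 1) (f := fun r => (true, r.rev))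
  omega

end Sys
end UnweightedTS

namespace UnweightedTS
namespace Sys
variable {m N : ℕ} {S : Sys m N}

theorem sum_mvs (S : Sys m N) : ∑ z, (S.mvs z).card = 2 * S.M := by
  classical
  have h1 : ∀ z, (S.mvs z).card = ∑ t ∈ Finset.range S.M, if S.mv z t then 1 else 0 := by
    intro z
    unfold mvs
    rw [Finset.card_filter]
  rw [Finset.sum_congr rfl (fun z _ => h1 z), Finset.sum_comm]
  have h2 : ∀ t ∈ Finset.range S.M, (∑ z, if S.mv z t then 1 else 0) = 2 := by
    intro t ht
    have ht := Finset.mem_range.1 ht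
    rw [← Finset.card_filter]
    obtain ⟨p, q, hpq⟩ := S.step t ht
    have hs : S.sw t p q := ⟨ht, hpq⟩
    have : (Finset.univ.filter fun z => S.mv z t) = {p, q} := by
      ext z
      simp only [Finset.mem_filter, Finset.mem_univ, true_and, Finset.mem_insert,
        Finset.mem_singleton]
      constructor
      · intro h
        by_contra hc
        push Not at hc
        exact h (hpq.2.2.2.2 z hc.1 hc.2)
      · rintro (rfl | rfl)
        · exact hs.moves
        · exact hs.symm.moves
    rw [this, Finset.card_pair hs.ne]
  rw [Finset.sum_congr rfl h2]
  simp [mul_comm]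

open Classical in
/-- unclean nonitem tokens -/
noncomputable def Uset (S : Sys m N) : Finset (Bool × Fin N) :=
  Finset.univ.filter fun z => ¬ S.clean (.inr z)

theorem sum_crs (C : Cred S) :
    ∑ z, (C.crs z).card + (Uset S).card = 2 * N := by
  classical
  have h1 : ∑ z, (C.crs z).card =
      (Finset.univ.filter fun z : Bool × Fin N => S.clean (.inr z)).card := by
    rw [← Finset.card_sigma]
    symm
    refine Finset.card_bij (fun v hv => ⟨C.c (.inr v),
      (C.sd v.1 v.2 (Finset.mem_filter.1 hv).2).choose⟩) ?_ ?_ ?_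
    · intro v hv
      have h := (Finset.mem_filter.1 hv).2
      have hs := (C.sd v.1 v.2 h).choose_spec
      simp only [Finset.mem_sigma, Finset.mem_univ, true_and, Cred.crs, Finset.mem_filter,
        Finset.mem_range]
      exact ⟨hs.1, v.1, v.2, h, rfl, hs⟩
    · intro v hv w hw e
      have h := (Finset.mem_filter.1 hv).2
      have hs := (C.sd v.1 v.2 h).choose_spec
      have h' := (Finset.mem_filter.1 hw).2
      have hs' := (C.sd w.1 w.2 h').choose_spec
      have e1 := congrArg Sigma.fst e
      have e2 : (C.sd v.1 v.2 h).choose = (C.sd w.1 w.2 h').choose := congrArg Sigma.snd e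
      simp only at e1
      rw [e2] at hs
      have hs2 : S.sw (C.sd w.1 w.2 h').choose (.inr v) (C.c (.inr v)) := hs
      have hs2' : S.sw (C.sd w.1 w.2 h').choose (.inr w) (C.c (.inr w)) := hs'
      rw [e1] at hs2
      have := hs2.symm.eq_of_sw hs2'.symm
      simpa using this
    · rintro ⟨z, t⟩ hzt
      simp only [Finset.mem_sigma, Finset.mem_univ, true_and, Cred.crs, Finset.mem_filter,
        Finset.mem_range] at hzt
      obtain ⟨ht, b, r, h1, h2, h3⟩ := hzt
      refine ⟨(b, r), by simp [h1], ?_⟩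
      subst h2
      have := (C.sd b r h1).choose_spec.uniq h3
      simp [this]
  rw [h1, Uset, Finset.card_filter_add_card_filter_not]
  simp

/-- typical tokens -/
def typ (C : Cred S) (v : Bool × Fin N) : Prop :=
  S.clean (.inr v) ∧ ∀ z, S.blank v.2 z → S.swd (.inr v) z → z = C.c (.inr v)

/-- uncredited extra moves -/
noncomputable def unx (C : Cred S) (z : Tk m N) : Finset ℕ := S.xms z \ C.crs z

theorem card_unx (C : Cred S) (z : Tk m N) :
    (unx C z).card + (C.crs z).card = (S.xms z).card :=
  Finset.card_sdiff_add_card_eq_card (C.crs_sub z)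

theorem item_xms (o : Option (Fin m)) : S.xms (.inl o) = S.mvs (.inl o) := by
  unfold xms mvs; rfl

theorem totals (C : Cred S) (n Vb : ℕ) (hV : (Vset C).card ≤ Vb)
    (hM : (2 * S.M : ℤ) ≤ ∑ z : Bool × Fin N, S.D (.inr z) + 2 * N + 2 * n) :
    (Uset S).card ≤ 2 * Vb + 2 * n ∧ ∑ z, (unx C z).card ≤ 2 * Vb + 4 * n := by
  classical
  have a1 := sum_mvs S
  have a2 := sum_crs C
  rw [Fintype.sum_sum_type] at a1 a2
  -- contribution of nonitems
  have b1 : ∀ z : Bool × Fin N, S.D (.inr z) + (C.crs (.inr z)).card +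
      (2 * (if S.clean (.inr z) then 0 else 1) - 2 * (if z ∈ Vset C then 1 else 0) : ℤ) ≤
        (S.mvs (.inr z)).card := by
    rintro ⟨b, r⟩
    have la := LA (S := S) b r
    have lc := card_unx C (.inr (b, r))
    by_cases h : S.clean (.inr (b, r))
    · have hv : (b, r) ∉ Vset C := by simp [Vset, h]
      simp only [h, hv, if_true, if_false]
      omega
    · by_cases hv : (b, r) ∈ Vset C
      · simp only [h, hv, if_true, if_false]
        omega
      · simp only [h, hv, if_true, if_false]
        have : ¬ ((S.mvs (.inr (b, r))).card : ℤ) ≤ S.D (.inr (b, r)) + (C.crs (.inr (b, r))).card + 1 := by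
          intro hh; apply hv; simp [Vset, h]; exact hh
        omega
  have b2 := Finset.sum_le_sum (fun z (_ : z ∈ Finset.univ) => b1 z)
  have b3 : ∀ z : Bool × Fin N, S.D (.inr z) + (C.crs (.inr z)).card + (unx C (.inr z)).card ≤
        ((S.mvs (.inr z)).card : ℤ) := by
    rintro ⟨b, r⟩
    have la := LA (S := S) b r
    have lc := card_unx C (.inr (b, r))
    omega
  have b4 := Finset.sum_le_sum (fun z (_ : z ∈ Finset.univ) => b3 z)
  have b5 : ∀ o : Option (Fin m), (unx C (.inl o)).card + (C.crs (.inl o)).card = (S.mvs (.inl o)).card := by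
    intro o; rw [← item_xms]; exact card_unx C _
  have b6 := Finset.sum_congr rfl (fun z (_ : z ∈ (Finset.univ : Finset (Option (Fin m)))) => b5 z)
  rw [Finset.sum_add_distrib] at b6
  rw [Finset.sum_add_distrib, Finset.sum_add_distrib, Finset.sum_sub_distrib, ← Finset.mul_sum,
    ← Finset.mul_sum] at b2
  rw [Finset.sum_add_distrib, Finset.sum_add_distrib] at b4
  have c1 : (∑ z : Bool × Fin N, (if S.clean (.inr z) then 0 else 1) : ℤ) = (Uset S).card := by
    rw [Uset, Finset.card_filter]
    push_cast
    refine Finset.sum_congr rfl (fun z _ => ?_)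
    split_ifs <;> simp_all
  have c2 : (∑ z : Bool × Fin N, (if z ∈ Vset C then 1 else 0) : ℤ) = (Vset C).card := by
    simp
  rw [c1, c2] at b2
  rw [Fintype.sum_sum_type]
  zify at a1 a2 b6
  have hV' : ((Vset C).card : ℤ) ≤ Vb := by exact_mod_cast hV
  have hu0 : (0:ℤ) ≤ ∑ o : Option (Fin m), ((unx C (.inl o)).card : ℤ) :=
    Finset.sum_nonneg (fun _ _ => by positivity)
  have f1 : ((Uset S).card : ℤ) ≤ 2 * Vb + 2 * n := by linarith
  refine ⟨by exact_mod_cast f1, ?_⟩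
  zify
  linarith

theorem atyp (C : Cred S) (U E : ℕ) (hU : (Uset S).card ≤ U) (hE : ∑ z, (unx C z).card ≤ E)
    (A : Finset (Bool × Fin N)) (hA : ∀ v ∈ A, ¬ typ C v) : A.card ≤ U + E := by
  classical
  have key : (A \ Uset S).card ≤ ∑ z, (unx C z).card := by
    rw [← Finset.card_sigma]
    have hex : ∀ v : Bool × Fin N, ∃ w : (Σ _ : Tk m N, ℕ), v ∈ A \ Uset S →
        w ∈ (Finset.univ.sigma fun z => unx C z) ∧ S.sw w.2 (.inr v) w.1 := by
      intro v
      by_cases hv : v ∈ A \ Uset S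
      swap
      · exact ⟨⟨.inl none, 0⟩, fun h => absurd h hv⟩
      rw [Finset.mem_sdiff] at hv
      have hcl : S.clean (.inr v) := by
        by_contra h; exact hv.2 (by simp [Uset, h])
      have h1 := hA v hv.1
      simp only [typ, not_and] at h1
      have h2 := h1 hcl
      push Not at h2
      obtain ⟨z, z1, ⟨t, ht⟩, z3⟩ := h2
      have := C.unc (b := v.1) (r := v.2) hcl z1 (Ne.symm z3) ht
      refine ⟨⟨z, t⟩, fun _ => ⟨?_, ht⟩⟩
      simp only [Finset.mem_sigma, Finset.mem_univ, true_and, unx, Finset.mem_sdiff, xms,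
        Cred.crs, Finset.mem_filter, Finset.mem_range]
      exact ⟨⟨ht.1, this.1⟩, fun h => this.2 h.2⟩
    choose w hw using hex
    refine Finset.card_le_card_of_injOn w (fun v hv => (hw v hv).1) ?_
    intro a ha b hb e
    have h1 := (hw a ha).2
    have h2 := (hw b hb).2
    rw [e] at h1
    have := h1.symm.eq_of_sw h2.symm
    simpa using this
  have : A ⊆ (A \ Uset S) ∪ Uset S := by
    intro x hx; by_cases h : x ∈ Uset S <;> simp [hx, h]
  have h1 := Finset.card_le_card this
  have h2 := Finset.card_union_le (A \ Uset S) (Uset S)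
  omega

/-- consequences of being typical -/
theorem typ_facts {C : Cred S} {b : Bool} {r : Fin N} (h : typ C (b, r)) :
    ∃ e, S.pres (C.ev (.inr (b, r))) r e ∧ e ≠ C.c (.inr (b, r)) ∧ ¬ S.swd (.inr (b, r)) e ∧
      S.G (C.ev (.inr (b, r))) e = some (some (S.sl r)) ∧
      (∀ z, S.pres (C.ev (.inr (b, r))) r z → z = C.c (.inr (b, r)) ∨ z = e) ∧
      ∀ z, ¬ S.blank r z → z ≠ .inr (b, r) → (S.G (C.ev (.inr (b, r))) z = some none ∨
        S.G (C.ev (.inr (b, r))) z = some (some (S.sl r))) := by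
  classical
  have hc := h.1
  have hM := C.evM _ _ hc
  have hr := C.evr _ _ hc
  have pc := pres_count (S := S) hM hr
  obtain ⟨e, he, hne⟩ := Finset.exists_mem_ne (by omega : 1 < (Finset.univ.filter fun z => S.pres (C.ev (.inr (b, r))) r z).card) (C.c (.inr (b, r)))
  have he : S.pres (C.ev (.inr (b, r))) r e := by simpa using he
  have hns : ∀ z, S.pres (C.ev (.inr (b, r))) r z → z ≠ C.c (.inr (b, r)) →
      ¬ S.swd (.inr (b, r)) z := fun z hz hn hs => hn (h.2 z hz.1 hs)
  have hall : ∀ z, S.pres (C.ev (.inr (b, r))) r z → z = C.c (.inr (b, r)) ∨ z = e := by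
    intro z hz
    by_cases hzc : z = C.c (.inr (b, r))
    · exact Or.inl hzc
    · exact Or.inr (exempt hc hM hr hz (hns z hz hzc) he (hns e he hne))
  refine ⟨e, he, hne, hns e he hne, ?_, hall, pc.2 ?_⟩
  · rcases he.2 with h' | h'
    · exact absurd (L5 hc hM hr he.1 h') (hns e he hne)
    · exact h'
  · have : (Finset.univ.filter fun z => S.pres (C.ev (.inr (b, r))) r z) ⊆
        {C.c (.inr (b, r)), e} := by
      intro z hz
      have := hall z (by simpa using hz)
      simpa using this
    exact (Finset.card_le_card this).trans Finset.card_le_two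

theorem ascent (C : Cred S) (E : ℕ) (hE : ∑ z, (unx C z).card ≤ E) {z : Tk m N} {i : Fin m}
    {η τ : ℕ} (hη : η ≤ τ) (hτ : τ < S.M) (h1 : S.pos η z = .nook i)
    (h2 : ∀ t, η ≤ t → t ≤ τ → S.G t z = some (some i)) (h3 : S.pos (τ+1) z = .root)
    (hz : ∀ b r, z = .inr (b, r) → i ≠ S.sl r) :
    ∃ A : Finset (Fin N), S.k + 1 ≤ A.card + E ∧ ∀ r ∈ A, S.clean (.inr (false, r)) ∧ S.sl r = i ∧
      C.c (.inr (false, r)) = z ∧ ∃ t, η ≤ t ∧ t ≤ τ ∧ S.sw t (.inr (false, r)) z := by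
  classical
  set P : ℕ → Prop := fun t => S.H (t+1) z < S.H t z with hP
  have t1 := tv (fun t => - S.H t z) P (show η ≤ τ+1 by omega) (fun t _ h => by
    have := step_H (S := S) (τ := t) (by omega) z
    by_cases hp : P t
    · rw [if_pos hp]; omega
    · rw [if_neg hp]; simp only [hP] at hp; omega)
  have e1 : S.H η z = S.k + 1 := by simp [H, h1, ht]
  have e2 : S.H (τ+1) z = 0 := H_zero.2 h3
  simp only [e1, e2] at t1
  set Q := (Finset.Ico η (τ+1)).filter P with hQ
  have hQx : Q ⊆ S.xms z := by
    intro t ht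
    simp only [hQ, Finset.mem_filter, Finset.mem_Ico] at ht
    simp only [xms, Finset.mem_filter, Finset.mem_range]
    refine ⟨by omega, ?_⟩
    have hmv : S.mv z t := (mv_H (by omega)).2 (by have := ht.2; simp only [hP] at this; omega)
    rcases z with o | ⟨b, r⟩
    · exact hmv
    · refine ⟨hmv, Or.inl ⟨i, ?_, hz b r rfl⟩⟩
      have := h2 t ht.1.1 (by omega)
      simp only [G] at this
      simp [egt, eg, this]
  have hu : (unx C z).card ≤ E :=
    (Finset.single_le_sum (fun _ _ => Nat.zero_le _) (Finset.mem_univ z)).trans hE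
  have hQc : Q.card ≤ (Q ∩ C.crs z).card + E := by
    have : Q ⊆ (Q ∩ C.crs z) ∪ unx C z := by
      intro t ht
      by_cases h : t ∈ C.crs z
      · simp [ht, h]
      · simp only [Finset.mem_union, unx, Finset.mem_sdiff]
        exact Or.inr ⟨hQx ht, h⟩
    have a := Finset.card_le_card this
    have b := Finset.card_union_le (Q ∩ C.crs z) (unx C z)
    omega
  have hex : ∀ t ∈ Q ∩ C.crs z, ∃ r : Fin N, S.clean (.inr (false, r)) ∧ S.sl r = i ∧
      C.c (.inr (false, r)) = z ∧ S.sw t (.inr (false, r)) z ∧ η ≤ t ∧ t ≤ τ := by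
    intro t ht
    simp only [Finset.mem_inter, hQ, Cred.crs, Finset.mem_filter, Finset.mem_Ico] at ht
    obtain ⟨⟨⟨g1, g2⟩, g3⟩, g4, b, r, c1, c2, c3⟩ := ht
    have hh := c3.ht
    simp only [hP] at g3
    cases b
    · refine ⟨r, c1, ?_, c2, c3, g1, by omega⟩
      have o := clean_onsp c1 (show t+1 ≤ S.M by omega)
      have hp : S.pos (t+1) (.inr (false, r)) = S.pos t z := c3.2.2.2.1
      have hg := h2 t g1 (by omega)
      simp only [G] at hg
      rw [hp] at o
      rcases o with o | ⟨d, o⟩ | ⟨d, o⟩ <;> rw [o] at hg <;> simp [gd] at hg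
      exact hg
    · exfalso
      have := c1 t (by omega)
      omega
  rcases (Q ∩ C.crs z).eq_empty_or_nonempty with hemp | ⟨t0, ht0⟩
  · refine ⟨∅, ?_, by simp⟩
    rw [hemp] at hQc
    simp only [Finset.card_empty] at hQc ⊢
    omega
  haveI : Nonempty (Fin N) := ⟨(hex t0 ht0).choose⟩
  choose! f hf using hex
  refine ⟨(Q ∩ C.crs z).image f, ?_, ?_⟩
  · rw [Finset.card_image_of_injOn]
    · omega
    · intro a ha b hb e
      have x1 := (hf a ha).2.2.2.1
      have x2 := (hf b hb).2.2.2.1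
      rw [e] at x1
      exact x1.uniq x2
  · intro r hr
    obtain ⟨t, ht, rfl⟩ := Finset.mem_image.1 hr
    have := hf t ht
    exact ⟨this.1, this.2.1, this.2.2.1, t, this.2.2.2.2.1, this.2.2.2.2.2, this.2.2.2.1⟩

end Sys
end UnweightedTS

namespace UnweightedTS
namespace Sys
variable {m N : ℕ} {S : Sys m N}

/-- block structure of the ranks, and error parameters -/
structure Par (S : Sys m N) where
  C : Cred S
  L : List (Fin m)
  k' : ℕ
  E : ℕ
  hN : N = L.length * (S.k + m * k')
  F1 : ∀ j < L.length, ∀ i, (Finset.univ.filter fun ρ : Fin N => ρ.val / (S.k + m * k') = j ∧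
    S.k ≤ ρ.val % (S.k + m * k') ∧ S.sl ρ = i).card = k'
  F2 : ∀ ρ : Fin N, ρ.val % (S.k + m * k') < S.k → L[ρ.val / (S.k + m * k')]? = some (S.sl ρ)
  hE : ∑ z, (unx C z).card ≤ E
  hU : (Uset S).card ≤ E
  hk' : 2 * E < k'
  hbig : L.length * (m * k' + (3 * E + L.length * k' + L.length * (E + k'))) +
    (3 * E + L.length * k' + L.length * (E + k')) < S.k + 1

def Par.B (P : Par S) : ℕ := S.k + m * P.k'
def Par.E3 (P : Par S) : ℕ := 3 * P.E + P.L.length * P.k' + P.L.length * (P.E + P.k')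

theorem Par.B_pos (P : Par S) : 0 < P.B := by have := S.hk; unfold Par.B; omega

theorem Par.div_lt (P : Par S) (u : Fin N) : u.val / P.B < P.L.length := by
  rw [Nat.div_lt_iff_lt_mul P.B_pos]
  have := P.hN
  have := u.2
  unfold Par.B; omega

theorem item_or (z : Tk m N) : (∃ o, z = .inl o) ∨ ∃ b r, z = .inr (b, r) := by
  rcases z with o | ⟨b, r⟩
  · exact Or.inl ⟨o, rfl⟩
  · exact Or.inr ⟨b, r, rfl⟩

/-- ordering of event times -/
theorem ev_lt (C : Cred S) {u u' : Fin N} (h : S.clean (.inr (false, u)))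
    (h' : S.clean (.inr (false, u'))) (hu : u < u') :
    C.ev (.inr (false, u)) < C.ev (.inr (false, u')) := by
  by_contra hh
  push Not at hh
  have a := L4X h hu (C.evM _ _ h) (le_of_eq (H_zero.2 (C.evr _ _ h)))
  rw [H_zero.2 (C.evr _ _ h)] at a
  have b := mono_X h' hh (C.evM _ _ h)
  rw [H_zero.2 (C.evr _ _ h')] at b
  omega

/-- a token leaving a gadget -/
theorem exit_ex {z : Tk m N} {i : Fin m} {a b : ℕ} (hab : a ≤ b) (hb : b ≤ S.M)
    (h1 : S.G a z = some (some i)) (h2 : S.G b z ≠ some (some i)) :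
    ∃ τ, a ≤ τ ∧ τ < b ∧ (∀ t, a ≤ t → t ≤ τ → S.G t z = some (some i)) ∧
      S.pos (τ+1) z = .root := by
  classical
  have hex : ∃ t, a ≤ t ∧ S.G t z ≠ some (some i) := ⟨b, hab, h2⟩
  have hs := Nat.find_spec hex
  have hle : Nat.find hex ≤ b := Nat.find_min' hex ⟨hab, h2⟩
  have hlt : ∀ t, a ≤ t → t < Nat.find hex → S.G t z = some (some i) := by
    intro t ht h
    have := Nat.find_min hex h
    push Not at this
    exact this ht
  have hne : Nat.find hex ≠ a := by
    intro h
    rw [h] at hs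
    exact hs.2 h1
  refine ⟨Nat.find hex - 1, by omega, by omega, fun t ht h => hlt t ht (by omega), ?_⟩
  have e : Nat.find hex - 1 + 1 = Nat.find hex := by omega
  have g := G_step (S := S) (t := Nat.find hex - 1) (by omega)
    (hlt _ (by omega) (by omega))
  rw [e] at g ⊢
  rcases g with g | g
  · exact absurd g hs.2
  · exact g

/-- a clean `X` swapping with `z` inside its gadget -/
theorem sw_RT {u : Fin N} (h : S.clean (.inr (false, u))) {z : Tk m N} {t : ℕ}
    (hs : S.sw t (.inr (false, u)) z) (hg : S.G t z = some (some (S.sl u))) :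
    S.RT (S.sl u) t (.inr (false, u)) z ∧ 0 ≤ S.H t (.inr (false, u)) := by
  have a := hs.ht
  have b := h t hs.1
  have c := G_pos hg
  have : S.H t (.inr (false, u)) < S.H t z := by omega
  exact ⟨⟨hg, this⟩, by omega⟩

theorem RT_back (C : Cred S) {u : Fin N} (h : S.clean (.inr (false, u))) {z : Tk m N} {t : ℕ}
    (hs : S.sw t (.inr (false, u)) z) (hg : S.G t z = some (some (S.sl u))) :
    C.ev (.inr (false, u)) ≤ t ∧ ∀ t', 0 ≤ S.H t' (.inr (false, u)) → t' ≤ t →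
      S.RT (S.sl u) t' (.inr (false, u)) z := by
  obtain ⟨r1, r2⟩ := sw_RT h hs hg
  constructor
  · by_contra hh
    push Not at hh
    have a := mono_X h (show t + 1 ≤ _ from hh) (C.evM _ _ h)
    rw [H_zero.2 (C.evr _ _ h)] at a
    have b := hs.ht
    have c := h t hs.1
    have : S.H t (.inr (false, u)) < S.H t z := r1.2
    omega
  · intro t' h0 ht
    exact RTbwd h h0 hs.ne r1 ht hs.1.le (fun τ _ h2 h3 => by
      have := h3.uniq hs
      omega)

/-- after crossing, only higher ranks pass the exempt token -/
theorem rank_gt {u u'' : Fin N} (h : S.clean (.inr (false, u))) (h'' : S.clean (.inr (false, u'')))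
    (hs : S.sl u'' = S.sl u) {z : Tk m N} (hn : ¬ S.swd (.inr (false, u)) z)
    (hne : (.inr (false, u)) ≠ z) {θ t : ℕ}
    (hc : S.Cr u z θ) (ht : θ + 1 ≤ t) (hsw : S.sw t (.inr (false, u'')) z)
    (hg : S.G t z = some (some (S.sl u))) : u < u'' := by
  by_contra hh
  have hlt : u'' < u := by
    rcases lt_or_eq_of_le (not_lt.1 hh) with q | q
    · exact q
    · subst q; exact absurd ⟨t, hsw⟩ hn
  have a := lineX h'' h hs hlt hsw.1.le
  obtain ⟨r1, -⟩ := sw_RT h'' hsw (by rw [hs]; exact hg)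
  have r1' : S.H t (.inr (false, u'')) < S.H t z := r1.2
  have r2 : S.RT (S.sl u) t (.inr (false, u)) z := ⟨hg, show S.H _ _ < S.H _ _ by omega⟩
  have e := Cr_H hc
  have r3 := RTbwd h (τ0 := θ+1) (by omega) hne r2 ht hsw.1.le
    (fun τ _ _ h3 => hn ⟨τ, h3⟩)
  have r4 : S.H (θ+1) (.inr (false, u)) < S.H (θ+1) z := r3.2
  have r5 : S.H (θ+1) z = S.k + 1 := by
    have : S.pos (θ+1) z = .nook (S.sl u) := by
      simp only [Cr] at hc
      tauto
    simp [H, this, ht]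
    rfl
  omega

theorem mem_typ (P : Par S) (A : Finset (Fin N)) (b : Bool) (h : 2 * P.E < A.card) :
    ∃ r ∈ A, typ P.C (b, r) := by
  by_contra hh
  push Not at hh
  have := atyp P.C P.E P.E P.hU P.hE (A.map ⟨fun r => (b, r), fun x y e => by simpa using e⟩)
    (by
      intro v hv
      simp only [Finset.mem_map, Function.Embedding.coeFn_mk] at hv
      obtain ⟨r, hr, rfl⟩ := hv
      exact hh r hr)
  rw [Finset.card_map] at this
  omega

theorem T3 (P : Par S) {u : Fin N} (hu : typ P.C (false, u)) (ha : u.val % P.B < S.k)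
    {e : Tk m N} (hp : S.pres (P.C.ev (.inr (false, u))) u e)
    (hsd : ¬ S.swd (.inr (false, u)) e)
    (hg : S.G (P.C.ev (.inr (false, u))) e = some (some (S.sl u)))
    (hni : ∀ o, e ≠ .inl o) : u.val % P.B < P.E + P.k' := by
  classical
  have hcl : S.clean (.inr (false, u)) := hu.1
  have hevM := P.C.evM _ _ hcl
  have hne : (.inr (false, u)) ≠ e := blank_ne hp.1
  obtain ⟨b, r', rfl⟩ : ∃ b r, e = .inr (b, r) := by
    rcases item_or e with ⟨o, h⟩ | h
    · exact absurd h (hni o)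
    · exact h
  have hsl : S.sl r' ≠ S.sl u := by
    have := hp.1
    cases b
    · exact this.2
    · exact this.2
  obtain ⟨θ, hθ1, hθ2, hc, hRT⟩ : ∃ θ, P.C.ev (.inr (false, u)) ≤ θ ∧ θ < S.M ∧
      S.Cr u (.inr (b, r')) θ ∧
      ∀ τ, P.C.ev (.inr (false, u)) ≤ τ → τ ≤ θ → S.RT (S.sl u) τ (.inr (false, u)) (.inr (b, r')) := by
    rcases unsw_X hcl hevM (P.C.evr _ _ hcl) hp hsd with h | h
    · exact h
    · have := RTM_item hp.1 (h S.M hevM le_rfl)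
      obtain ⟨o, ho⟩ := this.2.2
      simp at ho
  have hnook : S.pos (θ+1) (.inr (b, r')) = .nook (S.sl u) := by
    have := hc
    simp only [Cr] at this
    tauto
  have hgM : S.G S.M (.inr (b, r')) ≠ some (some (S.sl u)) := by
    cases b
    · rw [GM_X]; simpa using hsl
    · simp [G, S.SM, gd]
  obtain ⟨τ, t1, t2, t3, t4⟩ := exit_ex (show θ + 1 ≤ S.M from hθ2) le_rfl
    (show S.G (θ+1) (.inr (b, r')) = some (some (S.sl u)) by simp [G, hnook, gd]) hgM
  obtain ⟨A, hA, hA2⟩ := ascent P.C P.E P.hE t1 t2 hnook t3 t4 (by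
    intro b1 r1 h
    simp only [Sum.inr.injEq, Prod.mk.injEq] at h
    rw [← h.2]; exact hsl.symm)
  -- the witness v
  obtain ⟨v, hv, hvt⟩ := mem_typ P _ false
    (by rw [P.F1 (u.val / P.B) (P.div_lt u) (S.sl r')]; exact P.hk')
  simp only [Finset.mem_filter, Finset.mem_univ, true_and] at hv
  change v.val / P.B = u.val / P.B ∧ S.k ≤ v.val % P.B ∧ S.sl v = S.sl r' at hv
  have hB := P.B_pos
  have du := Nat.div_add_mod u.val P.B
  have dv := Nat.div_add_mod v.val P.B
  rw [hv.1] at dv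
  have huv : u < v := by rw [Fin.lt_def]; omega
  have hvcl : S.clean (.inr (false, v)) := hvt.1
  have hevv : (.inr (b, r') : Tk m N) ≠ .inr (false, v) := by
    intro h
    simp only [Sum.inr.injEq, Prod.mk.injEq] at h
    obtain ⟨rfl, rfl⟩ := h
    have := hp.1.1
    exact lt_asymm this huv
  have hgv : S.G (P.C.ev (.inr (false, v))) (.inr (b, r')) ≠ some (some (S.sl u)) := by
    obtain ⟨-, -, -, -, -, -, h7⟩ := typ_facts hvt
    rcases h7 (.inr (b, r')) (by
      intro hb
      cases b
      · exact hb.2 hv.2.2.symm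
      · exact hb.2 hv.2.2.symm) hevv with h | h
    · rw [h]; simp
    · rw [h, hv.2.2]; simpa using hsl
  have hall : ∀ t, P.C.ev (.inr (false, u)) ≤ t → t ≤ τ →
      S.G t (.inr (b, r')) = some (some (S.sl u)) := by
    intro t h1 h2
    by_cases h3 : t ≤ θ
    · exact (hRT t h1 h3).1
    · exact t3 t (by omega) h2
  have hsub : A ⊆ (Finset.univ.filter fun ρ : Fin N => u < ρ ∧ ρ < v ∧ S.sl ρ = S.sl u) := by
    intro w hw
    obtain ⟨w1, w2, w3, t, w4, w5, w6⟩ := hA2 w hw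
    simp only [Finset.mem_filter, Finset.mem_univ, true_and]
    have hwg := t3 t w4 w5
    have hgt := rank_gt hcl w1 w2 hsd hne hc w4 w6 hwg
    refine ⟨hgt, ?_, w2⟩
    by_contra hwv
    have hvw : v < w := by
      rcases lt_or_eq_of_le (not_lt.1 hwv) with q | q
      · exact q
      · subst q; exact absurd (hv.2.2.symm.trans w2) hsl
    have a1 := ev_lt P.C hcl hvcl huv
    have a2 := ev_lt P.C hvcl w1 hvw
    have a3 := (RT_back P.C w1 w6 (by rw [w2]; exact hwg)).1
    exact hgv (hall _ a1.le (by omega))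
  have hsub2 : (Finset.univ.filter fun ρ : Fin N => u < ρ ∧ ρ < v ∧ S.sl ρ = S.sl u) ⊆
      (Finset.univ.filter fun ρ : Fin N => u < ρ ∧ ρ.val < u.val / P.B * P.B + S.k) ∪
      (Finset.univ.filter fun ρ : Fin N => ρ.val / P.B = u.val / P.B ∧
        S.k ≤ ρ.val % P.B ∧ S.sl ρ = S.sl u) := by
    intro ρ
    simp only [Finset.mem_filter, Finset.mem_univ, true_and, Finset.mem_union, Fin.lt_def]
    rintro ⟨h1, h2, h3⟩
    by_cases h4 : ρ.val < u.val / P.B * P.B + S.k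
    · exact Or.inl ⟨h1, h4⟩
    · right
      have hd : ρ.val / P.B = u.val / P.B :=
        le_antisymm (hv.1 ▸ Nat.div_le_div_right h2.le) (Nat.div_le_div_right h1.le)
      have dr := Nat.div_add_mod ρ.val P.B
      rw [hd] at dr
      rw [mul_comm] at h4
      exact ⟨hd, by omega, h3⟩
  have c1 := Finset.card_le_card (hsub.trans hsub2)
  have c2 := Finset.card_union_le (Finset.univ.filter fun ρ : Fin N => u < ρ ∧ ρ.val < u.val / P.B * P.B + S.k)
      (Finset.univ.filter fun ρ : Fin N => ρ.val / P.B = u.val / P.B ∧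
        S.k ≤ ρ.val % P.B ∧ S.sl ρ = S.sl u)
  have c3 : (Finset.univ.filter fun ρ : Fin N => ρ.val / P.B = u.val / P.B ∧
        S.k ≤ ρ.val % P.B ∧ S.sl ρ = S.sl u).card = P.k' :=
    P.F1 (u.val / P.B) (P.div_lt u) (S.sl u)
  have c4 : (Finset.univ.filter fun ρ : Fin N => u < ρ ∧ ρ.val < u.val / P.B * P.B + S.k).card ≤
      (Finset.Ico (u.val + 1) (u.val / P.B * P.B + S.k)).card := by
    apply Finset.card_le_card_of_injOn (fun ρ => ρ.val)
    · intro ρ h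
      simp only [Finset.coe_filter, Finset.mem_univ, true_and, Set.mem_ofPred_eq, Fin.lt_def] at h
      simp only [Finset.coe_Ico, Set.mem_Ico]
      omega
    · intro x _ y _ h
      exact Fin.ext h
  rw [Nat.card_Ico] at c4
  have c5 := mul_comm (u.val / P.B) P.B
  omega

/-- good tokens -/
def BG (P : Par S) (u : Fin N) : Prop :=
  typ P.C (false, u) ∧ P.E + P.k' ≤ u.val % P.B ∧ u.val % P.B < S.k

theorem BG.clean {P : Par S} {u : Fin N} (h : BG P u) : S.clean (.inr (false, u)) := h.1.1

/-- `o` is the exempt item of `u` -/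
def EX (P : Par S) (u : Fin N) (o : Option (Fin m)) : Prop :=
  S.pres (P.C.ev (.inr (false, u))) u (.inl o) ∧ (.inl o) ≠ P.C.c (.inr (false, u)) ∧
    ¬ S.swd (.inr (false, u)) (.inl o) ∧
    S.G (P.C.ev (.inr (false, u))) (.inl o) = some (some (S.sl u)) ∧
    ∀ z, S.pres (P.C.ev (.inr (false, u))) u z → z = P.C.c (.inr (false, u)) ∨ z = .inl o

theorem BG.ex {P : Par S} {u : Fin N} (h : BG P u) : ∃ o, EX P u o := by
  obtain ⟨e, h1, h2, h3, h4, h5, -⟩ := typ_facts h.1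
  rcases item_or e with ⟨o, rfl⟩ | ⟨b, r, rfl⟩
  · exact ⟨o, h1, h2, h3, h4, h5⟩
  · have := T3 P h.1 h.2.2 h1 h3 h4 (by simp)
    have := h.2.1
    omega

theorem ascentBG (P : Par S) {o : Option (Fin m)} {i : Fin m}
    {η τ : ℕ} (hη : η ≤ τ) (hτ : τ < S.M) (h1 : S.pos η (.inl o) = .nook i)
    (h2 : ∀ t, η ≤ t → t ≤ τ → S.G t (.inl o) = some (some i)) (h3 : S.pos (τ+1) (.inl o) = .root) :
    ∃ A : Finset (Fin N), S.k + 1 ≤ A.card + P.E3 ∧ ∀ r ∈ A, BG P r ∧ S.sl r = i ∧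
      P.C.c (.inr (false, r)) = .inl o ∧ ∃ t, η ≤ t ∧ t ≤ τ ∧ S.sw t (.inr (false, r)) (.inl o) := by
  classical
  obtain ⟨A, hA, hA2⟩ := ascent P.C P.E P.hE hη hτ h1 h2 h3 (by intro b r h; cases h)
  refine ⟨A.filter (BG P), ?_, ?_⟩
  swap
  · intro r hr
    rw [Finset.mem_filter] at hr
    obtain ⟨-, b, c⟩ := hA2 r hr.1
    exact ⟨hr.2, b, c⟩
  have e1 : A ⊆ A.filter (BG P) ∪ ((A.filter fun r => ¬ typ P.C (false, r)) ∪
      ((Finset.univ.filter fun ρ : Fin N => S.k ≤ ρ.val % P.B ∧ S.sl ρ = i) ∪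
        (Finset.univ.filter fun ρ : Fin N => ρ.val % P.B < P.E + P.k'))) := by
    intro r hr
    have hi := (hA2 r hr).2.1
    simp only [Finset.mem_union, Finset.mem_filter, Finset.mem_univ, true_and, BG]
    by_cases q1 : typ P.C (false, r)
    · by_cases q2 : S.k ≤ r.val % P.B
      · tauto
      · by_cases q3 : r.val % P.B < P.E + P.k'
        · tauto
        · left; exact ⟨hr, q1, by omega, by omega⟩
    · tauto
  have f1 : (A.filter fun r => ¬ typ P.C (false, r)).card ≤ P.E + P.E := by
    have := atyp P.C P.E P.E P.hU P.hE ((A.filter fun r => ¬ typ P.C (false, r)).map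
      ⟨fun r => (false, r), fun x y e => by simpa using e⟩)
      (by
        intro v hv
        simp only [Finset.mem_map, Function.Embedding.coeFn_mk, Finset.mem_filter] at hv
        obtain ⟨r, hr, rfl⟩ := hv
        exact hr.2)
    rwa [Finset.card_map] at this
  have f2 : (Finset.univ.filter fun ρ : Fin N => S.k ≤ ρ.val % P.B ∧ S.sl ρ = i).card ≤
      P.L.length * P.k' := by
    have := Finset.card_le_mul_card_image_of_maps_to
      (s := Finset.univ.filter fun ρ : Fin N => S.k ≤ ρ.val % P.B ∧ S.sl ρ = i)
      (t := Finset.range P.L.length) (f := fun ρ => ρ.val / P.B)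
      (fun ρ _ => Finset.mem_range.2 (P.div_lt ρ)) P.k' (by
        intro j hj
        rw [Finset.mem_range] at hj
        rw [Finset.filter_filter]
        refine le_of_eq ?_
        rw [← P.F1 j hj i]
        congr 1
        ext ρ
        rw [Finset.mem_filter, Finset.mem_filter]
        unfold Par.B
        tauto)
    rw [Finset.card_range] at this
    rw [mul_comm]; exact this
  have f3 : (Finset.univ.filter fun ρ : Fin N => ρ.val % P.B < P.E + P.k').card ≤
      P.L.length * (P.E + P.k') := by
    rw [← Finset.card_range P.L.length, ← Finset.card_range (P.E + P.k'), ← Finset.card_product]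
    apply Finset.card_le_card_of_injOn (fun ρ => (ρ.val / P.B, ρ.val % P.B))
    · intro ρ h
      simp only [Finset.coe_filter, Finset.mem_univ, true_and, Set.mem_ofPred_eq] at h
      simp only [Finset.coe_product, Finset.coe_range, Set.mem_prod, Set.mem_Iio]
      exact ⟨by simpa using P.div_lt ρ, by simpa using h⟩
    · intro x _ y _ h
      simp only [Prod.mk.injEq] at h
      apply Fin.ext
      rw [← Nat.div_add_mod x.val P.B, ← Nat.div_add_mod y.val P.B, h.1, h.2]
  have g0 := Finset.card_le_card e1
  have g1 := Finset.card_union_le (A.filter (BG P)) ((A.filter fun r => ¬ typ P.C (false, r)) ∪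
      ((Finset.univ.filter fun ρ : Fin N => S.k ≤ ρ.val % P.B ∧ S.sl ρ = i) ∪
        (Finset.univ.filter fun ρ : Fin N => ρ.val % P.B < P.E + P.k')))
  have g2 := Finset.card_union_le (A.filter fun r => ¬ typ P.C (false, r))
      ((Finset.univ.filter fun ρ : Fin N => S.k ≤ ρ.val % P.B ∧ S.sl ρ = i) ∪
        (Finset.univ.filter fun ρ : Fin N => ρ.val % P.B < P.E + P.k'))
  have g3 := Finset.card_union_le
      (Finset.univ.filter fun ρ : Fin N => S.k ≤ ρ.val % P.B ∧ S.sl ρ = i)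
        (Finset.univ.filter fun ρ : Fin N => ρ.val % P.B < P.E + P.k')
  unfold Par.E3
  omega

theorem Par.E3_lt (P : Par S) : P.E3 < S.k + 1 := by
  have := P.hbig
  unfold Par.E3
  omega

theorem exit_lemma (P : Par S) {o : Option (Fin m)} {i : Fin m} {η τ : ℕ} (hτ : τ < S.M)
    (h2 : ∀ t, η ≤ t → t ≤ τ → S.G t (.inl o) = some (some i))
    (h3 : S.pos (τ+1) (.inl o) = .root)
    (h4 : ∀ t, η < t → t ≤ τ → S.pos t (.inl o) ≠ .nook i)
    {u : Fin N} (hu : BG P u) (hsl : S.sl u = i) (hc : P.C.c (.inr (false, u)) = .inl o)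
    {ϑ : ℕ} (hϑ1 : η ≤ ϑ) (hϑ2 : ϑ ≤ τ) (hsw : S.sw ϑ (.inr (false, u)) (.inl o)) :
    (P.C.ev (.inr (false, u)) ≤ τ) ∧
    (∀ t, P.C.ev (.inr (false, u)) ≤ t → t ≤ τ → S.G t (.inl o) = some (some i)) ∧
    ∃ f, f ≠ o ∧ EX P u f ∧
      ∀ t, P.C.ev (.inr (false, u)) ≤ t → t ≤ τ + 1 → S.G t (.inl f) = some (some i) := by
  subst hsl
  have hcl := hu.clean
  have hevM := P.C.evM _ _ hcl
  obtain ⟨r1, r2⟩ := RT_back P.C hcl hsw (h2 _ hϑ1 hϑ2)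
  have hall : ∀ t, P.C.ev (.inr (false, u)) ≤ t → t ≤ τ →
      S.G t (.inl o) = some (some (S.sl u)) := by
    intro t ht1 ht2
    by_cases q : t ≤ ϑ
    · have h0 := mono_X hcl ht1 (by omega)
      rw [H_zero.2 (P.C.evr _ _ hcl)] at h0
      exact (r2 t h0 q).1
    · exact h2 t (by omega) ht2
  refine ⟨by omega, hall, ?_⟩
  obtain ⟨f, hf⟩ := hu.ex
  obtain ⟨f1, f2, f3, f4, f5⟩ := id hf
  have hfo : f ≠ o := by rintro rfl; exact f2 hc.symm
  refine ⟨f, hfo, hf, ?_⟩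
  rcases unsw_X hcl hevM (P.C.evr _ _ hcl) f1 f3 with ⟨θ, a1, a2, a3, a4⟩ | h
  swap
  · intro t ht1 ht2
    exact (h t ht1 (by omega)).1
  by_contra hcon
  push Not at hcon
  obtain ⟨t0, b1, b2, b3⟩ := hcon
  have ht0 : θ < t0 := by
    by_contra q
    exact b3 (a4 t0 b1 (by omega)).1
  have hnook : S.pos (θ+1) (.inl f) = .nook (S.sl u) := by
    have := a3
    simp only [Cr] at this
    tauto
  obtain ⟨l, c1, c2, c3, c4⟩ := exit_ex (show θ + 1 ≤ t0 from ht0) (by omega)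
    (show S.G (θ+1) (.inl f) = some (some (S.sl u)) by simp [G, hnook, gd]) b3
  have hl : l < τ := by
    rcases lt_or_eq_of_le (show l ≤ τ by omega) with q | q
    · exact q
    · subst q
      have := root_uniq (show l + 1 ≤ S.M from hτ) h3 c4
      simp only [Sum.inl.injEq] at this
      exact absurd this.symm hfo
  obtain ⟨A, hA, hA2⟩ := ascentBG P c1 (by omega) hnook c3 c4
  have hlt := P.E3_lt
  obtain ⟨w, hw⟩ : A.Nonempty := by
    rw [← Finset.card_pos]; omega
  obtain ⟨d1, d2, d3, t, d4, d5, d6⟩ := hA2 w hw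
  have hwg := c3 t d4 d5
  have hgt := rank_gt hcl d1.clean d2 f3 (by simp) a3 d4 d6 hwg
  have x1 := ev_lt P.C hcl d1.clean hgt
  have x2 := (RT_back P.C d1.clean d6 (by rw [d2]; exact hwg)).1
  have x3 := hall (P.C.ev (.inr (false, w))) x1.le (by omega)
  obtain ⟨e, hex⟩ := d1.ex
  obtain ⟨e1, e2, e3, e4, e5⟩ := id hex
  have heo : e = o := by
    rcases e5 (.inl o) ⟨trivial, Or.inr (by rw [d2]; exact x3)⟩ with q | q
    · rw [d3] at q
      simp only [Sum.inl.injEq] at q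
      exact absurd q.symm hfo
    · simp only [Sum.inl.injEq] at q
      exact q.symm
  subst heo
  have hroot : ∀ {i}, S.G (τ+1) (.inl e) ≠ some (some i) := by
    intro i; simp [G, h3, gd]
  rcases unsw_X d1.clean (P.C.evM _ _ d1.clean) (P.C.evr _ _ d1.clean) e1 e3 with
    ⟨θ', g1, g2, g3, g4⟩ | h
  swap
  · exact hroot (h (τ+1) (by omega) hτ).1
  have hnook' : S.pos (θ'+1) (.inl e) = .nook (S.sl u) := by
    have := g3
    simp only [Cr, d2] at this
    tauto
  have y1 : θ' ≤ τ := by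
    by_contra q
    exact hroot (g4 (τ+1) (by omega) (by omega)).1
  have y2 : θ' + 1 ≤ τ := by
    rcases lt_or_eq_of_le y1 with q | q
    · exact q
    · subst q
      rw [h3] at hnook'
      cases hnook'
  have y3 : θ' + 1 ≤ η := by
    by_contra q
    exact h4 (θ'+1) (by omega) y2 hnook'
  have y4 := lineX hcl d1.clean d2.symm hgt (show θ' + 1 ≤ S.M by omega)
  have y5 := Cr_H g3
  have y6 := r2 (θ'+1) (by omega) (by omega)
  have y7 : S.H (θ'+1) (.inr (false, u)) < S.H (θ'+1) (.inl e) := y6.2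
  have y8 : S.H (θ'+1) (.inl e) = S.k + 1 := by simp [H, hnook', ht]
  omega

end Sys
end UnweightedTS

namespace UnweightedTS
namespace Sys
variable {m N : ℕ} {S : Sys m N}

/-- free item and exchange sequence data -/
structure FC (S : Sys m N) where
  free : ℕ → Option (Fin m)
  chi : ℕ → List (Fin m)
  p0 : S.pos 0 (.inl none) = .root
  p1 : ∀ i, S.pos 0 (.inl (some i)) = .nook i
  f0 : free 0 = none
  f1 : ∀ τ < S.M, ∀ o, S.pos (τ+1) (.inl o) = .root → free (τ+1) = o
  f2 : ∀ τ < S.M, (∀ o, S.pos (τ+1) (.inl o) ≠ .root) → free (τ+1) = free τ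
  c0 : chi 0 = []
  c1 : ∀ τ < S.M, free (τ+1) = free τ → chi (τ+1) = chi τ
  c2 : ∀ τ < S.M, ∀ i, free (τ+1) ≠ free τ → S.G τ (.inl (free (τ+1))) = some (some i) →
    chi (τ+1) = chi τ ++ [i]

/-- anchored item -/
def Anch (P : Par S) (τ : ℕ) (i : Fin m) (o : Option (Fin m)) : Prop :=
  ∃ η ≤ τ, (∀ t, η ≤ t → t ≤ τ → S.G t (.inl o) = some (some i)) ∧
    (S.pos η (.inl o) = .nook i ∨ ∃ u, BG P u ∧ S.sl u = i ∧ EX P u o ∧ P.C.ev (.inr (false, u)) = η)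

theorem Anch.G {P : Par S} {τ : ℕ} {i : Fin m} {o : Option (Fin m)} (h : Anch P τ i o) :
    S.G τ (.inl o) = some (some i) := by
  obtain ⟨η, h1, h2, -⟩ := h
  exact h2 τ h1 le_rfl

theorem Anch.next {P : Par S} {τ : ℕ} {i : Fin m} {o : Option (Fin m)} (h : Anch P τ i o)
    (hτ : τ < S.M) (hr : S.pos (τ+1) (.inl o) ≠ .root) : Anch P (τ+1) i o := by
  have hg := h.G
  obtain ⟨η, h1, h2, h3⟩ := h
  refine ⟨η, by omega, ?_, h3⟩
  intro t ht1 ht2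
  rcases Nat.lt_or_ge t (τ+1) with q | q
  · exact h2 t ht1 (by omega)
  · have : t = τ + 1 := by omega
    subst this
    rcases G_step hτ hg with g | g
    · exact g
    · exact absurd g hr

/-- an anchored item leaving: it has a last nook time -/
theorem Anch.nook {P : Par S} {τ : ℕ} {i : Fin m} {o : Option (Fin m)} (h : Anch P τ i o)
    (hτ : τ < S.M) (hr : S.pos (τ+1) (.inl o) = .root) :
    ∃ η ≤ τ, S.pos η (.inl o) = .nook i ∧ (∀ t, η ≤ t → t ≤ τ → S.G t (.inl o) = some (some i)) ∧
      ∀ t, η < t → t ≤ τ → S.pos t (.inl o) ≠ .nook i := by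
  classical
  have key : ∃ η ≤ τ, S.pos η (.inl o) = .nook i ∧
      (∀ t, η ≤ t → t ≤ τ → S.G t (.inl o) = some (some i)) := by
    obtain ⟨η, h1, h2, h3 | ⟨u, hu, rfl, hex, rfl⟩⟩ := h
    · exact ⟨η, h1, h3, h2⟩
    · have hcl := hu.clean
      have hroot : ∀ {i}, S.G (τ+1) (.inl o) ≠ some (some i) := by
        intro i; simp [Sys.G, hr, gd]
      rcases unsw_X hcl (P.C.evM _ _ hcl) (P.C.evr _ _ hcl) hex.1 hex.2.2.1 with
        ⟨θ, a1, a2, a3, a4⟩ | h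
      · have hθ : θ ≤ τ := by
          by_contra q
          exact hroot (a4 (τ+1) (by omega) (by omega)).1
        refine ⟨θ, hθ, ?_, fun t q1 q2 => h2 t (by omega) q2⟩
        simp only [Cr] at a3
        tauto
      · exact absurd (h (τ+1) (by omega) hτ).1 hroot
  obtain ⟨η0, k1, k2, k3⟩ := key
  set Q := (Finset.range (τ+1)).filter fun t => S.pos t (.inl o) = .nook i ∧ η0 ≤ t with hQ
  have hne : Q.Nonempty := ⟨η0, by simp only [hQ, Finset.mem_filter, Finset.mem_range]; exact ⟨by omega, k2, le_rfl⟩⟩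
  have hm0 := Finset.max'_mem Q hne
  generalize hX : Q.max' hne = X at hm0
  have hm : X < τ + 1 ∧ S.pos X (.inl o) = .nook i ∧ η0 ≤ X := by
    simpa only [hQ, Finset.mem_filter, Finset.mem_range] using hm0
  refine ⟨X, by omega, hm.2.1, fun t q1 q2 => k3 t (by omega) q2, ?_⟩
  intro t q1 q2 q3
  have : t ∈ Q := by
    simp only [hQ, Finset.mem_filter, Finset.mem_range]
    exact ⟨by omega, q3, by omega⟩
  have := Finset.le_max' Q t this
  omega

/-- the situation at an exchange -/
theorem exchange (P : Par S) {τ : ℕ} {i : Fin m} {o : Option (Fin m)} (h : Anch P τ i o)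
    (hτ : τ < S.M) (hr : S.pos (τ+1) (.inl o) = .root) :
    ∃ U : Finset (Fin N), S.k + 1 ≤ U.card + P.E3 ∧ ∀ u ∈ U, BG P u ∧ S.sl u = i ∧
      P.C.ev (.inr (false, u)) ≤ τ ∧
      (∀ t, P.C.ev (.inr (false, u)) ≤ t → t ≤ τ → S.G t (.inl o) = some (some i)) ∧
      ∃ f, f ≠ o ∧ EX P u f ∧
        ∀ t, P.C.ev (.inr (false, u)) ≤ t → t ≤ τ + 1 → S.G t (.inl f) = some (some i) := by
  obtain ⟨η, h1, h2, h3, h4⟩ := h.nook hτ hr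
  obtain ⟨A, hA, hA2⟩ := ascentBG P h1 hτ h2 h3 hr
  refine ⟨A, hA, ?_⟩
  intro u hu
  obtain ⟨a1, a2, a3, t, a4, a5, a6⟩ := hA2 u hu
  exact ⟨a1, a2, exit_lemma P hτ h3 hr h4 a1 a2 a3 a4 a5 a6⟩

/-- first invariant -/
def Inv1 (P : Par S) (F : FC S) (τ : ℕ) : Prop :=
  ∃ g : Fin m → Option (Fin m), (∀ i, g i ≠ F.free τ ∧ Anch P τ i (g i)) ∧
    ∀ o, o ≠ F.free τ → ∃ i, g i = o

theorem Inv1.uniq {P : Par S} {F : FC S} {τ : ℕ} (h : Inv1 P F τ) {i : Fin m}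
    {o o' : Option (Fin m)} (h1 : o ≠ F.free τ) (h2 : o' ≠ F.free τ)
    (g1 : S.G τ (.inl o) = some (some i)) (g2 : S.G τ (.inl o') = some (some i)) : o = o' := by
  obtain ⟨g, ha, hb⟩ := h
  obtain ⟨a, rfl⟩ := hb o h1
  obtain ⟨b, rfl⟩ := hb o' h2
  have e1 := (ha a).2.G
  have e2 := (ha b).2.G
  rw [g1] at e1
  rw [g2] at e2
  simp only [Option.some.injEq] at e1 e2
  rw [← e1, ← e2]

theorem Inv1.anch {P : Par S} {F : FC S} {τ : ℕ} (h : Inv1 P F τ) 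
    {o : Option (Fin m)} (h1 : o ≠ F.free τ) : ∃ i, Anch P τ i o := by
  obtain ⟨g, ha, hb⟩ := h
  obtain ⟨a, rfl⟩ := hb o h1
  exact ⟨a, (ha a).2⟩

theorem free_root (F : FC S) {τ : ℕ} (hτ : τ < S.M) (h : F.free (τ+1) ≠ F.free τ) :
    S.pos (τ+1) (.inl (F.free (τ+1))) = .root := by
  by_contra hh
  apply h
  apply F.f2 τ hτ
  intro o ho
  have := F.f1 τ hτ o ho
  rw [this] at hh
  exact hh ho

theorem inv1 (P : Par S) (F : FC S) : ∀ τ ≤ S.M, Inv1 P F τ := by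
  classical
  intro τ
  induction τ with
  | zero =>
    intro _
    refine ⟨fun i => some i, ?_, ?_⟩
    · intro i
      refine ⟨by rw [F.f0]; simp, 0, le_rfl, ?_, Or.inl (F.p1 i)⟩
      intro t _ h
      have : t = 0 := by omega
      subst this
      simp [Sys.G, F.p1, gd]
    · intro o ho
      rw [F.f0] at ho
      obtain ⟨i, rfl⟩ := Option.ne_none_iff_exists'.1 ho
      exact ⟨i, rfl⟩
  | succ τ ih =>
    intro hτ
    have I := ih (by omega)
    obtain ⟨g, ha, hb⟩ := id I
    by_cases hf : F.free (τ+1) = F.free τ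
    · refine ⟨g, ?_, by rw [hf]; exact hb⟩
      intro i
      refine ⟨by rw [hf]; exact (ha i).1, (ha i).2.next hτ ?_⟩
      intro hr
      have := F.f1 τ hτ _ hr
      exact (ha i).1 (by rw [← this, hf])
    · have hroot := free_root F hτ hf
      obtain ⟨i, hi⟩ := hb _ hf
      have hanch := (ha i).2
      rw [hi] at hanch
      obtain ⟨U, hU, hU2⟩ := exchange P hanch hτ hroot
      obtain ⟨u, hu⟩ : U.Nonempty := by
        rw [← Finset.card_pos]; have := P.E3_lt; omega
      obtain ⟨u1, u2, u3, u4, f, u5, u6, u7⟩ := hU2 u hu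
      have hff : f = F.free τ := by
        by_contra q
        exact u5 (I.uniq q hf (u7 τ u3 (by omega)) hanch.G)
      refine ⟨Function.update g i f, ?_, ?_⟩
      · intro i'
        by_cases hii : i' = i
        · subst hii
          rw [Function.update_self]
          exact ⟨u5, _, by omega, u7, Or.inr ⟨u, u1, u2, u6, rfl⟩⟩
        · rw [Function.update_of_ne hii]
          have hne : g i' ≠ F.free (τ+1) := by
            intro q
            have e := (ha i').2.G
            rw [q, hanch.G] at e
            simp only [Option.some.injEq] at e
            exact hii e.symm
          refine ⟨hne, (ha i').2.next hτ ?_⟩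
          intro hr
          exact hne (F.f1 τ hτ _ hr).symm
      · intro o ho
        by_cases hof : o = f
        · exact ⟨i, by rw [Function.update_self, hof]⟩
        · obtain ⟨i', rfl⟩ := hb o (by rw [← hff]; exact hof)
          refine ⟨i', Function.update_of_ne ?_ _ _⟩
          rintro rfl
          exact ho hi

/-- at most two items -/
theorem free_const (P : Par S) (F : FC S) {a b : ℕ} (hab : a ≤ b) (hb : b ≤ S.M) {i : Fin m}
    {o f : Option (Fin m)} (hof : f ≠ o)
    (h1 : ∀ t, a ≤ t → t ≤ b → S.G t (.inl o) = some (some i))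
    (h2 : ∀ t, a ≤ t → t ≤ b → S.G t (.inl f) = some (some i)) : F.chi a = F.chi b := by
  induction b with
  | zero =>
    have : a = 0 := by omega
    rw [this]
  | succ b ih =>
    rcases Nat.lt_or_ge b a with q | q
    · have : a = b + 1 := by omega
      rw [this]
    · rw [ih q (by omega) (fun t x y => h1 t x (by omega)) (fun t x y => h2 t x (by omega))]
      refine (F.c1 b hb ?_).symm
      by_contra hne
      have hr := free_root F hb hne
      have I := inv1 P F (b+1) hb
      have g1 := h1 (b+1) hab le_rfl
      have g2 := h2 (b+1) hab le_rfl
      refine hof (I.uniq ?_ ?_ g2 g1)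
      · intro e
        rw [← e] at hr
        simp [Sys.G, hr, gd] at g2
      · intro e
        rw [← e] at hr
        simp [Sys.G, hr, gd] at g1

theorem chi_step (P : Par S) (F : FC S) {τ : ℕ} (hτ : τ < S.M) :
    F.chi (τ+1) = F.chi τ ∨ ∃ i, F.chi (τ+1) = F.chi τ ++ [i] ∧ Anch P τ i (F.free (τ+1)) ∧
      S.pos (τ+1) (.inl (F.free (τ+1))) = .root := by
  by_cases hf : F.free (τ+1) = F.free τ
  · exact Or.inl (F.c1 τ hτ hf)
  · right
    obtain ⟨i, hi⟩ := (inv1 P F τ hτ.le).anch hf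
    exact ⟨i, F.c2 τ hτ i hf hi.G, hi, free_root F hτ hf⟩

theorem chi_mono (P : Par S) (F : FC S) {a b : ℕ} (hab : a ≤ b) (hb : b ≤ S.M) :
    (F.chi a).length ≤ (F.chi b).length := by
  induction b with
  | zero =>
    have : a = 0 := by omega
    rw [this]
  | succ b ih =>
    rcases Nat.lt_or_ge b a with q | q
    · have : a = b + 1 := by omega
      rw [this]
    · refine (ih q (by omega)).trans ?_
      rcases chi_step P F (show b < S.M from hb) with h | ⟨i, h, -⟩
      · rw [h]
      · rw [h]; simp

/-- second invariant -/
def Inv2 (P : Par S) (F : FC S) (τ : ℕ) : Prop :=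
  ∃ J ≤ P.L.length, (F.chi τ).Sublist (P.L.take J) ∧ ∀ u, BG P u →
    (F.chi τ).length ≤ (F.chi (P.C.ev (.inr (false, u)))).length →
    J * P.B ≤ u.val + (F.chi τ).length * (m * P.k' + P.E3)

theorem pick (P : Par S) (U : Finset (Fin N)) (hU : S.k + 1 ≤ U.card + P.E3) (J r : ℕ)
    (hr : r ≤ P.L.length) (hbg : ∀ u ∈ U, BG P u)
    (hJ : ∀ u ∈ U, J * P.B ≤ u.val + r * (m * P.k' + P.E3)) :
    ∃ u ∈ U, J ≤ u.val / P.B ∧ ∃ w ∈ U, (u.val / P.B + 1) * P.B ≤ w.val + (r+1) * (m * P.k' + P.E3) := by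
  classical
  set δ := m * P.k' + P.E3 with hδ
  have hbig : P.L.length * δ + P.E3 < S.k + 1 := P.hbig
  have hrδ : r * δ ≤ P.L.length * δ := Nat.mul_le_mul_right _ hr
  have hB := P.B_pos
  -- low elements
  have low : (U.filter fun u => u.val < J * P.B).card ≤ r * δ := by
    have : (U.filter fun u => u.val < J * P.B).card ≤ (Finset.Ico (J * P.B - r * δ) (J * P.B)).card := by
      apply Finset.card_le_card_of_injOn (fun ρ => ρ.val)
      · intro u hu
        simp only [Finset.coe_filter, Set.mem_ofPred_eq] at hu
        have := hJ u hu.1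
        simp only [Finset.coe_Ico, Set.mem_Ico]
        omega
      · intro x _ y _ h
        exact Fin.ext h
    rw [Nat.card_Ico] at this
    omega
  have hUne : U.Nonempty := by
    rw [← Finset.card_pos]; omega
  have hR := U.max'_mem hUne
  set R := U.max' hUne with hRd
  have hRmax : ∀ u ∈ U, u.val ≤ R.val := fun u hu => Fin.le_def.1 (U.le_max' u hu)
  have dR := Nat.div_add_mod R.val P.B
  have mR := (hbg R hR).2.2
  have hsplit : U ⊆ (U.filter fun u => u.val < J * P.B) ∪ U.filter fun u => ¬ u.val < J * P.B := by
    intro u hu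
    simp only [Finset.mem_union, Finset.mem_filter]
    tauto
  have hc1 := Finset.card_le_card hsplit
  have hc2 := Finset.card_union_le (U.filter fun u => u.val < J * P.B) (U.filter fun u => ¬ u.val < J * P.B)
  have e1 : (r + 1) * δ = r * δ + δ := by ring
  have e2 : (R.val / P.B + 1) * P.B = P.B * (R.val / P.B) + P.B := by ring
  by_cases hcase : (R.val / P.B + 1) * P.B ≤ R.val + (r+1) * δ
  · refine ⟨R, hR, ?_, R, hR, hcase⟩
    obtain ⟨u, hu⟩ : (U.filter fun u => ¬ u.val < J * P.B).Nonempty := by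
      rw [← Finset.card_pos]; omega
    simp only [Finset.mem_filter] at hu
    have := hRmax u hu.1
    exact (Nat.le_div_iff_mul_le hB).2 (by omega)
  · have hBd : P.B = S.k + m * P.k' := rfl
    have top : (U.filter fun u => P.B * (R.val / P.B) ≤ u.val).card ≤ R.val % P.B + 1 := by
      have : (U.filter fun u => P.B * (R.val / P.B) ≤ u.val).card ≤
          (Finset.Ico (P.B * (R.val / P.B)) (R.val + 1)).card := by
        apply Finset.card_le_card_of_injOn (fun ρ => ρ.val)
        · intro u hu
          simp only [Finset.coe_filter, Set.mem_ofPred_eq] at hu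
          have := hRmax u hu.1
          simp only [Finset.coe_Ico, Set.mem_Ico]
          omega
        · intro x _ y _ h
          exact Fin.ext h
      rw [Nat.card_Ico] at this
      omega
    obtain ⟨u, hu⟩ : ((U.filter fun u => ¬ u.val < J * P.B) \
        (U.filter fun u => P.B * (R.val / P.B) ≤ u.val)).Nonempty := by
      rw [← Finset.card_pos]
      have := Finset.le_card_sdiff (U.filter fun u => P.B * (R.val / P.B) ≤ u.val)
        (U.filter fun u => ¬ u.val < J * P.B)
      omega
    simp only [Finset.mem_sdiff, Finset.mem_filter, not_and, not_le, not_lt] at hu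
    have hu2 := hu.2 hu.1.1
    refine ⟨u, hu.1.1, (Nat.le_div_iff_mul_le hB).2 hu.1.2, R, hR, ?_⟩
    have : u.val / P.B < R.val / P.B := by
      rw [Nat.div_lt_iff_lt_mul hB, mul_comm]; exact hu2
    have : (u.val / P.B + 1) * P.B ≤ (R.val / P.B) * P.B := Nat.mul_le_mul_right _ this
    have := mul_comm (R.val / P.B) P.B
    omega

theorem inv2 (P : Par S) (F : FC S) : ∀ τ ≤ S.M, Inv2 P F τ := by
  intro τ
  induction τ with
  | zero =>
    intro _
    exact ⟨0, by omega, by rw [F.c0]; simp, by intros; omega⟩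
  | succ τ ih =>
    intro hτ
    obtain ⟨J, hJ, hsub, hu⟩ := ih (by omega)
    rcases chi_step P F (show τ < S.M from hτ) with h | ⟨i, h, hA, hr⟩
    · refine ⟨J, hJ, by rw [h]; exact hsub, ?_⟩
      rw [h]; exact hu
    · obtain ⟨U, hU, hU2⟩ := exchange P hA hτ hr
      have hlen : (F.chi τ).length ≤ P.L.length := by
        have := hsub.length_le
        rw [List.length_take] at this
        omega
      have hchi : ∀ u ∈ U, F.chi (P.C.ev (.inr (false, u))) = F.chi τ := by
        intro u hu
        obtain ⟨u1, u2, u3, u4, f, u5, u6, u7⟩ := hU2 u hu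
        exact free_const P F u3 (by omega) u5 u4 (fun t x y => u7 t x (by omega))
      obtain ⟨u, huU, hJu, w, hwU, hw⟩ := pick P U hU J (F.chi τ).length hlen
        (fun u hu => (hU2 u hu).1) (fun v hv => hu v (hU2 v hv).1 (by rw [hchi v hv]))
      have hu1 := (hU2 u huU).1
      have hu2 := (hU2 u huU).2.1
      have hLu : P.L[u.val / P.B]? = some i := by
        rw [← hu2]; exact P.F2 u hu1.2.2
      refine ⟨u.val / P.B + 1, P.div_lt u, ?_, ?_⟩
      · rw [h]
        have e : P.L.take (u.val / P.B + 1) = P.L.take (u.val / P.B) ++ [i] := by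
          rw [List.take_add_one, hLu]; rfl
        rw [e]
        refine List.Sublist.append (hsub.trans ?_) (List.Sublist.refl _)
        exact (List.take_prefix_take_left hJu).sublist
      · intro v hv hl
        rw [h] at hl ⊢
        simp only [List.length_append, List.length_cons, List.length_nil] at hl ⊢
        have hev : τ < P.C.ev (.inr (false, v)) := by
          by_contra q
          have := chi_mono P F (not_lt.1 q) (by omega)
          omega
        have hw3 := (hU2 w hwU).2.2.1
        have hwv : w ≤ v := by
          by_contra q
          have := ev_lt P.C hv.clean (hU2 w hwU).1.clean (not_le.1 q)
          omega
        have := Fin.le_def.1 hwv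
        simp only [zero_add]
        omega

theorem main_abs (P : Par S) (F : FC S) :
    (∀ τ ≤ S.M, ∀ i, ∃! o, o ≠ F.free τ ∧ S.G τ (.inl o) = some (some i)) ∧
    (F.chi S.M).Sublist P.L := by
  constructor
  · intro τ hτ i
    have I := inv1 P F τ hτ
    obtain ⟨g, ha, hb⟩ := id I
    refine ⟨g i, ⟨(ha i).1, (ha i).2.G⟩, ?_⟩
    rintro o ⟨h1, h2⟩
    exact I.uniq h1 (ha i).1 h2 (ha i).2.G
  · obtain ⟨J, -, h, -⟩ := inv2 P F S.M le_rfl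
    exact h.trans (List.take_sublist _ _)

end Sys
end UnweightedTS

namespace UnweightedTS
variable {m n : ℕ}

/-! ## Ranks -/
abbrev YY (m n : ℕ) := (Fin n × Fin (kk m n)) ⊕ (Fin m × Fin n × Fin (kk' m n))

def BB (m n : ℕ) : ℕ := kk m n + m * kk' m n

def rk (s : Fin n → Fin m) : YY m n → ℕ
  | .inl (j, a) => j.val * BB m n + a.val
  | .inr (i, j, a) => j.val * BB m n + kk m n + rho s i j * kk' m n + a.val

def slY (s : Fin n → Fin m) : YY m n → Fin m
  | .inl (j, _) => s j
  | .inr (i, _, _) => i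

theorem kk_eq (hn : 5 < n) : kk m n = kk' m n * n ^ 8 ∧ kk' m n = m ^ 25 * n ^ 17 := by
  have hn0 : 0 < n ^ 8 := by positivity
  have e : kk m n = m ^ 25 * n ^ 17 * n ^ 8 := by
    unfold kk
    rw [mul_pow, mul_assoc, ← pow_add]
  have e2 : kk' m n = m ^ 25 * n ^ 17 := by
    unfold kk'
    rw [e, Nat.mul_div_cancel _ hn0]
  exact ⟨by rw [e2, e], e2⟩

section rho
variable {s : Fin n → Fin m}
  (hcons : ∀ (j : Fin n) (h : j.val + 1 < n), s j ≠ s ⟨j.val + 1, h⟩)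

theorem nxt_ne (hcons : ∀ (j : Fin n) (h : j.val + 1 < n), s j ≠ s ⟨j.val + 1, h⟩) (j : Fin n) :
    some (s j) ≠ nxt s j := by
  unfold nxt
  split
  · rename_i h
    intro e
    exact hcons j h (by simpa using e)
  · simp

/-- the counted set in `rho` -/
def rset (s : Fin n → Fin m) (i : Fin m) (j : Fin n) : Finset (Fin m) :=
  Finset.univ.filter fun i' : Fin m => i'.val < i.val ∧ i' ≠ s j ∧ some i' ≠ nxt s j

theorem rho_third {i : Fin m} {j : Fin n} (h1 : some i ≠ nxt s j) (h2 : i ≠ s j) :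
    rho s i j = (if (nxt s j).isSome then 1 else 0) + (rset s i j).card := by
  unfold rho rset
  rw [if_neg h1, if_neg h2]

theorem rset_bound (hcons : ∀ (j : Fin n) (h : j.val + 1 < n), s j ≠ s ⟨j.val + 1, h⟩)
    {i : Fin m} {j : Fin n} (h1 : some i ≠ nxt s j) (h2 : i ≠ s j) :
    (if (nxt s j).isSome then 1 else 0) + (rset s i j).card + 2 ≤ m := by
  have hm : (Finset.univ : Finset (Fin m)).card = m := by simp
  have hi : i ∉ rset s i j := by simp [rset]
  have hs : s j ∉ insert i (rset s i j) := by
    simp only [Finset.mem_insert, rset, Finset.mem_filter]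
    push Not
    exact ⟨h2.symm, fun _ _ h => absurd rfl h⟩
  rcases hx : nxt s j with _ | t
  · have := Finset.card_le_univ (insert (s j) (insert i (rset s i j)))
    rw [Finset.card_insert_of_notMem hs, Finset.card_insert_of_notMem hi] at this
    simp at this ⊢
    omega
  · have ht : t ∉ insert (s j) (insert i (rset s i j)) := by
      have a1 := nxt_ne hcons j
      rw [hx] at a1 h1
      simp only [Finset.mem_insert, rset, Finset.mem_filter, hx]
      push Not
      refine ⟨fun h => a1 (by rw [h]), fun h => h1 (by rw [h]), fun _ _ _ => rfl⟩
    have := Finset.card_le_univ (insert t (insert (s j) (insert i (rset s i j))))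
    rw [Finset.card_insert_of_notMem ht, Finset.card_insert_of_notMem hs,
      Finset.card_insert_of_notMem hi] at this
    simp at this ⊢
    omega

theorem rho_lt (hm : 5 < m) (hcons : ∀ (j : Fin n) (h : j.val + 1 < n), s j ≠ s ⟨j.val + 1, h⟩)
    (i : Fin m) (j : Fin n) : rho s i j < m := by
  by_cases h1 : some i = nxt s j
  · unfold rho; rw [if_pos h1]; omega
  · by_cases h2 : i = s j
    · unfold rho; rw [if_neg h1, if_pos h2]; omega
    · rw [rho_third h1 h2]
      have := rset_bound hcons h1 h2
      omega

theorem rset_lt {i i' : Fin m} {j : Fin n} (h1 : some i ≠ nxt s j) (h2 : i ≠ s j) (h : i < i') :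
    (rset s i j).card < (rset s i' j).card := by
  apply Finset.card_lt_card
  rw [Finset.ssubset_iff_of_subset]
  · exact ⟨i, by simp only [rset, Finset.mem_filter, Finset.mem_univ, true_and]; exact ⟨h, h2, h1⟩,
      by simp [rset]⟩
  · intro x hx
    simp only [rset, Finset.mem_filter, Finset.mem_univ, true_and] at hx ⊢
    exact ⟨by have := Fin.lt_def.1 h; omega, hx.2⟩

theorem rho_inj (hm : 5 < m) (hcons : ∀ (j : Fin n) (h : j.val + 1 < n), s j ≠ s ⟨j.val + 1, h⟩)
    {i i' : Fin m} {j : Fin n} (h : rho s i j = rho s i' j) : i = i' := by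
  have val : ∀ i : Fin m, (some i = nxt s j ∧ rho s i j = 0) ∨
      (some i ≠ nxt s j ∧ i = s j ∧ rho s i j = m - 1) ∨
      (some i ≠ nxt s j ∧ i ≠ s j ∧
        rho s i j = (if (nxt s j).isSome then 1 else 0) + (rset s i j).card) := by
    intro i
    by_cases h1 : some i = nxt s j
    · left; exact ⟨h1, by unfold rho; rw [if_pos h1]⟩
    · by_cases h2 : i = s j
      · right; left; exact ⟨h1, h2, by unfold rho; rw [if_neg h1, if_pos h2]⟩
      · right; right; exact ⟨h1, h2, rho_third h1 h2⟩
  have sm : ∀ i : Fin m, some i = nxt s j → (if (nxt s j).isSome then 1 else 0) = 1 := by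
    intro i h; rw [← h]; simp
  rcases val i with ⟨a1, a2⟩ | ⟨a1, a2, a3⟩ | ⟨a1, a2, a3⟩ <;>
  rcases val i' with ⟨b1, b2⟩ | ⟨b1, b2, b3⟩ | ⟨b1, b2, b3⟩
  · rw [← b1] at a1; simpa using a1
  · omega
  · have := sm i a1; omega
  · omega
  · rw [a2, b2]
  · have := rset_bound hcons b1 b2; omega
  · have := sm i' b1; omega
  · have := rset_bound hcons a1 a2; omega
  · rcases lt_trichotomy i i' with q | q | q
    · have := rset_lt a1 a2 q; omega
    · exact q
    · have := rset_lt b1 b2 q; omega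

end rho

structure Hyp (s : Fin n → Fin m) : Prop where
  hm : 5 < m
  hn : 5 < n
  hocc : ∀ i : Fin m, ∃ j, s j = i
  hcons : ∀ (j : Fin n) (h : j.val + 1 < n), s j ≠ s ⟨j.val + 1, h⟩

theorem Hyp.mn {s : Fin n → Fin m} (h : Hyp s) : m ≤ n := by
  have := Fintype.card_le_of_surjective s h.hocc
  simpa using this

theorem Hyp.k'_pos {s : Fin n → Fin m} (h : Hyp s) : 0 < kk' m n := by
  have := h.hm
  have := h.hn
  rw [(kk_eq h.hn).2]; positivity

theorem Hyp.k_pos {s : Fin n → Fin m} (h : Hyp s) : 0 < kk m n := by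
  have := h.hm
  have := h.hn
  unfold kk; positivity

theorem Hyp.B_pos {s : Fin n → Fin m} (h : Hyp s) : 0 < BB m n := by
  have := h.k_pos; unfold BB; omega

theorem dm {B j a : ℕ} (h : a < B) : (j * B + a) / B = j ∧ (j * B + a) % B = a := by
  have hB : 0 < B := by omega
  constructor
  · rw [add_comm, Nat.add_mul_div_right _ _ hB, Nat.div_eq_of_lt h, zero_add]
  · rw [add_comm, Nat.add_mul_mod_self_right, Nat.mod_eq_of_lt h]

theorem rk_inl (s : Fin n → Fin m) (j : Fin n) (a : Fin (kk m n)) :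
    rk s (.inl (j, a)) / BB m n = j.val ∧ rk s (.inl (j, a)) % BB m n = a.val := by
  apply dm
  have := a.2
  unfold BB
  omega

theorem rk_inr {s : Fin n → Fin m} (h : Hyp s) (i : Fin m) (j : Fin n) (a : Fin (kk' m n)) :
    rk s (.inr (i, j, a)) / BB m n = j.val ∧
      rk s (.inr (i, j, a)) % BB m n = kk m n + (rho s i j * kk' m n + a.val) := by
  have := rho_lt h.hm h.hcons i j
  have h1 : (rho s i j + 1) * kk' m n ≤ m * kk' m n := Nat.mul_le_mul_right _ this
  have h2 := a.2
  have h3 : rk s (.inr (i, j, a)) = j.val * BB m n + (kk m n + (rho s i j * kk' m n + a.val)) := by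
    simp only [rk]; ring
  rw [h3]
  apply dm
  unfold BB
  rw [add_mul] at h1
  omega

theorem lenOrd_eq (m n : ℕ) : lenOrd m n = n * BB m n := by
  unfold lenOrd BB; ring

theorem rk_lt {s : Fin n → Fin m} (h : Hyp s) (y : YY m n) : rk s y < lenOrd m n := by
  rw [lenOrd_eq, ← Nat.div_lt_iff_lt_mul h.B_pos]
  rcases y with ⟨j, a⟩ | ⟨i, j, a⟩
  · rw [(rk_inl s j a).1]; exact j.2
  · rw [(rk_inr h i j a).1]; exact j.2

theorem rk_inj {s : Fin n → Fin m} (h : Hyp s) : Function.Injective (rk s) := by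
  rintro (⟨j, a⟩ | ⟨i, j, a⟩) (⟨j', a'⟩ | ⟨i', j', a'⟩) e
  · have h1 := rk_inl s j a
    have h2 := rk_inl s j' a'
    rw [e] at h1
    have e1 : j = j' := Fin.ext (h1.1.symm.trans h2.1)
    have e2 : a = a' := Fin.ext (h1.2.symm.trans h2.2)
    rw [e1, e2]
  · have h1 := rk_inl s j a
    have h2 := rk_inr h i' j' a'
    rw [e] at h1
    have := a.2
    omega
  · have h1 := rk_inr h i j a
    have h2 := rk_inl s j' a'
    rw [e] at h1
    have := a'.2
    omega
  · have h1 := rk_inr h i j a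
    have h2 := rk_inr h i' j' a'
    rw [e] at h1
    have e1 : j = j' := Fin.ext (h1.1.symm.trans h2.1)
    subst e1
    have e3 := h1.2.symm.trans h2.2
    have e4 : rho s i j * kk' m n + a.val = rho s i' j * kk' m n + a'.val := by omega
    have d1 := dm (j := rho s i j) a.2
    have d2 := dm (j := rho s i' j) a'.2
    rw [e4] at d1
    have e5 := rho_inj h.hm h.hcons (d1.1.symm.trans d2.1)
    have e6 : a = a' := Fin.ext (d1.2.symm.trans d2.2)
    rw [e5, e6]

/-- ranks as an equivalence -/
noncomputable def RE {s : Fin n → Fin m} (h : Hyp s) : YY m n ≃ Fin (lenOrd m n) :=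
  Equiv.ofBijective (fun y => ⟨rk s y, rk_lt h y⟩) (by
    rw [Fintype.bijective_iff_injective_and_card]
    refine ⟨fun x y e => rk_inj h (by simpa using e), ?_⟩
    simp only [Fintype.card_sum, Fintype.card_prod, Fintype.card_fin]
    unfold lenOrd
    ring)

theorem RE_val {s : Fin n → Fin m} (h : Hyp s) (y : YY m n) : (RE h y).val = rk s y := rfl

theorem RE_symm {s : Fin n → Fin m} (h : Hyp s) (r : Fin (lenOrd m n)) :
    rk s ((RE h).symm r) = r.val := by
  rw [← RE_val h, Equiv.apply_symm_apply]

/-- the token of kind `b` with data `y` -/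
def nt : Bool → YY m n → NonItem m n
  | false, .inl x => .inl x
  | true, .inl x => .inr (.inl x)
  | false, .inr x => .inr (.inr (.inl x))
  | true, .inr x => .inr (.inr (.inr x))

def ntE : Bool × YY m n ≃ NonItem m n where
  toFun := fun x => nt x.1 x.2
  invFun := fun t => match t with
    | .inl x => (false, .inl x)
    | .inr (.inl x) => (true, .inl x)
    | .inr (.inr (.inl x)) => (false, .inr x)
    | .inr (.inr (.inr x)) => (true, .inr x)
  left_inv := by rintro ⟨_ | _, _ | _⟩ <;> rfl
  right_inv := by rintro (_ | _ | _ | _) <;> rfl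

noncomputable def tokN {s : Fin n → Fin m} (h : Hyp s) : Bool × Fin (lenOrd m n) ≃ NonItem m n :=
  ((Equiv.refl Bool).prodCongr (RE h).symm).trans ntE

noncomputable def tokE {s : Fin n → Fin m} (h : Hyp s) : Tk m (lenOrd m n) ≃ Tok m n :=
  (Equiv.refl _).sumCongr (tokN h)

theorem tokE_inl {s : Fin n → Fin m} (h : Hyp s) (o : Option (Fin m)) :
    tokE h (.inl o) = .inl o := rfl

theorem tokE_inr {s : Fin n → Fin m} (h : Hyp s) (b : Bool) (r : Fin (lenOrd m n)) :
    tokE h (.inr (b, r)) = .inr (nt b ((RE h).symm r)) := rfl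

/-! ## Slot positions -/

/-- width of block -/
def wd (s : Fin n → Fin m) (i : Fin m) (j : Fin n) : ℕ :=
  kk' m n + if s j = i then kk m n else 0

theorem sum_wd (s : Fin n → Fin m) (i : Fin m) : ∑ j, wd s i j = lenSlot s i := by
  unfold wd lenSlot cnt
  rw [Finset.sum_add_distrib, Finset.sum_const, ← Finset.sum_filter, Finset.sum_const]
  simp
  ring

theorem offQ_le (s : Fin n → Fin m) (i : Fin m) (j : Fin n) :
    offQ s i j + wd s i j ≤ lenSlot s i := by
  rw [← sum_wd, add_comm]
  have hj : j ∉ Finset.univ.filter (fun j' : Fin n => j'.val < j.val) := by simp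
  have : offQ s i j = ∑ j' ∈ Finset.univ.filter (fun j' : Fin n => j'.val < j.val), wd s i j' := rfl
  rw [this, ← Finset.sum_insert hj]
  exact Finset.sum_le_sum_of_subset (Finset.subset_univ _)

theorem tOffP_le (s : Fin n → Fin m) (i : Fin m) (j : Fin n) :
    tOffP s i j + wd s i j ≤ lenSlot s i := by
  rw [← sum_wd, add_comm]
  have hj : j ∉ Finset.univ.filter (fun j' : Fin n => j.val < j'.val) := by simp
  have : tOffP s i j = ∑ j' ∈ Finset.univ.filter (fun j' : Fin n => j.val < j'.val), wd s i j' := rfl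
  rw [this, ← Finset.sum_insert hj]
  exact Finset.sum_le_sum_of_subset (Finset.subset_univ _)

theorem offQ_lt (s : Fin n → Fin m) (i : Fin m) {j j' : Fin n} (hjj : j < j') :
    offQ s i j + wd s i j ≤ offQ s i j' := by
  rw [add_comm]
  have hj : j ∉ Finset.univ.filter (fun j' : Fin n => j'.val < j.val) := by simp
  have e : ∀ j, offQ s i j =
    ∑ j' ∈ Finset.univ.filter (fun j' : Fin n => j'.val < j.val), wd s i j' := fun _ => rfl
  rw [e j, e j', ← Finset.sum_insert hj]
  apply Finset.sum_le_sum_of_subset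
  intro x hx
  simp only [Finset.mem_insert, Finset.mem_filter, Finset.mem_univ, true_and] at hx ⊢
  have := Fin.lt_def.1 hjj
  rcases hx with rfl | hx <;> omega

theorem offQ_ex (s : Fin n → Fin m) (i : Fin m) {d : ℕ} (hd : d < lenSlot s i) :
    ∃ j, offQ s i j ≤ d ∧ d < offQ s i j + wd s i j := by
  by_contra hh
  push Not at hh
  have key : ∀ t (ht : t < n), offQ s i ⟨t, ht⟩ + wd s i ⟨t, ht⟩ ≤ d := by
    intro t
    induction t with
    | zero =>
      intro ht
      apply hh
      have : offQ s i ⟨0, ht⟩ = 0 := by simp [offQ]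
      omega
    | succ t ih =>
      intro ht
      apply hh
      have h1 := ih (by omega)
      have h2 : offQ s i ⟨t+1, ht⟩ = wd s i ⟨t, by omega⟩ + offQ s i ⟨t, by omega⟩ := by
        have e : ∀ j, offQ s i j =
          ∑ j' ∈ Finset.univ.filter (fun j' : Fin n => j'.val < j.val), wd s i j' := fun _ => rfl
        rw [e, e, ← Finset.sum_insert (by simp)]
        congr 1
        ext x
        simp only [Finset.mem_insert, Finset.mem_filter, Finset.mem_univ, true_and, Fin.ext_iff]
        omega
      omega
  rcases Nat.eq_zero_or_pos n with h0 | h0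
  · subst h0
    simp [lenSlot, cnt] at hd
  · have h1 := key (n-1) (by omega)
    have h2 : lenSlot s i = wd s i ⟨n-1, by omega⟩ + offQ s i ⟨n-1, by omega⟩ := by
      have e : ∀ j, offQ s i j =
        ∑ j' ∈ Finset.univ.filter (fun j' : Fin n => j'.val < j.val), wd s i j' := fun _ => rfl
      rw [e, ← Finset.sum_insert (by simp), ← sum_wd]
      refine Finset.sum_congr ?_ fun _ _ => rfl
      symm
      rw [Finset.eq_univ_iff_forall]
      intro x
      simp only [Finset.mem_insert, Finset.mem_filter, Finset.mem_univ, true_and, Fin.ext_iff]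
      have := x.2
      omega
    omega

/-- initial slot position of the `S`-token `y` -/
def ip (s : Fin n → Fin m) : YY m n → ℕ
  | .inl (j, a) => offQ s (s j) j + a.val
  | .inr (i, j, a) => offQ s i j + (if s j = i then kk m n else 0) + a.val

/-- final slot position of the `X`-token `y` -/
def fp (s : Fin n → Fin m) : YY m n → ℕ
  | .inl (j, a) => tOffP s (s j) j + kk' m n + (kk m n - 1 - a.val)
  | .inr (i, j, a) => tOffP s i j + (kk' m n - 1 - a.val)

def blk : YY m n → Fin n
  | .inl (j, _) => j
  | .inr (_, j, _) => j

theorem ip_bd (s : Fin n → Fin m) (y : YY m n) :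
    offQ s (slY s y) (blk y) ≤ ip s y ∧ ip s y < offQ s (slY s y) (blk y) + wd s (slY s y) (blk y) := by
  rcases y with ⟨j, a⟩ | ⟨i, j, a⟩
  · have := a.2
    simp only [slY, blk, ip, wd, if_true]
    omega
  · have := a.2
    by_cases hh : s j = i <;> simp only [slY, blk, ip, wd, hh, if_true, if_false] <;> omega

theorem ip_lt (s : Fin n → Fin m) (y : YY m n) : ip s y < lenSlot s (slY s y) := by
  have := ip_bd s y
  have := offQ_le s (slY s y) (blk y)
  omega

theorem fp_lt (s : Fin n → Fin m) (y : YY m n) : fp s y < lenSlot s (slY s y) := by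
  rcases y with ⟨j, a⟩ | ⟨i, j, a⟩
  · have := a.2
    have := tOffP_le s (s j) j
    simp only [slY, fp, wd, if_true] at *
    omega
  · have := a.2
    have := tOffP_le s i j
    simp only [slY, fp, wd] at *
    omega

theorem ip_inj (s : Fin n → Fin m) {y y' : YY m n} (h1 : slY s y = slY s y')
    (h2 : ip s y = ip s y') : y = y' := by
  have b1 := ip_bd s y
  have b2 := ip_bd s y'
  have hb : blk y = blk y' := by
    rcases lt_trichotomy (blk y) (blk y') with q | q | q
    · have := offQ_lt s (slY s y) q
      rw [h1] at b1 this
      omega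
    · exact q
    · have := offQ_lt s (slY s y) q
      rw [h1] at b1 this
      omega
  rcases y with ⟨j, a⟩ | ⟨i, j, a⟩ <;> rcases y' with ⟨j', a'⟩ | ⟨i', j', a'⟩ <;>
    simp only [slY, blk, ip] at *
  · subst hb
    have : a = a' := Fin.ext (by omega)
    rw [this]
  · subst hb
    subst h1
    have := a.2
    simp at h2
    omega
  · subst hb
    subst h1
    have := a'.2
    simp at h2
    omega
  · subst hb
    subst h1
    have : a = a' := Fin.ext (by omega)
    rw [this]

theorem ip_surj (s : Fin n → Fin m) {i : Fin m} {d : ℕ} (hd : d < lenSlot s i) :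
    ∃ y : YY m n, slY s y = i ∧ ip s y = d := by
  obtain ⟨j, h1, h2⟩ := offQ_ex s i hd
  by_cases h : s j = i
  · subst h
    simp only [wd, if_true] at h2
    by_cases q : d - offQ s (s j) j < kk m n
    · refine ⟨.inl (j, ⟨_, q⟩), rfl, ?_⟩
      simp only [ip]; omega
    · refine ⟨.inr (s j, j, ⟨d - offQ s (s j) j - kk m n, by omega⟩), rfl, ?_⟩
      simp only [ip, if_true]; omega
  · simp only [wd, if_neg h] at h2
    refine ⟨.inr (i, j, ⟨d - offQ s i j, by omega⟩), rfl, ?_⟩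
    simp only [ip, if_neg h]; omega

theorem init_X (s : Fin n → Fin m) (y : YY m n) : initTok s (.inr (nt false y)) = .ord (rk s y) := by
  rcases y with ⟨j, a⟩ | ⟨i, j, a⟩ <;> rfl

theorem init_S (s : Fin n → Fin m) (y : YY m n) :
    initTok s (.inr (nt true y)) = .slot (slY s y) (ip s y) := by
  rcases y with ⟨j, a⟩ | ⟨i, j, a⟩ <;> rfl

theorem tgt_X (s : Fin n → Fin m) (π : Equiv.Perm (Option (Fin m))) (y : YY m n) :
    tgtTok s π (.inr (nt false y)) = .slot (slY s y) (fp s y) := by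
  rcases y with ⟨j, a⟩ | ⟨i, j, a⟩ <;> rfl

theorem tgt_S (s : Fin n → Fin m) (π : Equiv.Perm (Option (Fin m))) (y : YY m n) :
    tgtTok s π (.inr (nt true y)) = .ord (lenOrd m n - 1 - rk s y) := by
  rcases y with ⟨j, a⟩ | ⟨i, j, a⟩ <;> rfl

end UnweightedTS

namespace UnweightedTS
variable {m n : ℕ}

/-! ## Instantiation -/

/-- vertices of the construction -/
def Vok (s : Fin n → Fin m) : Vtx m → Prop
  | .root => True
  | .ord d => d < lenOrd m n
  | .slot i d => d < lenSlot s i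
  | .nook _ => True

theorem rel_ok {s : Fin n → Fin m} {u v : Vtx m}
    (h : rel (lenSlot s) (lenOrd m n) (kk m n) u v) :
    Vok s u ∧ Vok s v ∧ adj (kk m n) u v := by
  cases u <;> cases v <;> simp only [rel, Vok, adj, adj1] at h ⊢
  · obtain ⟨rfl, h⟩ := h; simp [h]
  · obtain ⟨rfl, h⟩ := h; simp [h]
  · obtain ⟨rfl, h⟩ := h; simp [h]; omega
  · obtain ⟨rfl, rfl, h⟩ := h; simp [h]; omega
  · obtain ⟨rfl, h1, h2⟩ := h; simp [h1, h2]

theorem adj_ok {s : Fin n → Fin m} {u v : Vtx m} (h : (TheGraph s).Adj u v) :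
    u ≠ v ∧ Vok s u ∧ Vok s v ∧ adj (kk m n) u v := by
  unfold TheGraph Tree at h
  rw [SimpleGraph.fromRel_adj] at h
  refine ⟨h.1, ?_⟩
  rcases h.2 with h | h
  · exact rel_ok h
  · obtain ⟨a, b, c⟩ := rel_ok h
    exact ⟨b, a, adj_symm c⟩

theorem swapV_swapV {V : Type*} [DecidableEq V] (e : V × V) (v : V) :
    swapV e (swapV e v) = v := by
  unfold swapV
  split_ifs <;> simp_all

theorem swapV_inj {V : Type*} [DecidableEq V] (e : V × V) : Function.Injective (swapV e) := by
  intro a b h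
  rw [← swapV_swapV e a, h, swapV_swapV]

theorem placeAt_zero (σ : List (Vtx m × Vtx m)) (f : Tok m n → Vtx m) : placeAt σ f 0 = f := by
  simp [placeAt, applySwaps]

theorem placeAt_succ (σ : List (Vtx m × Vtx m)) (f : Tok m n → Vtx m) {τ : ℕ}
    (h : τ < σ.length) (t : Tok m n) :
    placeAt σ f (τ+1) t = swapV σ[τ] (placeAt σ f τ t) := by
  unfold placeAt applySwaps
  rw [List.take_succ_eq_append_getElem h, List.foldl_append]
  rfl

theorem placeAt_len (σ : List (Vtx m × Vtx m)) (f : Tok m n → Vtx m) :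
    placeAt σ f σ.length = applySwaps σ f := by
  simp [placeAt]

theorem init_none (s : Fin n → Fin m) : initTok s (.inl none) = .root := rfl

theorem init_some (s : Fin n → Fin m) (i : Fin m) : initTok s (.inl (some i)) = .nook i := rfl

theorem init_inj {s : Fin n → Fin m} (h : Hyp s) :
    Function.Injective fun z => initTok s (tokE h z) := by
  rintro (o | ⟨b, r⟩) (o' | ⟨b', r'⟩) e
  · rcases o with _ | i <;> rcases o' with _ | i' <;> simp [tokE_inl, initTok] at e ⊢
    exact e
  · exfalso
    rcases o with _ | i <;> cases b' <;>
      simp only [tokE_inl, tokE_inr, init_X, init_S, init_none, init_some, reduceCtorEq] at e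
  · exfalso
    rcases o' with _ | i <;> cases b <;>
      simp only [tokE_inl, tokE_inr, init_X, init_S, init_none, init_some, reduceCtorEq] at e
  · cases b <;> cases b' <;> simp [tokE_inr, init_X, init_S] at e ⊢
    · rw [RE_symm, RE_symm] at e
      exact Fin.ext e
    · have := ip_inj s e.1 e.2
      simpa using this

theorem init_ok {s : Fin n → Fin m} (h : Hyp s) (z : Tk m (lenOrd m n)) :
    Vok s (initTok s (tokE h z)) := by
  rcases z with o | ⟨b, r⟩
  · rcases o with _ | i <;> simp [tokE_inl, initTok, Vok]
  · cases b <;> simp [tokE_inr, init_X, init_S, Vok]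
    · exact rk_lt h _
    · exact ip_lt s _

theorem init_occ {s : Fin n → Fin m} (h : Hyp s) {v : Vtx m} (hv : Vok s v) :
    ∃ z, initTok s (tokE h z) = v := by
  rcases v with _ | d | ⟨i, d⟩ | i
  · exact ⟨.inl none, rfl⟩
  · refine ⟨.inr (false, ⟨d, hv⟩), ?_⟩
    rw [tokE_inr, init_X, RE_symm]
  · obtain ⟨y, h1, h2⟩ := ip_surj s hv
    refine ⟨.inr (true, RE h y), ?_⟩
    rw [tokE_inr, init_S, Equiv.symm_apply_apply, h1, h2]
  · exact ⟨.inl (some i), rfl⟩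

section inst
variable {s : Fin n → Fin m} (h : Hyp s) {σ : List (Vtx m × Vtx m)}

/-- positions -/
noncomputable def PS (σ : List (Vtx m × Vtx m)) (τ : ℕ) (z : Tk m (lenOrd m n)) : Vtx m :=
  placeAt σ (initTok s) τ (tokE h z)

theorem PS_zero (z : Tk m (lenOrd m n)) : PS h σ 0 z = initTok s (tokE h z) := by
  unfold PS; rw [placeAt_zero]

theorem PS_succ {τ : ℕ} (hτ : τ < σ.length) (z : Tk m (lenOrd m n)) :
    PS h σ (τ+1) z = swapV σ[τ] (PS h σ τ z) := placeAt_succ _ _ hτ _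

theorem PS_inj : ∀ τ ≤ σ.length, Function.Injective (PS h σ τ) := by
  intro τ
  induction τ with
  | zero =>
    intro _ a b e
    rw [PS_zero, PS_zero] at e
    exact init_inj h e
  | succ τ ih =>
    intro hτ a b e
    rw [PS_succ h (by omega), PS_succ h (by omega)] at e
    exact ih (by omega) (swapV_inj _ e)

theorem PS_occ (hedges : ∀ e ∈ σ, (TheGraph s).Adj e.1 e.2) :
    ∀ τ ≤ σ.length, ∀ v, Vok s v → ∃ z, PS h σ τ z = v := by
  intro τ
  induction τ with
  | zero =>
    intro _ v hv
    obtain ⟨z, hz⟩ := init_occ h hv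
    exact ⟨z, by rw [PS_zero, hz]⟩
  | succ τ ih =>
    intro hτ v hv
    have hτ' : τ < σ.length := by omega
    have he := adj_ok (hedges _ (List.getElem_mem hτ'))
    obtain ⟨z, hz⟩ := ih (by omega) (swapV σ[τ] v) (by
      unfold swapV
      split_ifs
      · exact he.2.2.1
      · exact he.2.1
      · exact hv)
    exact ⟨z, by rw [PS_succ h hτ', hz, swapV_swapV]⟩

theorem PS_step (hedges : ∀ e ∈ σ, (TheGraph s).Adj e.1 e.2) {τ : ℕ} (hτ : τ < σ.length) :
    ∃ p q, SW (kk m n) (PS h σ τ) (PS h σ (τ+1)) p q := by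
  have he := adj_ok (hedges _ (List.getElem_mem hτ))
  obtain ⟨p, hp⟩ := PS_occ h hedges τ hτ.le _ he.2.1
  obtain ⟨q, hq⟩ := PS_occ h hedges τ hτ.le _ he.2.2.1
  refine ⟨p, q, ?_, ?_, ?_, ?_, ?_⟩
  · rintro rfl
    exact he.1 (hp.symm.trans hq)
  · rw [hp, hq]; exact he.2.2.2
  · rw [PS_succ h hτ, hp, hq]; simp [swapV]
  · rw [PS_succ h hτ, hp, hq]; simp [swapV]
  · intro z h1 h2
    rw [PS_succ h hτ]
    have a1 : PS h σ τ z ≠ σ[τ].1 := fun e => h1 (PS_inj h τ hτ.le (e.trans hp.symm))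
    have a2 : PS h σ τ z ≠ σ[τ].2 := fun e => h2 (PS_inj h τ hτ.le (e.trans hq.symm))
    simp [swapV, a1, a2]

theorem PS_sw {τ : ℕ} (hτ : τ < σ.length) {p q : Tk m (lenOrd m n)}
    (hsw : SW (kk m n) (PS h σ τ) (PS h σ (τ+1)) p q) :
    swapsPairAt σ (initTok s) τ (tokE h p) (tokE h q) := by
  refine ⟨hτ, ?_⟩
  obtain ⟨a, b, c, d, e⟩ := hsw
  rw [PS_succ h hτ] at c
  have hne : PS h σ τ p ≠ PS h σ τ q := fun x => a (PS_inj h τ hτ.le x)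
  change (PS h σ τ p = σ[τ].1 ∧ PS h σ τ q = σ[τ].2) ∨ (PS h σ τ p = σ[τ].2 ∧ PS h σ τ q = σ[τ].1)
  unfold swapV at c
  split_ifs at c with h1 h2
  · exact .inl ⟨h1, c.symm⟩
  · exact .inr ⟨h2, c.symm⟩
  · exact absurd c hne

theorem PS_full (hedges : ∀ e ∈ σ, (TheGraph s).Adj e.1 e.2) {τ : ℕ} (hτ : τ ≤ σ.length)
    (i : Fin m) :
    lenOrd m n + (Finset.univ.filter fun r => slY s ((RE h).symm r) = i).card + 1 ≤
      (Finset.univ.filter fun z => gd (PS h σ τ z) = some none ∨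
        gd (PS h σ τ z) = some (some i)).card := by
  have key : ∀ z, ∃ z', PS h σ τ z' = PS h σ 0 z := fun z =>
    PS_occ h hedges τ hτ _ (by rw [PS_zero]; exact init_ok h z)
  choose g hg using key
  have ginj : Function.Injective g := by
    intro a b e
    apply PS_inj h 0 (Nat.zero_le _)
    rw [← hg a, ← hg b, e]
  let A : Finset (Fin (lenOrd m n) ⊕ (Fin (lenOrd m n) ⊕ Unit)) :=
    (Finset.univ).disjSum ((Finset.univ.filter fun r => slY s ((RE h).symm r) = i).disjSum
      {()})
  have hA : A.card = lenOrd m n + (Finset.univ.filter fun r => slY s ((RE h).symm r) = i).card + 1 := by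
    simp only [A, Finset.card_disjSum, Finset.card_univ, Fintype.card_fin, Finset.card_singleton]
    omega
  rw [← hA]
  let f : Fin (lenOrd m n) ⊕ (Fin (lenOrd m n) ⊕ Unit) → Tk m (lenOrd m n) := fun x =>
    match x with
    | .inl r => .inr (false, r)
    | .inr (.inl r) => .inr (true, r)
    | .inr (.inr _) => .inl (some i)
  have finj : Function.Injective f := by
    rintro (a | a | a) (b | b | b) e <;> simp [f] at e ⊢
    · exact e
    · exact e
  apply Finset.card_le_card_of_injOn (fun x => g (f x))
  · intro x hx
    simp only [Finset.coe_filter, Finset.mem_univ, true_and, Set.mem_ofPred_eq]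
    rw [hg, PS_zero]
    rcases x with r | r | r
    · left
      simp only [f, tokE_inr, init_X, gd]
    · right
      have hx' : Sum.inr (Sum.inl r) ∈ A := hx
      simp only [A, Finset.inr_mem_disjSum, Finset.inl_mem_disjSum, Finset.mem_filter,
        Finset.mem_univ, true_and] at hx'
      simp only [f, tokE_inr, init_S, gd, hx']
    · right
      simp only [f, tokE_inl, initTok, gd]
  · exact (ginj.comp finj).injOn

/-- the abstract system -/
noncomputable def TS (π : Equiv.Perm (Option (Fin m)))
    (hedges : ∀ e ∈ σ, (TheGraph s).Adj e.1 e.2)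
    (hsol : applySwaps σ (initTok s) = tgtTok s π)
    (hmin : MinimalSeq σ (initTok s)) : Sys m (lenOrd m n) where
  M := σ.length
  k := kk m n
  hk := h.k_pos
  sl := fun r => slY s ((RE h).symm r)
  pos := PS h σ
  inj := PS_inj h
  step := fun τ hτ => PS_step h hedges hτ
  min := by
    intro τ τ' p q h1 h2 h3 h4
    have a1 := PS_sw h h1 h3
    have a2 := PS_sw h h2 h4
    rcases lt_trichotomy τ τ' with q | q | q
    · exact absurd a2 (hmin _ _ _ _ q a1)
    · exact q
    · exact absurd a1 (hmin _ _ _ _ q a2)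
  full := fun τ hτ i => PS_full h hedges hτ i
  item0 := by
    intro o
    rw [PS_zero, tokE_inl]
    rcases o with _ | i
    · left; rfl
    · right; exact ⟨i, rfl⟩
  itemM := by
    intro o
    unfold PS
    rw [placeAt_len, hsol, tokE_inl]
    simp only [tgtTok]
    rcases π o with _ | i
    · left; rfl
    · right; exact ⟨i, rfl⟩
  S0 := by
    intro r
    rw [PS_zero, tokE_inr, init_S]
    exact ⟨_, rfl⟩
  SM := by
    intro r
    unfold PS
    rw [placeAt_len, hsol, tokE_inr, tgt_S, RE_symm, Fin.val_rev]
    congr 1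
    omega
  X0 := by
    intro r
    rw [PS_zero, tokE_inr, init_X, RE_symm]
  XM := by
    intro r
    unfold PS
    rw [placeAt_len, hsol, tokE_inr, tgt_X]
    exact ⟨_, rfl⟩

end inst

/-! ## Distances -/

theorem walk_ord (s : Fin n → Fin m) : ∀ d, d < lenOrd m n →
    ∃ w : (TheGraph s).Walk .root (.ord d), w.length = d + 1 := by
  intro d
  induction d with
  | zero =>
    intro hd
    have : (TheGraph s).Adj .root (.ord 0) := by
      unfold TheGraph Tree
      rw [SimpleGraph.fromRel_adj]
      exact ⟨by simp, .inl ⟨rfl, hd⟩⟩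
    exact ⟨this.toWalk, rfl⟩
  | succ d ih =>
    intro hd
    obtain ⟨w, hw⟩ := ih (by omega)
    have : (TheGraph s).Adj (.ord d) (.ord (d+1)) := by
      unfold TheGraph Tree
      rw [SimpleGraph.fromRel_adj]
      exact ⟨by simp, .inl ⟨rfl, hd⟩⟩
    exact ⟨w.concat this, by simp [hw]⟩

theorem walk_slot (s : Fin n → Fin m) (i : Fin m) : ∀ d, d < lenSlot s i →
    ∃ w : (TheGraph s).Walk .root (.slot i d), w.length = d + 1 := by
  intro d
  induction d with
  | zero =>
    intro hd
    have : (TheGraph s).Adj .root (.slot i 0) := by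
      unfold TheGraph Tree
      rw [SimpleGraph.fromRel_adj]
      exact ⟨by simp, .inl ⟨rfl, hd⟩⟩
    exact ⟨this.toWalk, rfl⟩
  | succ d ih =>
    intro hd
    obtain ⟨w, hw⟩ := ih (by omega)
    have : (TheGraph s).Adj (.slot i d) (.slot i (d+1)) := by
      unfold TheGraph Tree
      rw [SimpleGraph.fromRel_adj]
      exact ⟨by simp, .inl ⟨rfl, rfl, hd⟩⟩
    exact ⟨w.concat this, by simp [hw]⟩

theorem dist_os (s : Fin n → Fin m) (i : Fin m) {d d' : ℕ} (h1 : d < lenOrd m n)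
    (h2 : d' < lenSlot s i) :
    (TheGraph s).dist (.ord d) (.slot i d') ≤ d + d' + 2 := by
  obtain ⟨w, hw⟩ := walk_ord s d h1
  obtain ⟨w', hw'⟩ := walk_slot s i d' h2
  have := SimpleGraph.dist_le (w.reverse.append w')
  rw [SimpleGraph.Walk.length_append, SimpleGraph.Walk.length_reverse] at this
  omega

section inst2
variable {s : Fin n → Fin m} (h : Hyp s) {σ : List (Vtx m × Vtx m)}
  (π : Equiv.Perm (Option (Fin m)))
  (hedges : ∀ e ∈ σ, (TheGraph s).Adj e.1 e.2)
  (hsol : applySwaps σ (initTok s) = tgtTok s π)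
  (hmin : MinimalSeq σ (initTok s))

theorem dd_le (z : Bool × Fin (lenOrd m n)) :
    (dd s π (.inr (tokN h z)) : ℤ) ≤ (TS h π hedges hsol hmin).D (.inr z) := by
  obtain ⟨b, r⟩ := z
  have e0 : (TS h π hedges hsol hmin).H 0 (.inr (b, r)) = ht (kk m n) (initTok s (.inr (nt b ((RE h).symm r)))) := by
    unfold Sys.H
    change ht _ (PS h σ 0 _) = _
    rw [PS_zero]; rfl
  have e1 : (TS h π hedges hsol hmin).H (TS h π hedges hsol hmin).M (.inr (b, r)) =
      ht (kk m n) (tgtTok s π (.inr (nt b ((RE h).symm r)))) := by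
    unfold Sys.H
    change ht _ (PS h σ σ.length _) = _
    unfold PS
    rw [placeAt_len, hsol]; rfl
  unfold Sys.D
  rw [e0, e1]
  change ((TheGraph s).dist (initTok s (.inr (nt b ((RE h).symm r))))
    (tgtTok s π (.inr (nt b ((RE h).symm r)))) : ℤ) ≤ _
  generalize (RE h).symm r = y
  have a1 := rk_lt h y
  cases b
  · rw [init_X, tgt_X]
    have := dist_os s (slY s y) a1 (fp_lt s y)
    refine le_trans ?_ (le_abs_self _)
    simp only [ht]
    omega
  · rw [init_S, tgt_S, SimpleGraph.dist_comm]
    have := dist_os s (slY s y) (d := lenOrd m n - 1 - rk s y) (by omega) (ip_lt s y)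
    refine le_trans ?_ (neg_le_abs _)
    simp only [ht]
    omega

theorem TS_len (hlen : 2 * σ.length ≤ (∑ t : NonItem m n, (dd s π (Sum.inr t) + 1)) + 2 * n) :
    (2 * (TS h π hedges hsol hmin).M : ℤ) ≤
      ∑ z : Bool × Fin (lenOrd m n), (TS h π hedges hsol hmin).D (.inr z)
        + 2 * (lenOrd m n : ℕ) + 2 * n := by
  have h1 : (∑ t : NonItem m n, (dd s π (Sum.inr t) + 1)) =
      ∑ z : Bool × Fin (lenOrd m n), dd s π (.inr (tokN h z)) + 2 * lenOrd m n := by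
    rw [← Equiv.sum_comp (tokN h), Finset.sum_add_distrib]
    congr 1
    rw [Finset.sum_const, Finset.card_univ, Fintype.card_prod, Fintype.card_fin, Fintype.card_bool]
    simp
  rw [h1] at hlen
  have h2 : ((∑ z : Bool × Fin (lenOrd m n), dd s π (.inr (tokN h z)) : ℕ) : ℤ) ≤
      ∑ z : Bool × Fin (lenOrd m n), (TS h π hedges hsol hmin).D (.inr z) := by
    rw [Nat.cast_sum]
    exact Finset.sum_le_sum fun z _ => dd_le h π hedges hsol hmin z
  have h3 : (TS h π hedges hsol hmin).M = σ.length := rfl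
  rw [h3]
  have h4 : ((2 * σ.length : ℕ) : ℤ) ≤ ((∑ z : Bool × Fin (lenOrd m n), dd s π (.inr (tokN h z)) + 2 * lenOrd m n + 2 * n : ℕ) : ℤ) := by
    exact_mod_cast hlen
  push_cast at h4 h2
  linarith

end inst2

/-! ## Segments -/

/-- segment index of a rank -/
def seg (m n : ℕ) (r : ℕ) : ℕ :=
  (r / BB m n) * (m + 1) +
    (if r % BB m n < kk m n then 0 else 1 + (r % BB m n - kk m n) / kk' m n)

theorem seg_part {s : Fin n → Fin m} (h : Hyp s) (r : ℕ) :
    (if r % BB m n < kk m n then 0 else 1 + (r % BB m n - kk m n) / kk' m n) < m + 1 := by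
  have h1 := Nat.mod_lt r h.B_pos
  split_ifs with h2
  · omega
  · have h3 : r % BB m n - kk m n < m * kk' m n := by
      have : BB m n = kk m n + m * kk' m n := rfl
      omega
    have := (Nat.div_lt_iff_lt_mul h.k'_pos).2 h3
    omega

theorem seg_mono {s : Fin n → Fin m} (h : Hyp s) {r r' : ℕ} (hr : r ≤ r') :
    seg m n r ≤ seg m n r' := by
  have h1 := seg_part h r
  have h2 : r / BB m n ≤ r' / BB m n := Nat.div_le_div_right hr
  unfold seg
  rcases h2.lt_or_eq with h3 | h3
  · have : (r / BB m n + 1) * (m+1) ≤ (r' / BB m n) * (m+1) := Nat.mul_le_mul_right _ h3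
    rw [add_mul] at this
    omega
  · rw [h3]
    have a1 := Nat.div_add_mod r (BB m n)
    have a2 := Nat.div_add_mod r' (BB m n)
    rw [h3] at a1
    have a3 : r % BB m n ≤ r' % BB m n := by omega
    have a4 : (r % BB m n - kk m n) / kk' m n ≤ (r' % BB m n - kk m n) / kk' m n :=
      Nat.div_le_div_right (by omega)
    generalize (r % BB m n - kk m n) / kk' m n = D1 at *
    generalize (r' % BB m n - kk m n) / kk' m n = D2 at *
    split_ifs <;> omega

theorem seg_lt {s : Fin n → Fin m} (h : Hyp s) {r : ℕ} (hr : r < lenOrd m n) :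
    seg m n r < n * (m + 1) := by
  have h1 := seg_part h r
  rw [lenOrd_eq, ← Nat.div_lt_iff_lt_mul h.B_pos] at hr
  have : (r / BB m n + 1) * (m+1) ≤ n * (m+1) := Nat.mul_le_mul_right _ hr
  rw [add_mul] at this
  unfold seg
  omega

theorem seg_inl (s : Fin n → Fin m) (j : Fin n) (a : Fin (kk m n)) :
    seg m n (rk s (.inl (j, a))) = j.val * (m+1) + 0 := by
  obtain ⟨h1, h2⟩ := rk_inl s j a
  unfold seg
  rw [h1, h2, if_pos a.2]

theorem seg_inr {s : Fin n → Fin m} (h : Hyp s) (i : Fin m) (j : Fin n) (a : Fin (kk' m n)) :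
    seg m n (rk s (.inr (i, j, a))) = j.val * (m+1) + (1 + rho s i j) := by
  obtain ⟨h1, h2⟩ := rk_inr h i j a
  unfold seg
  rw [h1, h2, if_neg (by omega), Nat.add_sub_cancel_left, (dm a.2).1]

theorem seg_sl {s : Fin n → Fin m} (h : Hyp s) (y y' : YY m n)
    (e : seg m n (rk s y) = seg m n (rk s y')) : slY s y = slY s y' := by
  rcases y with ⟨j, a⟩ | ⟨i, j, a⟩ <;> rcases y' with ⟨j', a'⟩ | ⟨i', j', a'⟩
  · rw [seg_inl, seg_inl] at e
    have h1 := dm (B := m+1) (j := j.val) (a := 0) (by omega)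
    have h2 := dm (B := m+1) (j := j'.val) (a := 0) (by omega)
    rw [e] at h1
    have : j = j' := Fin.ext (h1.1.symm.trans h2.1)
    simp only [slY, this]
  · exfalso
    rw [seg_inl, seg_inr h] at e
    have := rho_lt h.hm h.hcons i' j'
    have h1 := dm (B := m+1) (j := j.val) (a := 0) (by omega)
    have h2 := dm (B := m+1) (j := j'.val) (a := 1 + rho s i' j') (by omega)
    rw [e] at h1
    have := (h1.2.symm.trans h2.2)
    omega
  · exfalso
    rw [seg_inl, seg_inr h] at e
    have := rho_lt h.hm h.hcons i j
    have h1 := dm (B := m+1) (j := j'.val) (a := 0) (by omega)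
    have h2 := dm (B := m+1) (j := j.val) (a := 1 + rho s i j) (by omega)
    rw [← e] at h1
    have := (h1.2.symm.trans h2.2)
    omega
  · rw [seg_inr h, seg_inr h] at e
    have := rho_lt h.hm h.hcons i j
    have := rho_lt h.hm h.hcons i' j'
    have h1 := dm (B := m+1) (j := j'.val) (a := 1 + rho s i' j') (by omega)
    have h2 := dm (B := m+1) (j := j.val) (a := 1 + rho s i j) (by omega)
    rw [← e] at h1
    have hj : j' = j := Fin.ext (h1.1.symm.trans h2.1)
    subst hj
    have h3 := (h1.2.symm.trans h2.2)
    have := rho_inj h.hm h.hcons (i := i) (i' := i') (j := j') (by omega)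
    simp only [slY, this]

theorem F1_inst {s : Fin n → Fin m} (h : Hyp s) (j : ℕ) (hj : j < n) (i : Fin m) :
    (Finset.univ.filter fun ρ : Fin (lenOrd m n) => ρ.val / (kk m n + m * kk' m n) = j ∧
      kk m n ≤ ρ.val % (kk m n + m * kk' m n) ∧ slY s ((RE h).symm ρ) = i).card = kk' m n := by
  conv_rhs => rw [← Fintype.card_fin (kk' m n), ← Finset.card_univ]
  symm
  refine Finset.card_bij (fun a _ => RE h (.inr (i, ⟨j, hj⟩, a))) ?_ ?_ ?_
  · intro a _
    simp only [Finset.mem_filter, Finset.mem_univ, true_and, Equiv.symm_apply_apply]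
    have := rk_inr h i ⟨j, hj⟩ a
    rw [RE_val]
    refine ⟨this.1, ?_, rfl⟩
    have h2 := this.2
    unfold BB at h2
    omega
  · intro a _ b _ e
    simpa using e
  · intro ρ hρ
    simp only [Finset.mem_filter, Finset.mem_univ, true_and] at hρ
    obtain ⟨h1, h2, h3⟩ := hρ
    obtain ⟨y, rfl⟩ := (RE h).surjective ρ
    rw [Equiv.symm_apply_apply] at h3
    rw [RE_val] at h1 h2
    rcases y with ⟨j', a⟩ | ⟨i', j', a⟩
    · have := (rk_inl s j' a).2
      have := a.2
      unfold BB at *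
      omega
    · have q := (rk_inr h i' j' a).1
      refine ⟨a, Finset.mem_univ _, ?_⟩
      have e1 : j' = ⟨j, hj⟩ := Fin.ext (q.symm.trans h1)
      have e2 : i' = i := h3
      rw [e1, e2]

theorem F2_inst {s : Fin n → Fin m} (h : Hyp s) (ρ : Fin (lenOrd m n))
    (hρ : ρ.val % (kk m n + m * kk' m n) < kk m n) :
    (List.ofFn s)[ρ.val / (kk m n + m * kk' m n)]? = some (slY s ((RE h).symm ρ)) := by
  obtain ⟨y, rfl⟩ := (RE h).surjective ρ
  rw [Equiv.symm_apply_apply]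
  rw [RE_val] at hρ ⊢
  rcases y with ⟨j', a⟩ | ⟨i', j', a⟩
  · have q := (rk_inl s j' a).1
    unfold BB at q
    rw [q]
    simp [slY]
  · have q := (rk_inr h i' j' a).2
    unfold BB at q
    omega

/-- error bound -/
def EE (m n : ℕ) : ℕ := 2 * (2 * (n * (m+1) * (2 * m + 2))) + 4 * n

theorem EE_lt {s : Fin n → Fin m} (h : Hyp s) : 2 * EE m n < kk' m n := by
  have hm := h.hm
  have hn := h.hn
  have hmn := h.mn
  rw [(kk_eq h.hn).2]
  have h1 : EE m n ≤ 36 * n^3 := by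
    unfold EE
    have : n * (m+1) * (2*m+2) ≤ n * (2*n) * (4*n) := by gcongr <;> omega
    have h3 : n ≤ n^3 := Nat.le_self_pow (by norm_num) n
    nlinarith
  have h2 : 6 ^ 14 ≤ n ^ 14 := Nat.pow_le_pow_left hn 14
  have h3 : 0 < n ^ 3 := by positivity
  have h4 : 1 ≤ m ^ 25 := Nat.one_le_pow _ _ (by omega)
  calc 2 * EE m n ≤ 72 * n ^ 3 := by omega
    _ < n ^ 14 * n ^ 3 := by
      apply Nat.mul_lt_mul_of_pos_right _ h3
      norm_num at h2; omega
    _ = 1 * n ^ 17 := by ring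
    _ ≤ m ^ 25 * n ^ 17 := Nat.mul_le_mul_right _ h4

theorem big_inst {s : Fin n → Fin m} (h : Hyp s) :
    n * (m * kk' m n + (3 * EE m n + n * kk' m n + n * (EE m n + kk' m n))) +
      (3 * EE m n + n * kk' m n + n * (EE m n + kk' m n)) < kk m n + 1 := by
  have hn := h.hn
  have hmn := h.mn
  have h1 := EE_lt h
  rw [(kk_eq h.hn).1]
  generalize kk' m n = K at *
  generalize EE m n = E at *
  have hE : E ≤ K := by omega
  have h3 : 3 * E + n * K + n * (E + K) ≤ 4 * n * K := by
    have : n * (E + K) ≤ n * (2 * K) := Nat.mul_le_mul_left _ (by omega)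
    have : 6 * K ≤ n * K := Nat.mul_le_mul_right _ hn
    nlinarith
  have h4 : m * K ≤ n * K := Nat.mul_le_mul_right _ hmn
  have h5 : 6 ^ 6 ≤ n ^ 6 := Nat.pow_le_pow_left hn 6
  apply Nat.lt_succ_of_le
  calc _ ≤ n * (n * K + 4 * n * K) + 4 * n * K := by gcongr
    _ ≤ 9 * n^2 * K := by
      have : n * K ≤ n * (n * K) := Nat.le_mul_of_pos_left _ (by omega)
      nlinarith
    _ ≤ n^6 * n^2 * K := by
      gcongr
      norm_num at h5; omega
    _ = K * n^8 := by ring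

theorem gadget_gd {v : Vtx m} {i : Fin m} (h : gd v = some (some i)) : gadgetOfV v = some i := by
  cases v <;> simp [gd, gadgetOfV] at h ⊢ <;> exact h

theorem mem_gd {v : Vtx m} {i : Fin m} : memGadget v (some i) ↔ gd v = some (some i) := by
  cases v <;> simp [gd, memGadget]

section final
open Sys
variable {s : Fin n → Fin m} (h : Hyp s) {σ : List (Vtx m × Vtx m)}
  (π : Equiv.Perm (Option (Fin m)))
  (hedges : ∀ e ∈ σ, (TheGraph s).Adj e.1 e.2)
  (hsol : applySwaps σ (initTok s) = tgtTok s π)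
  (hmin : MinimalSeq σ (initTok s))

theorem par_inst
    (hlen : 2 * σ.length ≤ (∑ t : NonItem m n, (dd s π (Sum.inr t) + 1)) + 2 * n) :
    ∃ P : Par (TS h π hedges hsol hmin), P.L = List.ofFn s := by
  obtain ⟨C⟩ := exists_cred (TS h π hedges hsol hmin)
  have hV := V_card C (fun r => seg m n r.val) (fun a b hab => seg_mono h hab) (n * (m+1))
    (fun r => seg_lt h r.2) (by
      intro r r' e
      apply seg_sl h
      rw [RE_symm, RE_symm]
      exact e)
  have hT := totals C n _ hV (TS_len h π hedges hsol hmin hlen)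
  have e : (List.ofFn s).length = n := List.length_ofFn
  refine ⟨{ C := C, L := List.ofFn s, k' := kk' m n, E := EE m n, hN := ?_, F1 := ?_, F2 := ?_,
            hE := ?_, hU := ?_, hk' := EE_lt h, hbig := ?_ }, rfl⟩
  · rw [e]; exact lenOrd_eq m n
  · rw [e]; exact F1_inst h
  · exact F2_inst h
  · exact hT.2
  · refine hT.1.trans ?_
    unfold EE
    omega
  · rw [e]; exact big_inst h

noncomputable def fc_inst : FC (TS h π hedges hsol hmin) where
  free := freeAt σ (initTok s)
  chi := chiList σ (initTok s)
  p0 := by exact PS_zero h (σ := σ) (.inl none)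
  p1 := by intro i; exact PS_zero h (σ := σ) (.inl (some i))
  f0 := rfl
  f1 := by
    intro τ hτ o ho
    have hex : ∃ o : Option (Fin m), placeAt σ (initTok s) (τ + 1) (Sum.inl o) = Vtx.root := ⟨o, ho⟩
    have : freeAt σ (initTok s) (τ+1) = hex.choose := by
      rw [freeAt, dif_pos hex]
    rw [this]
    have h2 := hex.choose_spec
    have h3 : PS h σ (τ+1) (.inl hex.choose) = PS h σ (τ+1) (.inl o) := h2.trans ho.symm
    have := PS_inj h (τ+1) hτ h3
    simpa using this
  f2 := by
    intro τ hτ ho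
    rw [freeAt, dif_neg]
    rintro ⟨o, h1⟩
    exact ho o h1
  c0 := rfl
  c1 := by
    intro τ hτ e
    rw [chiList, if_neg (by simpa using e)]
    simp
  c2 := by
    intro τ hτ i hne hg
    rw [chiList, if_pos hne]
    have : gadgetOfV (placeAt σ (initTok s) τ (Sum.inl (freeAt σ (initTok s) (τ + 1)))) = some i :=
      gadget_gd hg
    rw [this]

end final

theorem free_item_token_lemma {m n : ℕ} (hm : 5 < m) (hn : 5 < n)
    (s : Fin n → Fin m) (π : Equiv.Perm (Option (Fin m)))
    (hπ0 : π none = none)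
    (hocc : ∀ i : Fin m, ∃ j, s j = i)
    (hcons : ∀ (j : Fin n) (h : j.val + 1 < n), s j ≠ s ⟨j.val + 1, h⟩)
    (σ : List (Vtx m × Vtx m))
    (hedges : ∀ e ∈ σ, (TheGraph s).Adj e.1 e.2)
    (hsol : applySwaps σ (initTok s) = tgtTok s π)
    (hlen : 2 * σ.length ≤ (∑ t : NonItem m n, (dd s π (Sum.inr t) + 1)) + 2 * n)
    (hmin : MinimalSeq σ (initTok s)) :
    (∀ τ ≤ σ.length, ∀ i : Fin m,
        ∃! o : Option (Fin m), o ≠ freeAt σ (initTok s) τ ∧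
          memGadget (placeAt σ (initTok s) τ (Sum.inl o)) (some i)) ∧
    (chiList σ (initTok s) σ.length).Sublist (List.ofFn s) := by
  have h : Hyp s := ⟨hm, hn, hocc, hcons⟩
  obtain ⟨P, hP⟩ := par_inst h π hedges hsol hmin hlen
  have key := Sys.main_abs P (fc_inst h π hedges hsol hmin)
  rw [hP] at key
  refine ⟨?_, key.2⟩
  intro τ hτ i
  simp only [mem_gd]
  exact key.1 τ hτ i

end UnweightedTS
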